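/- Let Γ be a non-elementary hyperbolic group with no nontrivial finite normal subgroup, and let S ⊆ Γ be a finite subset. Then there exists a sequence (N_i)_{i∈ℕ} of pairwise distinct nontrivial normal subgroups of Γ such that each quotient Γ/N_i is a non-elementary hyperbolic group and N_i ∩ (S·S⁻¹) ⊆ {1} for every i (so that the quotient map Γ → Γ/N_i is injective on S). -/

import Mathlib

open Pointwise

/-- The word length of `g` with respect to a (symmetric) generating set `S`: the least
`k` such that `g` is a product of `k` elements of `S`. -/
noncomputable def wordLength {Γ : Type*} [Group Γ] (S : Set Γ) (g : Γ) : ℕ :=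
  sInf {k | ∃ l : List Γ, (∀ x ∈ l, x ∈ S) ∧ l.length = k ∧ l.prod = g}

/-- The Gromov product `(x|y)_w = ½(d(x,w) + d(y,w) − d(x,y))` with respect to the word
metric `d(x,y) = |x⁻¹y|_S` of a generating set `S`. -/
noncomputable def wordGromovProduct {Γ : Type*} [Group Γ] (S : Set Γ) (w x y : Γ) : ℝ :=
  ((wordLength S (x⁻¹ * w) : ℝ) + (wordLength S (y⁻¹ * w) : ℝ) -
    (wordLength S (x⁻¹ * y) : ℝ)) / 2

/-- A group is hyperbolic if it has a finite symmetric generating set whose word metric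
is Gromov hyperbolic: for some `δ ≥ 0`, `(x|z)_w ≥ min((x|y)_w, (y|z)_w) − δ` for all
`x, y, z, w`. -/
def IsHyperbolicGroup (Γ : Type*) [Group Γ] : Prop :=
  ∃ S : Set Γ, S.Finite ∧ (∀ s ∈ S, s⁻¹ ∈ S) ∧ Subgroup.closure S = ⊤ ∧
    ∃ δ : ℝ, 0 ≤ δ ∧ ∀ x y z w : Γ,
      wordGromovProduct S w x z ≥
        min (wordGromovProduct S w x y) (wordGromovProduct S w y z) - δ

/-- A group is non-elementary if it is not virtually cyclic, i.e. it contains no cyclic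
subgroup of finite index. -/
def IsNonElementaryGroup (Γ : Type*) [Group Γ] : Prop :=
  ∀ g : Γ, (Subgroup.zpowers g).index = 0

/-- The quotient of `G` by the normal subgroup `N` is a non-elementary hyperbolic
group. -/
def QuotientIsNonElementaryHyperbolic {G : Type*} [Group G] (N : Subgroup G)
    (hN : N.Normal) : Prop :=
  letI := hN
  IsHyperbolicGroup (G ⧸ N) ∧ IsNonElementaryGroup (G ⧸ N)



/-- A word-metric-like hyperbolic metric on a group. -/
structure Hyp (Γ : Type*) [Group Γ] where
  d : Γ → Γ → ℤ
  D : ℤ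
  self : ∀ x, d x x = 0
  symm : ∀ x y, d x y = d y x
  tri : ∀ x y z, d x z ≤ d x y + d y z
  eq_of : ∀ x y, d x y ≤ 0 → x = y
  inv : ∀ a x y, d (a * x) (a * y) = d x y
  geo : ∀ x y k, 0 ≤ k → k ≤ d x y → ∃ z, d x z = k ∧ d z y = d x y - k
  fin : ∀ c : ℤ, {x | d 1 x ≤ c}.Finite
  thin : ∀ u v w q, d u q + d q w - d u w ≤ d u q + d q v - d u v + D ∨
    d w q + d q v - d w v ≤ d u q + d q v - d u v + D
  one_le_D : 1 ≤ D

namespace Hyp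
variable {Γ : Type*} [Group Γ] (M : Hyp Γ)

/-- Twice the Gromov product. -/
def ex (u v q : Γ) : ℤ := M.d u q + M.d q v - M.d u v

lemma nonneg (x y : Γ) : 0 ≤ M.d x y := by
  have := M.tri x y x; have := M.self x; have := M.symm x y; omega

lemma ex_nonneg (u v q : Γ) : 0 ≤ M.ex u v q := by
  have := M.tri u q v; simp only [ex]; omega

lemma ex_comm (u v q : Γ) : M.ex u v q = M.ex v u q := by
  have := M.symm u q; have := M.symm q v; have := M.symm u v; simp only [ex]; omega

lemma ex_smul (a u v q : Γ) : M.ex (a * u) (a * v) (a * q) = M.ex u v q := by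
  simp only [ex, M.inv]

lemma ex_thin (u v w q : Γ) : M.ex u w q ≤ M.ex u v q + M.D ∨ M.ex w v q ≤ M.ex u v q + M.D :=
  M.thin u v w q

lemma ex_thin' {u v q : Γ} {e : ℤ} (h : M.ex u v q ≤ e) (w : Γ) :
    M.ex u w q ≤ e + M.D ∨ M.ex w v q ≤ e + M.D := by
  rcases M.ex_thin u v w q with h | h
  · left; omega
  · right; omega

lemma ex_right (u m v f : Γ) : M.ex u v f ≤ M.ex u v m + M.ex m v f := by
  have := M.tri u m f; simp only [ex]; omega

lemma ex_left (u m v f : Γ) : M.ex u v f ≤ M.ex u v m + M.ex u m f := by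
  have := M.tri f m v; simp only [ex]; omega

lemma ex_move (u v q q' : Γ) : M.ex u v q' ≤ M.ex u v q + 2 * M.d q q' := by
  have := M.tri u q q'; have := M.tri q' q v; have := M.symm q q'; simp only [ex]; omega

lemma ex_end (u v v' q : Γ) : M.ex u v' q ≤ M.ex u v q + 2 * M.d v v' := by
  have := M.tri q v v'; have := M.tri u v' v; have := M.symm v v'; simp only [ex]; omega

lemma ex_start (u u' v q : Γ) : M.ex u' v q ≤ M.ex u v q + 2 * M.d u u' := by
  rw [M.ex_comm u', M.ex_comm u]; exact M.ex_end _ _ _ _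

lemma ex_same (u q : Γ) : M.ex u u q = 2 * M.d u q := by
  have := M.symm u q; have := M.self u; simp only [ex]; omega

lemma ex_le_left (u v q : Γ) : M.ex u v q ≤ 2 * M.d u q := by
  have := M.tri q u v; have := M.symm u q; simp only [ex]; omega

lemma ex_le_right (u v q : Γ) : M.ex u v q ≤ 2 * M.d v q := by
  rw [M.ex_comm]; exact M.ex_le_left _ _ _

lemma ex_add (u p q : Γ) : M.ex u p q + M.ex u q p = 2 * M.d p q := by
  have := M.symm p q; simp only [ex]; omega

lemma ex_sum (u m v q : Γ) : 2 * M.d q m ≤ M.ex u m q + M.ex m v q + M.ex u v m := by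
  have := M.tri u q v; have := M.symm q m; simp only [ex]; omega

/-- Two points near a geodesic at a similar distance from the origin are close. -/
lemma close {u v p q : Γ} {e e' : ℤ} (hq : M.ex u v q ≤ e) (hp : M.ex u v p ≤ e')
    (h : M.d u p ≤ M.d u q) :
    M.d p q ≤ e + e' + M.D + M.d u q - M.d u p := by
  rcases M.ex_thin' hq p with h1 | h1
  · have := M.symm p q; have := M.nonneg u v
    have := M.ex_nonneg u v p
    simp only [ex] at *; omega
  · have := M.symm p q; have := M.ex_nonneg u v p
    simp only [ex] at *
    have := M.tri u q v
    have := M.nonneg p q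
    omega

/-- Move a point near a geodesic to a geodesic point. -/
lemma geo_point {u v q : Γ} {e : ℤ} (hq : M.ex u v q ≤ e) :
    ∃ q', M.ex u v q' = 0 ∧ M.d q q' ≤ e + M.D := by
  by_cases hle : M.d u q ≤ M.d u v
  · obtain ⟨z, hz, hz'⟩ := M.geo u v (M.d u q) (M.nonneg _ _) hle
    have hz0 : M.ex u v z = 0 := by simp only [ex]; omega
    refine ⟨z, hz0, ?_⟩
    have := M.close hq hz0.le (by omega)
    rw [M.symm]; omega
  · refine ⟨v, by simp [ex, M.self], ?_⟩
    have := M.one_le_D; have := M.nonneg q v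
    simp only [ex] at *; omega

lemma convex {u v p p' f : Γ} {e e' η : ℤ} (hp : M.ex u v p ≤ e) (hp' : M.ex u v p' ≤ e')
    (he : 0 ≤ e) (he' : 0 ≤ e') (hf : M.ex p p' f ≤ η) : M.ex u v f ≤ e + e' + η + M.D := by
  rcases M.ex_thin' hf u with h | h
  · have h2 := M.ex_left u p v f
    rw [M.ex_comm] at h
    omega
  · have h2 := M.ex_left u p' v f
    omega

/-- Interior points of a subsegment are much closer. -/
lemma interior {u v e1 e2 f : Γ} {ε η : ℤ} (h1 : M.ex u v e1 ≤ ε) (h2 : M.ex u v e2 ≤ ε)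
    (hf : M.ex e1 e2 f ≤ η) (hd1 : 2 * η + 3 * M.D + ε < 2 * M.d f e1)
    (hd2 : 2 * η + 3 * M.D + ε < 2 * M.d f e2) : M.ex u v f ≤ η + 2 * M.D := by
  have key : ∀ e : Γ, M.ex u v e ≤ ε → 2 * η + 3 * M.D + ε < 2 * M.d f e →
      M.ex u e f ≤ η + M.D → M.ex u v f ≤ η + 2 * M.D := by
    intro e he hd h
    rcases M.ex_thin' h v with h' | h'
    · omega
    · have := M.ex_sum u e v f
      rw [M.ex_comm v e] at h'
      omega
  rcases M.ex_thin' hf u with h | h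
  · rw [M.ex_comm] at h
    exact key e1 h1 hd1 h
  · exact key e2 h2 hd2 h

end Hyp

/-- A hyperbolic metric together with an element having a geodesic axis. -/
structure Setup (Γ : Type*) [Group Γ] extends Hyp Γ where
  g : Γ
  T : ℤ
  one_le_T : 1 ≤ T
  T_le_D : T ≤ D
  axis : ∀ i j : ℤ, d (g ^ i) (g ^ j) = T * |i - j|

namespace Setup
variable {Γ : Type*} [Group Γ] (M : Setup Γ)

/-- The point with coordinate `i` on the axis of `a`. -/
def pt (a : Γ) (i : ℤ) : Γ := a * M.g ^ i

lemma pt_zero (a : Γ) : M.pt a 0 = a := by simp [pt]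
lemma mul_pt (h a : Γ) (i : ℤ) : h * M.pt a i = M.pt (h * a) i := by simp [pt, mul_assoc]
lemma pt_pt (a : Γ) (i j : ℤ) : M.pt (M.pt a i) j = M.pt a (i + j) := by
  simp [pt, mul_assoc, zpow_add]

lemma d_pt (a : Γ) (i j : ℤ) : M.d (M.pt a i) (M.pt a j) = M.T * |i - j| := by
  simp [pt, M.inv, M.axis]

lemma d_pt_le {a : Γ} {i j : ℤ} (h : i ≤ j) : M.d (M.pt a i) (M.pt a j) = M.T * (j - i) := by
  rw [M.d_pt, abs_sub_comm, abs_of_nonneg (by omega)]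

lemma abs_le_d_pt (a : Γ) (i j : ℤ) : |i - j| ≤ M.d (M.pt a i) (M.pt a j) := by
  rw [d_pt]
  have := M.one_le_T; have := abs_nonneg (i - j)
  nlinarith

lemma d_pt_succ (a : Γ) (i : ℤ) : M.d (M.pt a i) (M.pt a (i + 1)) ≤ M.D := by
  rw [M.d_pt_le (by omega)]; have := M.T_le_D; linarith

lemma ex_pt {a : Γ} {i t j : ℤ} (h : i ≤ t) (h' : t ≤ j) :
    M.ex (M.pt a i) (M.pt a j) (M.pt a t) = 0 := by
  simp only [Hyp.ex]
  rw [M.d_pt_le h, M.d_pt_le h', M.d_pt_le (h.trans h')]; ring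

/-- Points near an axis segment are near an axis point of the segment. -/
lemma ax_point_le {a : Γ} {i j : ℤ} (hij : i ≤ j) {q : Γ} {e : ℤ}
    (hq : M.ex (M.pt a i) (M.pt a j) q ≤ e) :
    ∃ t, i ≤ t ∧ t ≤ j ∧ M.d q (M.pt a t) ≤ e + 2 * M.D := by
  have hT := M.one_le_T
  have hTD := M.T_le_D
  by_cases hle : M.d (M.pt a i) q ≤ M.d (M.pt a i) (M.pt a j)
  · set x := M.d (M.pt a i) q with hx
    have hx0 : 0 ≤ x := M.nonneg _ _
    have hdm := Int.mul_ediv_add_emod x M.T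
    have hm0 := Int.emod_nonneg x (by omega : M.T ≠ 0)
    have hm1 := Int.emod_lt_of_pos x (by omega : 0 < M.T)
    have hq0 : 0 ≤ x / M.T := Int.ediv_nonneg hx0 (by omega)
    rw [M.d_pt_le hij] at hle
    have hqj : x / M.T ≤ j - i := by
      by_contra hc
      push Not at hc
      nlinarith
    have hex := M.ex_pt (a := a) (i := i) (t := i + x / M.T) (j := j) (by omega) (by omega)
    have hd := M.d_pt_le (a := a) (i := i) (j := i + x / M.T) (by omega)
    have hd' : M.d (M.pt a i) (M.pt a (i + x / M.T)) = M.T * (x / M.T) := by rw [hd]; ring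
    refine ⟨i + x / M.T, by omega, by omega, ?_⟩
    have := M.close hq hex.le (by omega)
    rw [M.symm]
    omega
  · refine ⟨j, hij, le_rfl, ?_⟩
    have := M.nonneg q (M.pt a j); have := M.one_le_D
    simp only [Hyp.ex] at *; omega

lemma ax_point {a : Γ} {i j : ℤ} {q : Γ} {e : ℤ}
    (hq : M.ex (M.pt a i) (M.pt a j) q ≤ e) :
    ∃ t, min i j ≤ t ∧ t ≤ max i j ∧ M.d q (M.pt a t) ≤ e + 2 * M.D := by
  rcases le_total i j with h | h
  · obtain ⟨t, h1, h2, h3⟩ := M.ax_point_le h hq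
    exact ⟨t, by omega, by omega, h3⟩
  · rw [M.ex_comm] at hq
    obtain ⟨t, h1, h2, h3⟩ := M.ax_point_le h hq
    exact ⟨t, by omega, by omega, h3⟩

end Setup

namespace Hyp
variable {Γ : Type*} [Group Γ] (M : Hyp Γ)

/-- Local-to-global data for a chain of points. -/
structure IsChain (P : ℕ → Γ) (k : ℕ) : Prop where
  loc : ∀ i, i < k → M.ex (P i) (P (i + 2)) (P (i + 1)) ≤ 2 * M.D
  long : ∀ i, i + 1 < k → 4 * M.D < M.d (P (i + 1)) (P (i + 2))

variable {M}

lemma IsChain.shift {P : ℕ → Γ} {k : ℕ} (h : M.IsChain P k) (a : ℕ) :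
    M.IsChain (fun i => P (a + i)) (k - a) := by
  constructor
  · intro i hi
    exact h.loc (a + i) (by omega)
  · intro i hi
    exact h.long (a + i) (by omega)

lemma IsChain.left0 {P : ℕ → Γ} {k : ℕ} (h : M.IsChain P k) :
    ∀ b, b ≤ k → M.ex (P 0) (P (b + 1)) (P b) ≤ 3 * M.D := by
  intro b
  induction b with
  | zero => intro _; have := M.one_le_D; simp [ex, M.self]; omega
  | succ b ih =>
    intro hb
    have ih := ih (by omega)
    have hl := h.loc b (by omega)
    rcases M.ex_thin' hl (P 0) with h1 | h1
    · rw [M.ex_comm] at h1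
      have h3 := M.ex_add (P 0) (P b) (P (b + 1))
      rcases Nat.eq_zero_or_pos b with rfl | hbp
      · have := M.one_le_D
        change M.ex (P 0) (P 2) (P 1) ≤ _
        have h4 : M.ex (P 0) (P 2) (P 1) ≤ 2 * M.D := hl
        omega
      · have h2 := h.long (b - 1) (by omega)
        have e1 : b - 1 + 1 = b := by omega
        have e2 : b - 1 + 2 = b + 1 := by omega
        rw [e1, e2] at h2
        have := M.one_le_D
        omega
    · have h4 : M.ex (P 0) (P (b + 1 + 1)) (P (b + 1)) ≤ 2 * M.D + M.D := h1
      omega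

lemma IsChain.left {P : ℕ → Γ} {k : ℕ} (h : M.IsChain P k) {a b : ℕ} (hab : a ≤ b) (hb : b ≤ k) :
    M.ex (P a) (P (b + 1)) (P b) ≤ 3 * M.D := by
  have := (h.shift a).left0 (b - a) (by omega)
  have e1 : a + (b - a + 1) = b + 1 := by omega
  have e2 : a + (b - a) = b := by omega
  simpa [e1, e2] using this

lemma IsChain.rev {P : ℕ → Γ} {k : ℕ} (h : M.IsChain P k) :
    M.IsChain (fun i => P (k + 1 - i)) k := by
  constructor
  · intro i hi
    have := h.loc (k - 1 - i) (by omega)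
    have e0 : k + 1 - i = k - 1 - i + 2 := by omega
    have e1 : k + 1 - (i + 1) = k - 1 - i + 1 := by omega
    have e2 : k + 1 - (i + 2) = k - 1 - i := by omega
    simp only [e0, e1, e2]
    rw [M.ex_comm]; exact this
  · intro i hi
    have := h.long (k - 2 - i) (by omega)
    have e1 : k + 1 - (i + 1) = k - 2 - i + 2 := by omega
    have e2 : k + 1 - (i + 2) = k - 2 - i + 1 := by omega
    simp only [e1, e2]
    rw [M.symm]; exact this

lemma IsChain.right {P : ℕ → Γ} {k : ℕ} (h : M.IsChain P k) {a c : ℕ} (hac : a < c)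
    (hc : c ≤ k + 1) : M.ex (P a) (P c) (P (a + 1)) ≤ 3 * M.D := by
  have := h.rev.left (a := k + 1 - c) (b := k - a) (by omega) (by omega)
  have e0 : k + 1 - (k + 1 - c) = c := by omega
  have e1 : k + 1 - (k - a) = a + 1 := by omega
  have e2 : k + 1 - (k - a + 1) = a := by omega
  simp only [e0, e1, e2] at this
  rwa [M.ex_comm]

lemma IsChain.mid {P : ℕ → Γ} {k : ℕ} (h : M.IsChain P k) {a b c : ℕ} (hab : a ≤ b) (hbc : b ≤ c)
    (hc : c ≤ k + 1) : M.ex (P a) (P c) (P b) ≤ 4 * M.D := by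
  have hD := M.one_le_D
  rcases Nat.eq_or_lt_of_le hbc with rfl | hbc
  · simp [ex, M.self]; omega
  rcases Nat.eq_or_lt_of_le hab with rfl | hab
  · simp [ex, M.self]; omega
  rcases Nat.eq_or_lt_of_le (Nat.succ_le_of_lt hbc) with rfl | hbc'
  · have := h.left (a := a) (b := b) (by omega) (by omega)
    simp only [Nat.succ_eq_add_one] at *
    omega
  have hl := h.left (a := a) (b := b) (by omega) (by omega)
  have hr := h.right (a := b) (c := c) (by omega) (by omega)
  rcases M.ex_thin' hl (P c) with h1 | h1
  · omega
  · have h2 := h.long (b - 1) (by omega)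
    have e1 : b - 1 + 1 = b := by omega
    have e2 : b - 1 + 2 = b + 1 := by omega
    rw [e1, e2] at h2
    have h3 := M.ex_add (P c) (P b) (P (b + 1))
    rw [M.ex_comm] at hr
    omega

lemma IsChain.side {P : ℕ → Γ} {k i : ℕ} (h : M.IsChain P k) (hi : i ≤ k) {e : Γ} {η : ℤ}
    (he : M.ex (P i) (P (i + 1)) e ≤ η) : M.ex (P 0) (P (k + 1)) e ≤ η + 7 * M.D := by
  have h1 := h.mid (a := 0) (b := i) (c := k + 1) (by omega) (by omega) le_rfl
  have h2 := M.ex_right (P 0) (P i) (P (k + 1)) e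
  have h3 := h.right (a := i) (c := k + 1) (by omega) le_rfl
  have h4 := M.ex_left (P i) (P (i + 1)) (P (k + 1)) e
  omega

lemma IsChain.locate {P : ℕ → Γ} {k : ℕ} (h : M.IsChain P k) {q : Γ} {ε : ℤ}
    (hε : 0 ≤ ε) (hq : M.ex (P 0) (P (k + 1)) q ≤ ε) :
    ∃ i, i ≤ k ∧ M.ex (P i) (P (i + 1)) q ≤ 2 * ε + 7 * M.D := by
  have hD := M.one_le_D
  classical
  have hex : ∃ i, M.ex (P 0) (P (i + 1)) q ≤ ε + M.D := ⟨k, by omega⟩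
  have hs := Nat.find_spec hex
  have hle : Nat.find hex ≤ k := Nat.find_le (by omega)
  refine ⟨Nat.find hex, hle, ?_⟩
  generalize hn : Nat.find hex = n at *
  rcases Nat.eq_zero_or_pos n with rfl | hpos
  · exact hs.trans (by omega)
  · have hmin : ¬ M.ex (P 0) (P (n - 1 + 1)) q ≤ ε + M.D :=
      Nat.find_min hex (by omega)
    rw [Nat.sub_add_cancel hpos] at hmin
    rcases M.ex_thin' hs (P n) with h1 | h1
    · rcases M.ex_thin' hq (P n) with h2 | h2
      · omega
      · have h3 := M.ex_sum (P 0) (P n) (P (k + 1)) q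
        have h4 := h.mid (a := 0) (b := n) (c := k + 1) (by omega) (by omega) le_rfl
        have h5 := M.ex_le_left (P n) (P (n + 1)) q
        rw [M.symm] at h3
        omega
    · omega

end Hyp


namespace Setup
variable {Γ : Type*} [Group Γ] (M : Setup Γ)

/-- The conjugate of `g ^ k` by `a`. -/
def tau (a : Γ) (k : ℤ) : Γ := a * M.g ^ k * a⁻¹

lemma tau_zero (a : Γ) : M.tau a 0 = 1 := by simp [tau]
lemma tau_add (a : Γ) (k l : ℤ) : M.tau a (k + l) = M.tau a k * M.tau a l := by
  simp only [tau, zpow_add]; group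
lemma tau_neg (a : Γ) (k : ℤ) : M.tau a (-k) = (M.tau a k)⁻¹ := by
  simp only [tau]; group
lemma tau_zpow (a : Γ) (k l : ℤ) : M.tau a k ^ l = M.tau a (k * l) := by
  simp only [tau, conj_zpow, zpow_mul]
lemma tau_pt (a : Γ) (i k : ℤ) : M.tau (M.pt a i) k = M.tau a k := by
  simp only [tau, pt, mul_inv_rev, ← zpow_neg]
  have : M.g ^ i * M.g ^ k * M.g ^ (-i) = M.g ^ k := by
    rw [← zpow_add, ← zpow_add]; congr 1; ring
  calc a * M.g ^ i * M.g ^ k * (M.g ^ (-i) * a⁻¹)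
      = a * (M.g ^ i * M.g ^ k * M.g ^ (-i)) * a⁻¹ := by group
    _ = _ := by rw [this]
lemma tau_conj (h a : Γ) (k : ℤ) : M.tau (h * a) k = h * M.tau a k * h⁻¹ := by
  simp only [tau]; group
lemma tau_mul_pt (a : Γ) (k i : ℤ) : M.tau a k * M.pt a i = M.pt a (k + i) := by
  simp only [tau, pt, zpow_add]; group

/-- Axes of `a` and `b` are the same. -/
def Sim (n0 : ℤ) (a b : Γ) : Prop := M.tau a n0 = M.tau b n0 ∨ M.tau a n0 = M.tau b (-n0)

variable {M}
lemma Sim.refl (n0 : ℤ) (a : Γ) : M.Sim n0 a a := Or.inl rfl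
lemma Sim.symm {n0 : ℤ} {a b : Γ} (h : M.Sim n0 a b) : M.Sim n0 b a := by
  rcases h with h | h
  · exact Or.inl h.symm
  · right
    rw [tau_neg, h, tau_neg, inv_inv]
lemma Sim.trans {n0 : ℤ} {a b c : Γ} (h : M.Sim n0 a b) (h' : M.Sim n0 b c) : M.Sim n0 a c := by
  rcases h with h | h <;> rcases h' with h' | h'
  · exact Or.inl (h.trans h')
  · exact Or.inr (h.trans h')
  · right; rw [h, tau_neg, h', ← tau_neg]
  · left; rw [h, tau_neg, h', tau_neg, inv_inv]
lemma Sim.mul {n0 : ℤ} {a b : Γ} (h : M.Sim n0 a b) (x : Γ) : M.Sim n0 (x * a) (x * b) := by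
  rcases h with h | h
  · left; rw [tau_conj, tau_conj, h]
  · right; rw [tau_conj, tau_conj, h]
lemma Sim.pt (n0 : ℤ) (a : Γ) (i : ℤ) : M.Sim n0 (M.pt a i) a := Or.inl (M.tau_pt a i n0)
lemma Sim.dvd {n0 n : ℤ} {a b : Γ} (h : M.Sim n0 a b) (hd : n0 ∣ n) : M.Sim n a b := by
  obtain ⟨c, rfl⟩ := hd
  rcases h with h | h
  · left; rw [← tau_zpow, ← tau_zpow, h]
  · right; rw [← tau_zpow, h, tau_zpow, neg_mul]
variable (M)

lemma d_one_pt (i : ℤ) : M.d 1 (M.g ^ i) = M.T * |i| := by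
  have := M.axis 0 i
  simpa using this

lemma conj_eq {h : Γ} {m k : ℤ} (hc : h * M.g ^ m * h⁻¹ = M.g ^ k) : |m| ≤ |k| := by
  by_contra hlt
  push Not at hlt
  have hT := M.one_le_T
  set t : ℤ := 2 * M.d 1 h + 1 with ht
  have ht0 : 0 < t := by have := M.nonneg 1 h; omega
  have h1 : h * M.g ^ (m * t) * h⁻¹ = M.g ^ (k * t) := by
    rw [zpow_mul, zpow_mul, ← hc, conj_zpow]
  have h2 : M.g ^ (m * t) = h⁻¹ * (M.g ^ (k * t)) * h := by rw [← h1]; group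
  have h3 : M.d 1 (M.g ^ (m * t)) ≤ 2 * M.d 1 h + M.d 1 (M.g ^ (k * t)) := by
    rw [h2]
    have e1 := M.tri 1 (h⁻¹) (h⁻¹ * M.g ^ (k * t) * h)
    have e2 := M.tri (h⁻¹) (h⁻¹ * M.g ^ (k * t)) (h⁻¹ * M.g ^ (k * t) * h)
    have e3 : M.d 1 h⁻¹ = M.d 1 h := by
      have := M.inv h 1 h⁻¹; rw [M.symm 1 h]; simpa using this.symm
    have e4 : M.d h⁻¹ (h⁻¹ * M.g ^ (k * t)) = M.d 1 (M.g ^ (k * t)) := by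
      have := M.inv h⁻¹ 1 (M.g ^ (k * t)); simpa using this
    have e5 : M.d (h⁻¹ * M.g ^ (k * t)) (h⁻¹ * M.g ^ (k * t) * h) = M.d 1 h := by
      have := M.inv (h⁻¹ * M.g ^ (k * t)) 1 h; simpa using this
    omega
  rw [d_one_pt, d_one_pt, abs_mul, abs_mul, abs_of_pos ht0] at h3
  have h4 : M.T * (|k| * t) + t ≤ M.T * (|m| * t) := by
    have : (|k| + 1) * t ≤ |m| * t := by nlinarith
    nlinarith
  omega

lemma conj_eq' {h : Γ} {m k : ℤ} (hc : h * M.g ^ m * h⁻¹ = M.g ^ k) : |m| = |k| := by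
  apply le_antisymm (M.conj_eq hc)
  apply M.conj_eq (h := h⁻¹)
  rw [← hc]; group

/-- Two axes which overlap for long are the same, weak version. -/
lemma bp0 (c : ℤ) : ∃ n0 : ℤ, 1 ≤ n0 ∧ ∃ θ : ℤ, 0 ≤ θ ∧ ∀ a b : Γ, ∀ i0 i1 j0 j1 : ℤ,
    M.d (M.pt a i0) (M.pt b j0) ≤ c → M.d (M.pt a i1) (M.pt b j1) ≤ c → i0 + θ ≤ i1 →
    M.Sim n0 a b := by
  classical
  set c' := 4 * c + 2 * M.D with hc'
  set B := (M.fin c').toFinset with hB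
  set N := B.card with hN
  refine ⟨(N.factorial : ℤ), by exact_mod_cast Nat.factorial_pos N, N, by omega, ?_⟩
  intro a b i0 i1 j0 j1 h0 h1 hθ
  have hj : ∀ i : ℕ, i < N + 1 → ∃ j, M.d (M.pt a (i0 + i)) (M.pt b j) ≤ c' := by
    intro i hi
    have e := M.ex_pt (a := a) (i := i0) (t := i0 + i) (j := i1) (by omega) (by omega)
    have e1 := M.ex_start (M.pt a i0) (M.pt b j0) (M.pt a i1) (M.pt a (i0 + i))
    have e2 := M.ex_end (M.pt b j0) (M.pt a i1) (M.pt b j1) (M.pt a (i0 + i))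
    have e3 : M.ex (M.pt b j0) (M.pt b j1) (M.pt a (i0 + i)) ≤ 4 * c := by omega
    obtain ⟨t, -, -, ht⟩ := M.ax_point e3
    exact ⟨t, ht⟩
  choose! j hj using hj
  have hmem : ∀ i ∈ Finset.range (N + 1), (M.pt a (i0 + i))⁻¹ * M.pt b (j i) ∈ B := by
    intro i hi
    have := hj i (Finset.mem_range.1 hi)
    rw [hB, Set.Finite.mem_toFinset]
    have e := M.inv (M.pt a (i0 + i))⁻¹ (M.pt a (i0 + i)) (M.pt b (j i))
    simp only [inv_mul_cancel] at e
    simp only [Set.mem_ofPred_eq]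
    omega
  obtain ⟨x, hx, y, hy, hxy, he⟩ := Finset.exists_ne_map_eq_of_card_lt_of_maps_to
    (by simp [← hN] : B.card < (Finset.range (N + 1)).card) hmem
  wlog hlt : x < y generalizing x y
  · exact this y hy x hx hxy.symm he.symm (by omega)
  simp only [Finset.mem_range] at hx hy
  set m : ℤ := (y : ℤ) - x with hm
  set k : ℤ := j y - j x with hk
  have key : M.tau a m = M.tau b k := by
    have e1 : M.pt b (j x) = M.pt a (i0 + x) * ((M.pt a (i0 + x))⁻¹ * M.pt b (j x)) := by group
    have e2 : M.pt b (j y) = M.pt a (i0 + y) * ((M.pt a (i0 + y))⁻¹ * M.pt b (j y)) := by group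
    have e3 : M.pt b (j y) * (M.pt b (j x))⁻¹ = M.pt a (i0 + y) * (M.pt a (i0 + x))⁻¹ := by
      rw [e2, e1, he]; group
    have f : ∀ (a : Γ) (i i' : ℤ), M.pt a i' * (M.pt a i)⁻¹ = M.tau a (i' - i) := by
      intro a i i'
      simp only [pt, tau, zpow_sub]; group
    rw [f, f] at e3
    rw [hm, hk, e3]; congr 1; ring
  have habs : |m| = |k| := by
    apply M.conj_eq' (h := b⁻¹ * a)
    have : a * M.g ^ m * a⁻¹ = b * M.g ^ k * b⁻¹ := key
    calc b⁻¹ * a * M.g ^ m * (b⁻¹ * a)⁻¹ = b⁻¹ * (a * M.g ^ m * a⁻¹) * b := by group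
      _ = _ := by rw [this]; group
  have hsim : M.Sim m a b := by
    rw [abs_of_pos (by omega)] at habs
    rcases abs_choice k with h | h
    · left; rw [key]; congr 1; omega
    · right; rw [key]; congr 1; omega
  apply hsim.dvd
  rw [hm, ← Nat.cast_sub hlt.le]
  exact_mod_cast Nat.dvd_factorial (by omega) (by omega)

end Setup


namespace Setup
variable {Γ : Type*} [Group Γ] (M : Setup Γ)

lemma bp_exists : ∃ n0 : ℤ, 1 ≤ n0 ∧ ∀ c : ℤ, ∃ θ : ℤ, 0 ≤ θ ∧
    ∀ a b : Γ, ∀ i0 i1 j0 j1 : ℤ,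
    M.d (M.pt a i0) (M.pt b j0) ≤ c → M.d (M.pt a i1) (M.pt b j1) ≤ c → i0 + θ ≤ i1 →
    M.Sim n0 a b := by
  obtain ⟨n0, hn0, θ, hθ, h⟩ := M.bp0 (4 * M.D)
  refine ⟨n0, hn0, fun c => ?_⟩
  have hD := M.one_le_D
  have hs0 : 0 ≤ 3 * M.D + 2 * |c| + 1 := by have := abs_nonneg c; omega
  refine ⟨θ + 2 * (3 * M.D + 2 * |c| + 1), by omega, ?_⟩
  intro a b i0 i1 j0 j1 h0 h1 hi
  have hcabs := le_abs_self c
  generalize hsdef : 3 * M.D + 2 * |c| + 1 = s at *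
  have key : ∀ i, i0 + s ≤ i → i + s ≤ i1 → ∃ j, M.d (M.pt a i) (M.pt b j) ≤ 4 * M.D := by
    intro i hi0 hi1
    have e0 : M.ex (M.pt b j0) (M.pt b j1) (M.pt a i0) ≤ 2 * c := by
      have := M.ex_le_left (M.pt b j0) (M.pt b j1) (M.pt a i0)
      have := M.symm (M.pt a i0) (M.pt b j0); omega
    have e1 : M.ex (M.pt b j0) (M.pt b j1) (M.pt a i1) ≤ 2 * c := by
      have := M.ex_le_right (M.pt b j0) (M.pt b j1) (M.pt a i1)
      have := M.symm (M.pt a i1) (M.pt b j1); omega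
    have hx := M.ex_pt (a := a) (i := i0) (t := i) (j := i1) (by omega) (by omega)
    have d0 := M.abs_le_d_pt a i i0
    have d1 := M.abs_le_d_pt a i i1
    rw [abs_of_nonneg (by omega)] at d0
    rw [abs_sub_comm, abs_of_nonneg (by omega)] at d1
    have := M.interior e0 e1 hx.le (by omega) (by omega)
    obtain ⟨t, -, -, ht⟩ := M.ax_point this
    exact ⟨t, by omega⟩
  obtain ⟨j, hj⟩ := key (i0 + s) (by omega) (by omega)
  obtain ⟨j', hj'⟩ := key (i1 - s) (by omega) (by omega)
  exact h a b _ _ _ _ hj hj' (by omega)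

lemma d_inv_left (x y : Γ) : M.d 1 (x⁻¹ * y) = M.d x y := by
  have := M.inv x 1 (x⁻¹ * y)
  simpa using this.symm

lemma exists_not_sim (hne : IsNonElementaryGroup Γ) {n0 : ℤ} (hn0 : 1 ≤ n0) :
    ∃ h : Γ, ¬ M.Sim n0 h 1 := by
  by_contra hcon
  push Not at hcon
  have hD := M.one_le_D
  have key : ∀ h : Γ, ∃ j : ℤ, M.d h (M.g ^ j) ≤ 4 * M.D := by
    intro h
    set r := M.d 1 h with hr
    have hr0 : 0 ≤ r := M.nonneg _ _
    have near : ∀ t : ℤ, ∃ j, M.d (M.pt h (n0 * t)) (M.pt 1 j) ≤ r := by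
      intro t
      have e : M.pt h (n0 * t) = M.tau h (n0 * t) * h := by simp [pt, tau]
      have : ∃ j : ℤ, M.tau h (n0 * t) = M.g ^ j := by
        rcases hcon h with h1 | h1
        · exact ⟨n0 * t, by rw [← tau_zpow, h1, tau_zpow]; simp [tau]⟩
        · exact ⟨-n0 * t, by rw [← tau_zpow, h1, tau_zpow]; simp [tau]⟩
      obtain ⟨j, hj⟩ := this
      refine ⟨j, ?_⟩
      rw [e, hj]
      have := M.inv (M.g ^ j) h 1
      simp only [mul_one] at this
      simp only [pt, one_mul]
      rw [this, M.symm]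
    set t := 3 * M.D + 2 * r + 1 with ht
    obtain ⟨j0, h0⟩ := near (-t)
    obtain ⟨j1, h1⟩ := near t
    have e0 : M.ex (M.pt 1 j0) (M.pt 1 j1) (M.pt h (n0 * -t)) ≤ 2 * r := by
      have := M.ex_le_left (M.pt 1 j0) (M.pt 1 j1) (M.pt h (n0 * -t))
      have := M.symm (M.pt h (n0 * -t)) (M.pt 1 j0); omega
    have e1 : M.ex (M.pt 1 j0) (M.pt 1 j1) (M.pt h (n0 * t)) ≤ 2 * r := by
      have := M.ex_le_right (M.pt 1 j0) (M.pt 1 j1) (M.pt h (n0 * t))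
      have := M.symm (M.pt h (n0 * t)) (M.pt 1 j1); omega
    have hnt : t ≤ n0 * t := by nlinarith
    have hnt' : n0 * -t = - (n0 * t) := by ring
    rw [hnt'] at e0
    have hx := M.ex_pt (a := h) (i := - (n0 * t)) (t := 0) (j := n0 * t) (by omega) (by omega)
    have d0 := M.abs_le_d_pt h 0 (- (n0 * t))
    have d1 := M.abs_le_d_pt h 0 (n0 * t)
    rw [abs_of_nonneg (by omega)] at d0
    rw [abs_sub_comm, abs_of_nonneg (by omega)] at d1
    have := M.interior e0 e1 hx.le (by omega) (by omega)
    obtain ⟨t, -, -, ht⟩ := M.ax_point this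
    rw [M.pt_zero] at ht
    exact ⟨t, by simp only [pt, one_mul] at ht; omega⟩
  have hfin := M.fin (4 * M.D)
  have : Finite {x | M.d 1 x ≤ 4 * M.D} := hfin
  have hsurj : Function.Surjective (fun b : {x | M.d 1 x ≤ 4 * M.D} =>
      (QuotientGroup.mk (b : Γ) : Γ ⧸ Subgroup.zpowers M.g)) := by
    intro q
    obtain ⟨x, rfl⟩ := QuotientGroup.mk_surjective q
    obtain ⟨j, hj⟩ := key x⁻¹
    refine ⟨⟨x * M.g ^ j, ?_⟩, ?_⟩
    · have := M.d_inv_left x⁻¹ (M.g ^ j)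
      simp only [inv_inv] at this
      simp only [Set.mem_ofPred_eq]; omega
    · apply QuotientGroup.eq.2
      simp only [mul_inv_rev, inv_mul_cancel_right]
      exact Subgroup.inv_mem _ (Subgroup.zpow_mem _ (Subgroup.mem_zpowers _) _)
  have : Finite (Γ ⧸ Subgroup.zpowers M.g) := Finite.of_surjective _ hsurj
  exact Subgroup.index_ne_zero_of_finite (hne M.g)

end Setup

/-- A setup with the constants describing overlaps of axes. -/
structure Setup2 (Γ : Type*) [Group Γ] extends Setup Γ where
  n0 : ℤ
  one_le_n0 : 1 ≤ n0
  bp' : ∀ c : ℤ, ∃ θ : ℤ, 0 ≤ θ ∧ ∀ a b : Γ, ∀ i0 i1 j0 j1 : ℤ,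
    d (a * g ^ i0) (b * g ^ j0) ≤ c → d (a * g ^ i1) (b * g ^ j1) ≤ c → i0 + θ ≤ i1 →
    toSetup.Sim n0 a b
  h0 : Γ
  h0_not_sim : ¬ toSetup.Sim n0 h0 1

lemma Setup.exists_setup2 {Γ : Type*} [Group Γ] (M : Setup Γ) (hne : IsNonElementaryGroup Γ) :
    Nonempty (Setup2 Γ) := by
  obtain ⟨n0, h1, h2⟩ := M.bp_exists
  obtain ⟨h, hh⟩ := M.exists_not_sim hne h1
  exact ⟨{ M with n0 := n0, one_le_n0 := h1, bp' := h2, h0 := h, h0_not_sim := hh }⟩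

namespace Setup2
variable {Γ : Type*} [Group Γ] (M : Setup2 Γ)

/-- The overlap constant at scale `c`. -/
noncomputable def th (c : ℤ) : ℤ := (M.bp' c).choose

lemma th_nonneg (c : ℤ) : 0 ≤ M.th c := (M.bp' c).choose_spec.1

lemma bp {c : ℤ} {a b : Γ} {i0 i1 j0 j1 : ℤ} (h0 : M.d (M.pt a i0) (M.pt b j0) ≤ c)
    (h1 : M.d (M.pt a i1) (M.pt b j1) ≤ c) (h : M.th c ≤ |i1 - i0|) : M.Sim M.n0 a b := by
  rcases abs_choice (i1 - i0) with hh | hh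
  · exact (M.bp' c).choose_spec.2 a b i0 i1 j0 j1 h0 h1 (by rw [hh] at h; unfold th at h; omega)
  · exact (M.bp' c).choose_spec.2 a b i1 i0 j1 j0 h1 h0 (by rw [hh] at h; unfold th at h; omega)

/-- Two distinct axes have bounded overlap. -/
lemma overlap {c : ℤ} {a b : Γ} {i0 i1 j0 j1 : ℤ} (hs : ¬ M.Sim M.n0 a b)
    (h0 : M.ex (M.pt b j0) (M.pt b j1) (M.pt a i0) ≤ c)
    (h1 : M.ex (M.pt b j0) (M.pt b j1) (M.pt a i1) ≤ c) :
    |i1 - i0| < M.th (c + 2 * M.D) := by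
  by_contra hlt
  push Not at hlt
  obtain ⟨t, -, -, ht⟩ := M.ax_point h0
  obtain ⟨t', -, -, ht'⟩ := M.ax_point h1
  exact hs (M.bp ht ht' hlt)

end Setup2


lemma card_le_of_diam (S : Finset ℤ) (B : ℤ) (hB : 0 ≤ B) (h : ∀ x ∈ S, ∀ y ∈ S, |x - y| ≤ B) :
    (S.card : ℤ) ≤ B + 1 := by
  rcases S.eq_empty_or_nonempty with rfl | hne
  · simp; omega
  have hsub : S ⊆ Finset.Icc (S.min' hne) (S.min' hne + B) := by
    intro x hx
    rw [Finset.mem_Icc]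
    refine ⟨S.min'_le x hx, ?_⟩
    have := (abs_le.1 (h x hx _ (S.min'_mem hne))).2
    omega
  have := Finset.card_le_card hsub
  rw [Int.card_Icc] at this
  omega

/-- Counting lemma: an integer interval covered by five sets of bounded diameter. -/
lemma cover5 {i j : ℤ} {B1 B2 B3 B4 B5 : ℤ} (P1 P2 P3 P4 P5 : ℤ → Prop)
    (hc : ∀ t, i ≤ t → t ≤ j → P1 t ∨ P2 t ∨ P3 t ∨ P4 t ∨ P5 t)
    (b1 : 0 ≤ B1) (b2 : 0 ≤ B2) (b3 : 0 ≤ B3) (b4 : 0 ≤ B4) (b5 : 0 ≤ B5)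
    (h1 : ∀ x y, i ≤ x → x ≤ j → i ≤ y → y ≤ j → P1 x → P1 y → |x - y| ≤ B1)
    (h2 : ∀ x y, i ≤ x → x ≤ j → i ≤ y → y ≤ j → P2 x → P2 y → |x - y| ≤ B2)
    (h3 : ∀ x y, i ≤ x → x ≤ j → i ≤ y → y ≤ j → P3 x → P3 y → |x - y| ≤ B3)
    (h4 : ∀ x y, i ≤ x → x ≤ j → i ≤ y → y ≤ j → P4 x → P4 y → |x - y| ≤ B4)
    (h5 : ∀ x y, i ≤ x → x ≤ j → i ≤ y → y ≤ j → P5 x → P5 y → |x - y| ≤ B5) :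
    j - i ≤ B1 + B2 + B3 + B4 + B5 + 4 := by
  classical
  have gen : ∀ (P : ℤ → Prop) (B : ℤ), 0 ≤ B →
      (∀ x y, i ≤ x → x ≤ j → i ≤ y → y ≤ j → P x → P y → |x - y| ≤ B) →
      (((Finset.Icc i j).filter P).card : ℤ) ≤ B + 1 := by
    intro P B hB h
    apply card_le_of_diam _ _ hB
    intro x hx y hy
    simp only [Finset.mem_filter, Finset.mem_Icc] at hx hy
    exact h x y hx.1.1 hx.1.2 hy.1.1 hy.1.2 hx.2 hy.2
  have hsub : Finset.Icc i j ⊆ (Finset.Icc i j).filter P1 ∪ ((Finset.Icc i j).filter P2 ∪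
      ((Finset.Icc i j).filter P3 ∪ ((Finset.Icc i j).filter P4 ∪ (Finset.Icc i j).filter P5))) := by
    intro t ht
    simp only [Finset.mem_union, Finset.mem_filter, ht, true_and]
    rw [Finset.mem_Icc] at ht
    exact hc t ht.1 ht.2
  have hcard := Finset.card_le_card hsub
  have u1 := Finset.card_union_le ((Finset.Icc i j).filter P1) ((Finset.Icc i j).filter P2 ∪
      ((Finset.Icc i j).filter P3 ∪ ((Finset.Icc i j).filter P4 ∪ (Finset.Icc i j).filter P5)))
  have u2 := Finset.card_union_le ((Finset.Icc i j).filter P2)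
      ((Finset.Icc i j).filter P3 ∪ ((Finset.Icc i j).filter P4 ∪ (Finset.Icc i j).filter P5))
  have u3 := Finset.card_union_le 
      ((Finset.Icc i j).filter P3) ((Finset.Icc i j).filter P4 ∪ (Finset.Icc i j).filter P5)
  have u4 := Finset.card_union_le ((Finset.Icc i j).filter P4) ((Finset.Icc i j).filter P5)
  have g1 := gen P1 B1 b1 h1
  have g2 := gen P2 B2 b2 h2
  have g3 := gen P3 B3 b3 h3
  have g4 := gen P4 B4 b4 h4
  have g5 := gen P5 B5 b5 h5
  rw [Int.card_Icc] at hcard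
  omega

namespace Setup2
variable {Γ : Type*} [Group Γ] (M : Setup2 Γ)

/-- The windmill invariant. -/
structure Inv (n K cT K3 r : ℤ) (H : Subgroup Γ) : Prop where
  j0 : ∀ a, M.d 1 a < r → M.tau a n ∈ H
  j1 : ∀ a, M.tau a n ∉ H → ∀ v ∈ H, ∀ i j, M.ex 1 v (M.pt a i) ≤ 2 * M.D →
    M.ex 1 v (M.pt a j) ≤ 2 * M.D → |i - j| ≤ K
  j2 : ∀ u ∈ H, ∀ v ∈ H, ∀ q1 q2, M.ex u v q1 = 0 → M.ex q1 v q2 = 0 →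
    (∀ y, M.ex q1 q2 y = 0 → ∀ h ∈ H, r + cT ≤ M.d h y) →
    ∃ a i j, M.tau a n ∈ H ∧ M.d q1 (M.pt a i) ≤ 4 * M.D ∧ M.d q2 (M.pt a j) ≤ 4 * M.D
  j3 : ∀ v ∈ H, v ≠ 1 → ∃ a, ∀ t, 0 ≤ t → t ≤ n - K3 → M.ex 1 v (M.pt a t) ≤ 10 * M.D

variable {M}

lemma ex_inv_left (u v q : Γ) : M.ex 1 (u⁻¹ * v) (u⁻¹ * q) = M.ex u v q := by
  have := M.ex_smul u⁻¹ u v q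
  simpa using this

lemma mem_of_sim {H : Subgroup Γ} {n : ℤ} (hn : M.n0 ∣ n) {a b : Γ} (h : M.Sim M.n0 a b)
    (ha : M.tau a n ∈ H) : M.tau b n ∈ H := by
  rcases (h.symm).dvd hn with h | h
  · rw [h]; exact ha
  · rw [h, M.tau_neg]; exact H.inv_mem ha

lemma tau_mem_mul {H : Subgroup Γ} {n : ℤ} {a h : Γ} (hh : h ∈ H) :
    M.tau (h * a) n ∈ H ↔ M.tau a n ∈ H := by
  rw [M.tau_conj]
  constructor
  · intro hm
    have := H.mul_mem (H.mul_mem (H.inv_mem hh) hm) hh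
    simpa [mul_assoc] using this
  · intro hm
    exact H.mul_mem (H.mul_mem hh hm) (H.inv_mem hh)

namespace Inv
variable {n K cT K3 r : ℤ} {H : Subgroup Γ}

lemma far (I : M.Inv n K cT K3 r H) {a : Γ} (ha : M.tau a n ∉ H) {h : Γ} (hh : h ∈ H) (k : ℤ) :
    r ≤ M.d h (M.pt a k) := by
  by_contra hlt
  push Not at hlt
  have := I.j0 (h⁻¹ * M.pt a k) (by rw [M.d_inv_left]; exact hlt)
  rw [M.mul_pt, M.tau_pt, tau_mem_mul (H.inv_mem hh)] at this
  exact ha this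

/-- Version of `j1` for arbitrary excess. -/
lemma j1E (I : M.Inv n K cT K3 r H) (hK : 0 ≤ K) {a : Γ} (ha : M.tau a n ∉ H) {u v : Γ} (hu : u ∈ H)
    (hv : v ∈ H) {E i j : ℤ} (hi : M.ex u v (M.pt a i) ≤ E) (hj : M.ex u v (M.pt a j) ≤ E) :
    |i - j| ≤ K + 2 * (3 * M.D + E + 1) := by
  have hD := M.one_le_D
  have hE : 0 ≤ E := (M.ex_nonneg _ _ _).trans hi
  wlog hij : i ≤ j generalizing i j
  · rw [abs_sub_comm]; exact this hj hi (by omega)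
  rw [abs_sub_comm, abs_of_nonneg (by omega)]
  by_contra hlt
  push Not at hlt
  have key : ∀ t, i + (3 * M.D + E + 1) ≤ t → t + (3 * M.D + E + 1) ≤ j →
      M.ex 1 (u⁻¹ * v) (M.pt (u⁻¹ * a) t) ≤ 2 * M.D := by
    intro t h1 h2
    rw [← M.mul_pt, ex_inv_left]
    have hx := M.ex_pt (a := a) (i := i) (t := t) (j := j) (by omega) (by omega)
    have d0 := M.abs_le_d_pt a t i
    have d1 := M.abs_le_d_pt a t j
    rw [abs_of_nonneg (by omega)] at d0
    rw [abs_sub_comm, abs_of_nonneg (by omega)] at d1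
    have := M.interior hi hj hx.le (by omega) (by omega)
    omega
  have := I.j1 (u⁻¹ * a) (by rwa [tau_mem_mul (H.inv_mem hu)]) (u⁻¹ * v)
    (H.mul_mem (H.inv_mem hu) hv) (i + (3 * M.D + E + 1)) (j - (3 * M.D + E + 1))
    (key _ (by omega) (by omega)) (key _ (by omega) (by omega))
  have := (abs_le.1 this).1
  omega

end Inv

/-- Nearest point projections to an axis. -/
lemma nearest {h p : Γ} (hn : ∀ t, M.d h p ≤ M.d h (M.pt p t)) (k : ℤ) :
    M.ex h (M.pt p k) p ≤ 3 * M.D := by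
  have hT := M.one_le_T
  have hTD := M.T_le_D
  have hdm := Int.mul_ediv_add_emod M.D M.T
  have hm0 := Int.emod_nonneg M.D (by omega : M.T ≠ 0)
  have hm1 := Int.emod_lt_of_pos M.D (by omega : 0 < M.T)
  set t := M.D / M.T + 1 with ht
  have ht3 : M.T * t = M.T * (M.D / M.T) + M.T := by rw [ht]; ring
  have ht1 : M.D < M.T * t := by rw [ht, mul_add]; omega
  have ht2 : M.T * t ≤ 2 * M.D := by rw [ht, mul_add]; omega
  have ht0 : 0 < t := by
    by_contra hc
    push Not at hc
    have := M.one_le_D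
    nlinarith
  by_cases hk : |k| < t
  · have h1 := M.ex_le_right h (M.pt p k) p
    have h2 := M.d_pt p k 0
    rw [M.pt_zero, sub_zero] at h2
    have : M.T * |k| ≤ M.T * (t - 1) := by
      apply mul_le_mul_of_nonneg_left <;> omega
    rw [mul_sub] at this
    rw [h2] at h1
    omega
  · push Not at hk
    -- the point at distance t in the direction of k
    obtain ⟨t', ht', hbet⟩ : ∃ t' : ℤ, |t'| = t ∧ |k - t'| = |k| - t := by
      rcases abs_choice k with h | h
      · refine ⟨t, abs_of_pos ht0, ?_⟩
        rw [h] at hk ⊢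
        rw [abs_of_nonneg (by omega)]
      · refine ⟨-t, by rw [abs_neg, abs_of_pos ht0], ?_⟩
        rw [h] at hk ⊢
        rw [abs_of_nonpos (by omega)]; ring
    have a1 := M.d_pt p t' 0
    have a2 := M.d_pt p k 0
    have a3 := M.d_pt p k t'
    rw [M.pt_zero, sub_zero] at a1 a2
    rw [ht'] at a1
    rw [hbet, mul_sub] at a3
    have a4 := M.symm p (M.pt p t')
    have a5 := M.symm p (M.pt p k)
    have hh := hn t'
    rcases M.ex_thin h (M.pt p t') (M.pt p k) p with h1 | h1
    · simp only [Hyp.ex] at *; omega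
    · simp only [Hyp.ex] at *; omega

/-- An arm of the windmill. -/
def Arm (M : Setup2 Γ) (n r' : ℤ) (H : Subgroup Γ) (z p h : Γ) : Prop :=
  h ∈ H ∧ M.d h p < r' ∧ ((z = p ∧ p = h) ∨
    (M.tau p n ∉ H ∧ (∀ t, M.d h p ≤ M.d h (M.pt p t)) ∧ ∃ l, z = M.pt p l))

/-- Overlap of an axis with an arm. -/
lemma Arm.overlap {n r' : ℤ} {H : Subgroup Γ} {z p h : Γ} (A : M.Arm n r' H z p h) {b : Γ}
    (hb : z = p ∨ ¬ M.Sim M.n0 p b) {E i j : ℤ} (hi : M.ex p z (M.pt b i) ≤ E)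
    (hj : M.ex p z (M.pt b j) ≤ E) : |i - j| ≤ M.th (E + 2 * M.D) + E := by
  have hE : 0 ≤ E := (M.ex_nonneg _ _ _).trans hi
  have hth := M.th_nonneg (E + 2 * M.D)
  have triv : z = p → |i - j| ≤ M.th (E + 2 * M.D) + E := by
    rintro rfl
    rw [M.ex_same] at hi hj
    have := M.abs_le_d_pt b i j
    have h2 := M.tri (M.pt b i) z (M.pt b j)
    rw [M.symm _ z] at h2
    omega
  rcases hb with hb | hb
  · exact triv hb
  rcases A.2.2 with ⟨hz, _⟩ | ⟨_, _, l, rfl⟩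
  · exact triv hz
  · have h0 : p = M.pt p 0 := (M.pt_zero p).symm
    rw [h0, M.pt_pt, zero_add] at hi hj
    have := M.overlap (fun hs => hb hs.symm) hj hi
    omega

/-- The five segments along a side. -/
lemma five {z p h z' p' h' q : Γ} {e : ℤ} (hq : M.ex z z' q ≤ e) :
    M.ex p z q ≤ e + 3 * M.D ∨ M.ex h p q ≤ e + 3 * M.D ∨ M.ex h h' q ≤ e + 3 * M.D ∨
    M.ex h' p' q ≤ e + 3 * M.D ∨ M.ex p' z' q ≤ e + 3 * M.D := by
  have hD := M.one_le_D
  rcases M.ex_thin' hq h with h1 | h1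
  · rcases M.ex_thin' h1 p with h2 | h2
    · rw [M.ex_comm] at h2; left; omega
    · rw [M.ex_comm] at h2; right; left; omega
  · rcases M.ex_thin' h1 h' with h2 | h2
    · right; right; left; omega
    · rcases M.ex_thin' h2 p' with h3 | h3
      · right; right; right; left; omega
      · right; right; right; right; omega

end Setup2


namespace Setup2
variable {Γ : Type*} [Group Γ] {M : Setup2 Γ}

lemma shortseg {h p f f' : Γ} {E ρ ρ' : ℤ} (hf : M.ex h p f ≤ E) (hf' : M.ex h p f' ≤ E)
    (h1 : ρ ≤ M.d h f) (h2 : ρ ≤ M.d h f') (h3 : M.d h p ≤ ρ') :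
    M.d f f' ≤ 3 * E + M.D + (ρ' - ρ) := by
  have e1 := M.nonneg f p
  have e2 := M.nonneg f' p
  rcases le_total (M.d h f) (M.d h f') with hle | hle
  · have := M.close hf' hf hle
    simp only [Hyp.ex] at hf hf'
    omega
  · have := M.close hf hf' hle
    rw [M.symm f f']
    simp only [Hyp.ex] at hf hf'
    omega

lemma d_le_of_ex {h' p' f : Γ} {E : ℤ} (h1 : M.ex h' p' f ≤ E) (h2 : M.ex h' f p' ≤ 3 * M.D) :
    2 * M.d p' f ≤ E + 3 * M.D := by
  have := M.ex_add h' p' f; omega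

/-- The constant controlling the corners. -/
noncomputable def cB (M : Setup2 Γ) (K s : ℤ) : ℤ :=
  (M.th (6 * M.D) + 4 * M.D) + (13 * M.D + s) + (K + 2 * (7 * M.D + 1)) + 7 * M.D + 4 * M.D

/-- The corner constant. -/
noncomputable def cK2 (M : Setup2 Γ) (K s : ℤ) : ℤ := M.T * (M.cB K s + 5) + M.D

lemma corner {n K cT K3 r s : ℤ} {H : Subgroup Γ} (I : M.Inv n K cT K3 r H) (hK : 0 ≤ K)
    (hs : 0 ≤ s)
    {z p h : Γ} (A : M.Arm n (r + s) H z p h) {p' h' : Γ} (hh' : h' ∈ H) (hp' : M.tau p' n ∉ H)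
    (hnear : ∀ t, M.d h' p' ≤ M.d h' (M.pt p' t)) (hsim : z = p ∨ ¬ M.Sim M.n0 p p') (k : ℤ) :
    M.ex z (M.pt p' k) p' ≤ 2 * M.cK2 K s := by
  have hD := M.one_le_D
  have hT := M.one_le_T
  have hth := M.th_nonneg (6 * M.D)
  by_contra hlt
  push Not at hlt
  set m := M.cB K s + 5 with hm
  have hm0 : 0 ≤ m := by unfold cB at hm; omega
  have hlt' : 2 * (M.T * m) + M.D < M.ex z (M.pt p' k) p' := by
    unfold cK2 at hlt; rw [← hm] at hlt; omega
  have hTm : ∀ t : ℤ, |t| ≤ m → M.T * |t| ≤ M.T * m := fun t ht =>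
    mul_le_mul_of_nonneg_left ht (by omega)
  have hdp : ∀ t : ℤ, M.d (M.pt p' t) p' = M.T * |t| := by
    intro t
    have := M.d_pt p' t 0
    rwa [M.pt_zero, sub_zero] at this
  have hk : m < |k| := by
    by_contra hc
    push Not at hc
    have h1 := M.ex_le_right z (M.pt p' k) p'
    rw [hdp] at h1
    have := hTm k hc
    omega
  have pts : ∀ t, |t| ≤ m → M.ex p' (M.pt p' k) (M.pt p' t) = 0 → M.ex z p' (M.pt p' t) ≤ M.D := by
    intro t ht h0
    rcases M.ex_thin' h0.le z with h1 | h1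
    · rw [M.ex_comm]; omega
    · have h2 := M.ex_move z (M.pt p' k) (M.pt p' t) p'
      rw [hdp] at h2
      have := hTm t ht
      omega
  have main : ∀ i j : ℤ, j - i = m → (∀ t, i ≤ t → t ≤ j → M.ex z p' (M.pt p' t) ≤ M.D) → False := by
    intro i j hij hpt
    have hcov := cover5 (i := i) (j := j) (B1 := M.th (6 * M.D) + 4 * M.D) (B2 := 13 * M.D + s)
      (B3 := K + 2 * (7 * M.D + 1)) (B4 := 7 * M.D) (B5 := 4 * M.D)
      (fun t => M.ex p z (M.pt p' t) ≤ 4 * M.D) (fun t => M.ex h p (M.pt p' t) ≤ 4 * M.D)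
      (fun t => M.ex h h' (M.pt p' t) ≤ 4 * M.D) (fun t => M.ex h' p' (M.pt p' t) ≤ 4 * M.D)
      (fun t => M.ex p' p' (M.pt p' t) ≤ 4 * M.D)
      (by
        intro t h1 h2
        have := five (z := z) (p := p) (h := h) (z' := p') (p' := p') (h' := h') (hpt t h1 h2)
        have e : M.D + 3 * M.D = 4 * M.D := by ring
        rwa [e] at this)
      (by omega) (by omega) (by omega) (by omega) (by omega)
      (by
        intro x y _ _ _ _ hx hy
        have := A.overlap hsim hx hy
        have e : 4 * M.D + 2 * M.D = 6 * M.D := by ring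
        rwa [e] at this)
      (by
        intro x y _ _ _ _ hx hy
        have h1 := I.far hp' A.1 x
        have h2 := I.far hp' A.1 y
        have h3 := shortseg hx hy h1 h2 A.2.1.le
        have h4 := M.abs_le_d_pt p' x y
        omega)
      (by
        intro x y _ _ _ _ hx hy
        have := I.j1E hK hp' A.1 hh' hx hy
        omega)
      (by
        intro x y _ _ _ _ hx hy
        have h1 := d_le_of_ex hx (nearest hnear x)
        have h2 := d_le_of_ex hy (nearest hnear y)
        have h3 := M.tri (M.pt p' x) p' (M.pt p' y)
        have h4 := M.abs_le_d_pt p' x y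
        rw [M.symm _ p'] at h3
        omega)
      (by
        intro x y _ _ _ _ hx hy
        rw [M.ex_same] at hx hy
        have h3 := M.tri (M.pt p' x) p' (M.pt p' y)
        have h4 := M.abs_le_d_pt p' x y
        rw [M.symm _ p'] at h3
        omega)
    unfold cB at hm
    omega
  rcases abs_choice k with hk' | hk'
  · rw [hk'] at hk
    refine main 0 m (by omega) (fun t h1 h2 => pts t (by rw [abs_of_nonneg h1]; exact h2) ?_)
    have := M.ex_pt (a := p') (i := 0) (t := t) (j := k) h1 (by omega)
    rwa [M.pt_zero] at this
  · rw [hk'] at hk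
    refine main (-m) 0 (by omega) (fun t h1 h2 => pts t (by rw [abs_of_nonpos h2]; omega) ?_)
    have := M.ex_pt (a := p') (i := k) (t := t) (j := 0) (by omega) h2
    rwa [M.pt_zero, M.ex_comm] at this

/-- A point near an arm's axis is near a point of the axis. -/
lemma arm_pt {p f : Γ} {l E : ℤ} (hf : M.ex p (M.pt p l) f ≤ E) :
    ∃ t, M.d f (M.pt p t) ≤ E + 2 * M.D := by
  rw [← M.pt_zero p, M.pt_pt, zero_add] at hf
  obtain ⟨t, -, -, ht⟩ := M.ax_point hf
  exact ⟨t, ht⟩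

lemma d_pt_zero (p : Γ) (t : ℤ) : M.d (M.pt p t) p = M.T * |t| := by
  have := M.d_pt p t 0
  rwa [M.pt_zero, sub_zero] at this

/-- constant for `double1`. -/
def cR1 (M : Setup2 Γ) (K E : ℤ) : ℤ :=
  E + 2 * M.D + M.T * (K + 2 * (3 * M.D + (3 * E + 7 * M.D) + 1))

/-- A point both on an arm and between points of `H` is near `H`. -/
lemma double1 {n K cT K3 r r' : ℤ} {H : Subgroup Γ} (I : M.Inv n K cT K3 r H) (hK : 0 ≤ K)
    {z' p' h' u f : Γ} (A : M.Arm n r' H z' p' h') (hu : u ∈ H) {E : ℤ}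
    (h1 : M.ex p' z' f ≤ E) (h2 : M.ex u h' f ≤ E) : M.d h' f < r' + M.cR1 K E := by
  have hD := M.one_le_D
  have hT := M.one_le_T
  have hE : 0 ≤ E := (M.ex_nonneg _ _ _).trans h1
  have tr := M.tri h' p' f
  have hp := A.2.1
  rcases A.2.2 with ⟨rfl, rfl⟩ | ⟨hpn, hnear, l, rfl⟩
  · rw [M.ex_same] at h1
    have : 0 ≤ M.T * (K + 2 * (3 * M.D + (3 * E + 7 * M.D) + 1)) := by positivity
    unfold cR1; omega
  · obtain ⟨t, ht⟩ := arm_pt h1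
    have e1 := M.ex_move u h' f (M.pt p' t)
    have e2 := nearest hnear t
    have e3 := M.ex_right u (M.pt p' t) h' p'
    rw [M.ex_comm (M.pt p' t)] at e3
    have e4 := I.j1E hK hpn hu A.1 (E := 3 * E + 7 * M.D) (i := t) (j := 0) (by omega)
      (by rw [M.pt_zero]; omega)
    rw [sub_zero] at e4
    have e5 := d_pt_zero (M := M) p' t
    have e6 := mul_le_mul_of_nonneg_left e4 (by omega : 0 ≤ M.T)
    have e7 := M.tri p' (M.pt p' t) f
    have s1 := M.symm p' (M.pt p' t)
    have s2 := M.symm (M.pt p' t) f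
    unfold cR1; omega

/-- constant for `double2`. -/
noncomputable def cR2 (M : Setup2 Γ) (K E : ℤ) : ℤ :=
  E + 2 * M.D + M.T * (M.th (9 * E + 50 * M.D) + (M.th (6 * E + 30 * M.D) + 9 * E + 50 * M.D) +
    (K + 2 * (9 * E + 50 * M.D)) + 10)

/-- A point on two arms is near `H`. -/
lemma double2 {n K cT K3 r r' : ℤ} {H : Subgroup Γ} (I : M.Inv n K cT K3 r H) (hK : 0 ≤ K)
    {z p h z' p' h' f : Γ} (A : M.Arm n r' H z p h) (A' : M.Arm n r' H z' p' h') {E : ℤ}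
    (hsim : z = p ∨ z' = p' ∨ ¬ M.Sim M.n0 p p')
    (h1 : M.ex p z f ≤ E) (h2 : M.ex p' z' f ≤ E) :
    M.d h f < r' + M.cR2 K E ∨ M.d h' f < r' + M.cR2 K E := by
  have hD := M.one_le_D
  have hT := M.one_le_T
  have hE : 0 ≤ E := (M.ex_nonneg _ _ _).trans h1
  have tr := M.tri h p f
  have tr' := M.tri h' p' f
  have hp := A.2.1
  have hp' := A'.2.1
  have th1 := M.th_nonneg (9 * E + 50 * M.D)
  have th2 := M.th_nonneg (6 * E + 30 * M.D)
  have hpos : 0 ≤ M.T * (M.th (9 * E + 50 * M.D) + (M.th (6 * E + 30 * M.D) + 9 * E + 50 * M.D) +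
    (K + 2 * (9 * E + 50 * M.D)) + 10) := by positivity
  have triv : z = p → M.d h f < r' + M.cR2 K E := by
    rintro rfl
    rw [M.ex_same] at h1
    unfold cR2; omega
  have triv' : z' = p' → M.d h' f < r' + M.cR2 K E := by
    rintro rfl
    rw [M.ex_same] at h2
    unfold cR2; omega
  rcases hsim with hsim | hsim | hsim
  · exact Or.inl (triv hsim)
  · exact Or.inr (triv' hsim)
  rcases A.2.2 with ⟨hz, _⟩ | ⟨hpn, hnear, l, rfl⟩
  · exact Or.inl (triv hz)
  rcases A'.2.2 with ⟨hz, _⟩ | ⟨hpn', hnear', l', rfl⟩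
  · exact Or.inr (triv' hz)
  obtain ⟨t0, ht0⟩ := arm_pt h1
  obtain ⟨t1, ht1⟩ := arm_pt h2
  -- every point y of the axis p' between p' and f
  have cls : ∀ t, M.ex p' (M.pt p' t1) (M.pt p' t) = 0 → M.ex h h' (M.pt p' t) ≤ 4 * E + 20 * M.D ∨
      M.ex p (M.pt p t0) (M.pt p' t) ≤ 4 * E + 20 * M.D ∨
      M.ex h p (M.pt p' t) ≤ 4 * E + 20 * M.D := by
    intro t hz
    have e1 := M.ex_right h' p' (M.pt p' t1) (M.pt p' t)
    have e2 := nearest hnear' t1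
    have e3 := M.ex_end h' (M.pt p' t1) f (M.pt p' t)
    have s9 := M.symm (M.pt p' t1) f
    have e4 : M.ex h' f (M.pt p' t) ≤ 2 * E + 7 * M.D := by omega
    rcases M.ex_thin' e4 h with h5 | h5
    · left; rw [M.ex_comm]; omega
    · have e6 := M.ex_end h f (M.pt p t0) (M.pt p' t)
      have e7 : M.ex h (M.pt p t0) (M.pt p' t) ≤ 4 * E + 12 * M.D := by omega
      rcases M.ex_thin' e7 p with h8 | h8
      · right; right; omega
      · right; left; omega
  have dz := d_pt_zero (M := M) p t0
  have dz' := d_pt_zero (M := M) p' t1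
  have dpf := M.tri p (M.pt p t0) f
  have dpf' := M.tri p' (M.pt p' t1) f
  have s1 := M.symm p (M.pt p t0)
  have s2 := M.symm (M.pt p t0) f
  have s3 := M.symm p' (M.pt p' t1)
  have s4 := M.symm (M.pt p' t1) f
  by_cases hc : ∃ t, M.ex p' (M.pt p' t1) (M.pt p' t) = 0 ∧ M.ex h p (M.pt p' t) ≤ 4 * E + 20 * M.D
  · left
    obtain ⟨t, -, ht⟩ := hc
    have e1 := nearest hnear t0
    have e2 : M.ex (M.pt p' t) (M.pt p t0) p ≤ 4 * E + 23 * M.D := by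
      have := M.tri h (M.pt p' t) (M.pt p t0)
      simp only [Hyp.ex] at *; omega
    have e3 := M.ex_end (M.pt p' t) (M.pt p t0) (M.pt p' t1) p
    have e4 := M.tri (M.pt p t0) f (M.pt p' t1)
    have e5 : M.ex (M.pt p' t) (M.pt p' t1) p ≤ 8 * E + 31 * M.D := by omega
    obtain ⟨t2, -, -, ht2⟩ := M.ax_point e5
    have e6 : |t0| < M.th (9 * E + 50 * M.D) := by
      by_contra hlt
      push Not at hlt
      exact hsim (M.bp (a := p) (b := p') (i0 := 0) (i1 := t0) (j0 := t2) (j1 := t1)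
        (c := 9 * E + 50 * M.D) (by rw [M.pt_zero]; omega) (by omega) (by rwa [sub_zero]))
    have e7 : M.T * |t0| ≤ M.T * (M.th (9 * E + 50 * M.D) +
      (M.th (6 * E + 30 * M.D) + 9 * E + 50 * M.D) + (K + 2 * (9 * E + 50 * M.D)) + 10) :=
      mul_le_mul_of_nonneg_left (by omega) (by omega)
    unfold cR2; omega
  · right
    push Not at hc
    have main : ∀ i j : ℤ, (∀ t, i ≤ t → t ≤ j → M.ex p' (M.pt p' t1) (M.pt p' t) = 0) →
        j - i ≤ (M.th (6 * E + 30 * M.D) + 9 * E + 50 * M.D) + (K + 2 * (9 * E + 50 * M.D)) + 4 := by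
      intro i j hbet
      have := cover5 (i := i) (j := j) (B1 := K + 2 * (9 * E + 50 * M.D))
        (B2 := M.th (6 * E + 30 * M.D) + 9 * E + 50 * M.D)
        (B3 := 0) (B4 := 0) (B5 := 0)
        (fun t => M.ex h h' (M.pt p' t) ≤ 4 * E + 20 * M.D)
        (fun t => M.ex p (M.pt p t0) (M.pt p' t) ≤ 4 * E + 20 * M.D) (fun t => False)
        (fun t => False) (fun t => False)
        (by
          intro t a1 a2
          have a3 := hbet t a1 a2
          rcases cls t a3 with h | h | h
          · exact Or.inl h
          · exact Or.inr (Or.inl h)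
          · have := hc t a3; omega)
        (by omega) (by omega) (by omega) (by omega) (by omega)
        (by
          intro x y _ _ _ _ hx hy
          have := I.j1E hK hpn' A.1 A'.1 hx hy
          omega)
        (by
          intro x y _ _ _ _ hx hy
          by_contra hlt
          push Not at hlt
          obtain ⟨tx, htx⟩ := arm_pt hx
          obtain ⟨ty, hty⟩ := arm_pt hy
          exact hsim (Setup.Sim.symm (M.bp (a := p') (b := p) (c := 6 * E + 30 * M.D)
            (by omega : M.d (M.pt p' y) (M.pt p ty) ≤ _)
            (by omega : M.d (M.pt p' x) (M.pt p tx) ≤ _) (by omega))))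
        (by intros; contradiction) (by intros; contradiction) (by intros; contradiction)
      omega
    have e6 : |t1| ≤ (M.th (6 * E + 30 * M.D) + 9 * E + 50 * M.D) +
        (K + 2 * (9 * E + 50 * M.D)) + 4 := by
      rcases abs_choice t1 with hk' | hk'
      · have h0 : 0 ≤ t1 := by have := abs_nonneg t1; omega
        have := main 0 t1 (by
          intro t h1 h2
          have := M.ex_pt (a := p') (i := 0) (t := t) (j := t1) h1 h2
          rwa [M.pt_zero] at this)
        omega
      · have h0 : 0 ≤ - t1 := by have := abs_nonneg t1; omega
        have := main t1 0 (by
          intro t h1 h2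
          have := M.ex_pt (a := p') (i := t1) (t := t) (j := 0) h1 h2
          rwa [M.pt_zero, M.ex_comm] at this)
        omega
    have e7 : M.T * |t1| ≤ M.T * (M.th (9 * E + 50 * M.D) +
      (M.th (6 * E + 30 * M.D) + 9 * E + 50 * M.D) + (K + 2 * (9 * E + 50 * M.D)) + 10) :=
      mul_le_mul_of_nonneg_left (by omega) (by omega)
    unfold cR2; omega

end Setup2


namespace Setup
variable {Γ : Type*} [Group Γ] (M : Setup Γ)

/-- A broken path whose corners are midpoints of long chords of axes. -/
structure ChordPath (P : ℕ → Γ) (ε : ℕ → ℤ) (m : ℕ) (κ : ℤ) : Prop where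
  sgn : ∀ i, i < m → ε i = 1 ∨ ε i = -1
  left : ∀ i, i < m → ∀ s, 0 ≤ s → s ≤ κ → M.ex (P i) (P (i + 1)) (M.pt (P (i + 1)) (-(ε i * s))) ≤ M.D
  right : ∀ i, i < m → ∀ s, 0 ≤ s → s ≤ κ →
    M.ex (P (i + 1)) (P (i + 2)) (M.pt (P (i + 1)) (ε i * s)) ≤ M.D
  big : 5 * M.D < κ

variable {M}

lemma d_pt_zero' (p : Γ) (t : ℤ) : M.d (M.pt p t) p = M.T * |t| := by
  have := M.d_pt p t 0
  rwa [M.pt_zero, sub_zero] at this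

lemma le_T_mul {x : ℤ} (hx : 0 ≤ x) : x ≤ M.T * x := by
  have := M.one_le_T
  nlinarith

/-- Obtain a half chord from a corner estimate. -/
lemma half_chord {u b : Γ} {ε k κ K2 : ℤ} (hε : ε = 1 ∨ ε = -1)
    (hc : ∀ t, M.ex u (M.pt b t) (M.pt b (ε * k)) ≤ 2 * K2) (hk : κ + K2 + M.D < k)
    {s : ℤ} (h0 : 0 ≤ s) (h1 : s ≤ κ) (hK : 0 ≤ K2) : M.ex u b (M.pt b (ε * s)) ≤ M.D := by
  have hD := M.one_le_D
  have hz : M.ex b (M.pt b (ε * k)) (M.pt b (ε * s)) = 0 := by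
    rcases hε with rfl | rfl
    · have := M.ex_pt (a := b) (i := 0) (t := s) (j := k) h0 (by omega)
      rw [M.pt_zero] at this
      simpa using this
    · have := M.ex_pt (a := b) (i := -k) (t := -s) (j := 0) (by omega) (by omega)
      rw [M.pt_zero, M.ex_comm] at this
      simpa using this
  rcases M.ex_thin' hz.le u with h | h
  · rw [M.ex_comm]; omega
  · have h2 := hc (ε * s)
    have h3 := M.ex_add u (M.pt b (ε * k)) (M.pt b (ε * s))
    have h4 := M.abs_le_d_pt b (ε * k) (ε * s)
    have h5 : |ε * k - ε * s| = k - s := by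
      rcases hε with rfl | rfl
      · rw [abs_of_nonneg (by omega)]; ring
      · rw [abs_of_nonpos (by omega)]; ring
    omega

namespace ChordPath
variable {P : ℕ → Γ} {ε : ℕ → ℤ} {m : ℕ} {κ : ℤ}

lemma dist_pt (C : M.ChordPath P ε m κ) {i : ℕ} (hi : i < m) {s : ℤ} (hs : 0 ≤ s) :
    s ≤ M.d (M.pt (P (i + 1)) (ε i * s)) (P (i + 1)) ∧
    s ≤ M.d (M.pt (P (i + 1)) (-(ε i * s))) (P (i + 1)) := by
  rw [d_pt_zero', d_pt_zero', abs_neg, abs_mul]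
  have := le_T_mul (M := M) hs
  rcases C.sgn i hi with h | h <;> rw [h] <;> simp [abs_of_nonneg hs, this]

lemma loc (C : M.ChordPath P ε m κ) {i : ℕ} (hi : i < m) :
    M.ex (P i) (P (i + 2)) (P (i + 1)) ≤ 2 * M.D := by
  have hD := M.one_le_D
  have hb := C.big
  have h1 := C.left i hi κ (by omega) le_rfl
  have h2 := C.right i hi κ (by omega) le_rfl
  obtain ⟨d1, d2⟩ := C.dist_pt hi (s := κ) (by omega)
  have hz : M.ex (M.pt (P (i + 1)) (-(ε i * κ))) (M.pt (P (i + 1)) (ε i * κ)) (P (i + 1)) = 0 := by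
    rcases C.sgn i hi with h | h <;> rw [h]
    · have := M.ex_pt (a := P (i + 1)) (i := -κ) (t := 0) (j := κ) (by omega) (by omega)
      rw [M.pt_zero] at this
      simpa using this
    · have := M.ex_pt (a := P (i + 1)) (i := -κ) (t := 0) (j := κ) (by omega) (by omega)
      rw [M.pt_zero, M.ex_comm] at this
      simpa using this
  generalize M.pt (P (i + 1)) (-(ε i * κ)) = f at *
  generalize M.pt (P (i + 1)) (ε i * κ) = f' at *
  rcases M.ex_thin' hz.le (P i) with h | h
  · have := M.ex_add (P i) f (P (i + 1))
    rw [M.ex_comm] at h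
    omega
  · rcases M.ex_thin' h (P (i + 2)) with h' | h'
    · omega
    · have := M.ex_add (P (i + 2)) f' (P (i + 1))
      rw [M.ex_comm] at h2
      omega

lemma long (C : M.ChordPath P ε m κ) {i : ℕ} (hi : i < m) :
    κ - M.D ≤ M.d (P i) (P (i + 1)) ∧ κ - M.D ≤ M.d (P (i + 1)) (P (i + 2)) := by
  have hD := M.one_le_D
  have hb := C.big
  have h1 := C.left i hi κ (by omega) le_rfl
  have h2 := C.right i hi κ (by omega) le_rfl
  obtain ⟨d1, d2⟩ := C.dist_pt hi (s := κ) (by omega)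
  have n1 := M.nonneg (P i) (M.pt (P (i + 1)) (-(ε i * κ)))
  have n2 := M.nonneg (M.pt (P (i + 1)) (ε i * κ)) (P (i + 2))
  have s1 := M.symm (M.pt (P (i + 1)) (ε i * κ)) (P (i + 1))
  simp only [Hyp.ex] at h1 h2
  constructor <;> omega

lemma chain (C : M.ChordPath P ε m κ) : M.IsChain P m := by
  constructor
  · intro i hi; exact C.loc hi
  · intro i hi
    have h1 := (C.long (i := i) (by omega)).2
    have := C.big
    omega

lemma trunc (C : M.ChordPath P ε m κ) {k : ℕ} (hk : k ≤ m) : M.ChordPath P ε k κ :=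
  ⟨fun i hi => C.sgn i (by omega), fun i hi => C.left i (by omega),
    fun i hi => C.right i (by omega), C.big⟩

lemma pos (C : M.ChordPath P ε m κ) (hm : 0 < m) : P 0 ≠ P (m + 1) := by
  intro he
  have h1 := C.chain.mid (a := 0) (b := 1) (c := m + 1) (by omega) (by omega) le_rfl
  have h2 := (C.long (i := 0) hm).1
  have := C.big
  have := M.one_le_D
  rw [← he, M.ex_same] at h1
  simp only [zero_add] at h2
  omega

lemma chord (C : M.ChordPath P ε m κ) {i : ℕ} (hi : i < m) {s : ℤ} (h1 : -κ ≤ s) (h2 : s ≤ κ) :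
    M.ex (P 0) (P (m + 1)) (M.pt (P (i + 1)) (ε i * s)) ≤ 8 * M.D := by
  rcases le_total 0 s with h | h
  · have := C.chain.side (i := i + 1) (by omega) (C.right i hi s h h2)
    omega
  · have := C.left i hi (-s) (by omega) (by omega)
    have := C.chain.side (i := i) (by omega) this
    rw [mul_neg, neg_neg] at this
    omega

lemma chord' (C : M.ChordPath P ε m κ) {i : ℕ} (hi : i < m) {s : ℤ} (h1 : -κ ≤ s) (h2 : s ≤ κ) :
    M.ex (P 0) (P (m + 1)) (M.pt (P (i + 1)) s) ≤ 8 * M.D := by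
  rcases C.sgn i hi with h | h
  · have := C.chord hi h1 h2
    rw [h, one_mul] at this
    exact this
  · have := C.chord hi (s := -s) (by omega) (by omega)
    rw [h] at this
    simpa using this

lemma near (C : M.ChordPath P ε m κ) {i : ℕ} (hi : i < m) {f : Γ} {e : ℤ}
    (hf : M.ex (P 0) (P (m + 1)) f ≤ e) (hd : 2 * M.d (P (i + 1)) f + e + 10 * M.D < 2 * κ) :
    M.ex (M.pt (P (i + 1)) (-κ)) (M.pt (P (i + 1)) κ) f ≤ e + 2 * M.D := by
  have hD := M.one_le_D
  have hb := C.big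
  obtain ⟨d1, d2⟩ := C.dist_pt hi (s := κ) (by omega)
  have c1 : M.ex (P 0) (P (i + 1)) (M.pt (P (i + 1)) (-(ε i * κ))) ≤ 8 * M.D := by
    have := (C.trunc (k := i) (by omega)).chain.side (i := i) le_rfl (C.left i hi κ (by omega) le_rfl)
    omega
  have c2 : M.ex (P (m + 1)) (P (i + 1)) (M.pt (P (i + 1)) (ε i * κ)) ≤ 8 * M.D := by
    have := (C.chain.shift (i + 1)).side (i := 0) (by omega) (e := M.pt (P (i + 1)) (ε i * κ)) (η := M.D)
      (C.right i hi κ (by omega) le_rfl)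
    have e1 : i + 1 + (m - (i + 1) + 1) = m + 1 := by omega
    simp only [e1, add_zero] at this
    rw [M.ex_comm]
    omega
  have key : M.ex (M.pt (P (i + 1)) (-(ε i * κ))) (M.pt (P (i + 1)) (ε i * κ)) f ≤ e + 2 * M.D := by
    generalize M.pt (P (i + 1)) (-(ε i * κ)) = A at *
    generalize M.pt (P (i + 1)) (ε i * κ) = B at *
    have s1 := M.symm f (P (i + 1))
    rcases M.ex_thin' hf A with h | h
    · have h1 := M.ex_move (P 0) A f (P (i + 1))
      have h2 := M.ex_add (P 0) A (P (i + 1))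
      omega
    · rcases M.ex_thin' h B with h' | h'
      · omega
      · have h1 := M.ex_move (P (m + 1)) B f (P (i + 1))
        have h2 := M.ex_add (P (m + 1)) B (P (i + 1))
        rw [M.ex_comm] at h'
        omega
  rcases C.sgn i hi with h | h
  · rw [h, one_mul] at key; exact key
  · rw [h, M.ex_comm] at key
    simpa using key

lemma two_sides (C : M.ChordPath P ε m κ) {l l' : ℕ} (hl : l < l') (hl' : l' ≤ m) {f : Γ} {e e' : ℤ}
    (h1 : M.ex (P l) (P (l + 1)) f ≤ e) (h2 : M.ex (P l') (P (l' + 1)) f ≤ e') :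
    2 * M.d f (P (l + 1)) ≤ e + e' + 8 * M.D := by
  have h3 := M.ex_sum (P l) (P (l + 1)) (P (l' + 1)) f
  have h4 := C.chain.mid (a := l) (b := l + 1) (c := l' + 1) (by omega) (by omega) (by omega)
  have h5 := C.chain.mid (a := l + 1) (b := l') (c := l' + 1) (by omega) (by omega) (by omega)
  have h6 := M.ex_right (P (l + 1)) (P l') (P (l' + 1)) f
  omega

lemma two_sides' (C : M.ChordPath P ε m κ) {l l' : ℕ} (hl : l < l') (hl' : l' ≤ m) {f : Γ} {e e' : ℤ}
    (h1 : M.ex (P l) (P (l + 1)) f ≤ e) (h2 : M.ex (P l') (P (l' + 1)) f ≤ e') :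
    2 * M.d f (P l') ≤ e + e' + 8 * M.D := by
  have h3 := M.ex_sum (P l) (P l') (P (l' + 1)) f
  have h4 := C.chain.mid (a := l) (b := l') (c := l' + 1) (by omega) (by omega) (by omega)
  have h5 := C.chain.mid (a := l) (b := l + 1) (c := l') (by omega) (by omega) (by omega)
  have h6 := M.ex_left (P l) (P (l + 1)) (P l') f
  omega

end ChordPath
end Setup


namespace Setup2
variable {Γ : Type*} [Group Γ] (M : Setup2 Γ)

/-- Proper arm data. -/
def PArm (n r' : ℤ) (H : Subgroup Γ) (p h : Γ) : Prop :=
  h ∈ H ∧ M.d h p < r' ∧ M.tau p n ∉ H ∧ (∀ t, M.d h p ≤ M.d h (M.pt p t))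

/-- The next windmill. -/
def nextH (n r' : ℤ) (H : Subgroup Γ) : Subgroup Γ :=
  Subgroup.closure ((H : Set Γ) ∪ {x | ∃ p h, M.PArm n r' H p h ∧ x = M.tau p n})

variable {M}
variable {n r' : ℤ} {H : Subgroup Γ}

lemma le_nextH : H ≤ M.nextH n r' H := fun _ hx => Subgroup.subset_closure (Or.inl hx)

lemma PArm.mem {p h : Γ} (A : M.PArm n r' H p h) : M.tau p n ∈ M.nextH n r' H :=
  Subgroup.subset_closure (Or.inr ⟨p, h, A, rfl⟩)

lemma PArm.smul {p h x : Γ} (A : M.PArm n r' H p h) (hx : x ∈ H) : M.PArm n r' H (x * p) (x * h) := by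
  obtain ⟨h1, h2, h3, h4⟩ := A
  refine ⟨H.mul_mem hx h1, by rwa [M.inv], by rwa [tau_mem_mul hx], ?_⟩
  intro t
  rw [← M.mul_pt, M.inv, M.inv]
  exact h4 t

/-- Entries: center, base point in `H`, exponent. -/
structure NF (M : Setup2 Γ) (n r' : ℤ) (H : Subgroup Γ) (l : List (Γ × Γ × ℤ)) : Prop where
  arm : ∀ x ∈ l, M.PArm n r' H x.1 x.2.1 ∧ x.2.2 ≠ 0
  sim : l.IsChain (fun x y => ¬ M.Sim M.n0 x.1 y.1)

/-- The value of a list of entries. -/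
def val (M : Setup2 Γ) (n : ℤ) (l : List (Γ × Γ × ℤ)) : Γ :=
  (l.map (fun x => M.tau x.1 (n * x.2.2))).prod

lemma val_nil : M.val n [] = 1 := rfl
lemma val_cons (x : Γ × Γ × ℤ) (l) : M.val n (x :: l) = M.tau x.1 (n * x.2.2) * M.val n l := by
  simp [val]

/-- Conjugating the entries. -/
def lconj (x : Γ) (l : List (Γ × Γ × ℤ)) : List (Γ × Γ × ℤ) := l.map (fun y => (x * y.1, x * y.2.1, y.2.2))

lemma val_lconj (x : Γ) (l) : M.val n (lconj x l) = x * M.val n l * x⁻¹ := by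
  induction l with
  | nil => simp [lconj, val]
  | cons y l ih =>
    have : lconj x (y :: l) = (x * y.1, x * y.2.1, y.2.2) :: lconj x l := rfl
    rw [this, val_cons, val_cons, ih, M.tau_conj]
    group

lemma sim_mul_iff {n0 : ℤ} {x a b : Γ} : M.Sim n0 (x * a) (x * b) ↔ M.Sim n0 a b := by
  constructor
  · intro h
    have := h.mul x⁻¹
    simpa using this
  · intro h; exact h.mul x

lemma NF.conj {l} (h : M.NF n r' H l) {x : Γ} (hx : x ∈ H) : M.NF n r' H (lconj x l) := by
  constructor
  · intro y hy
    obtain ⟨z, hz, rfl⟩ := List.mem_map.1 hy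
    exact ⟨(h.arm z hz).1.smul hx, (h.arm z hz).2⟩
  · unfold lconj
    rw [List.isChain_map]
    refine h.sim.imp ?_
    intro a b hab
    simpa [sim_mul_iff] using hab

lemma NF.tail {x l} (h : M.NF n r' H (x :: l)) : M.NF n r' H l :=
  ⟨fun y hy => h.arm y (List.mem_cons_of_mem _ hy), h.sim.tail⟩

lemma NF.left_mul (hn : M.n0 ∣ n) {l} (h : M.NF n r' H l) {p q : Γ} (A : M.PArm n r' H p q) {e : ℤ}
    (he : e ≠ 0) : ∃ l', M.NF n r' H l' ∧ M.val n l' = M.tau p (n * e) * M.val n l := by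
  rcases l with _ | ⟨x, l⟩
  · exact ⟨[(p, q, e)], ⟨by simpa using ⟨A, he⟩, by simp⟩, by simp [val]⟩
  by_cases hs : M.Sim M.n0 p x.1
  · have h2 : ∃ e', M.tau p (n * e) = M.tau x.1 (n * e') := by
      rcases hs.dvd hn with h3 | h3
      · exact ⟨e, by rw [← M.tau_zpow, h3, M.tau_zpow]⟩
      · exact ⟨-e, by rw [← M.tau_zpow, h3, M.tau_zpow]; congr 1; ring⟩
    obtain ⟨e', he'⟩ := h2
    by_cases h0 : e' + x.2.2 = 0
    · refine ⟨l, h.tail, ?_⟩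
      rw [val_cons, he', ← mul_assoc, ← M.tau_add, ← mul_add, h0]
      simp [M.tau_zero]
    · refine ⟨(x.1, x.2.1, e' + x.2.2) :: l, ⟨?_, ?_⟩, ?_⟩
      · intro y hy
        rcases List.mem_cons.1 hy with rfl | hy
        · exact ⟨(h.arm x (by simp)).1, h0⟩
        · exact h.arm y (by simp [hy])
      · have := h.sim
        rw [List.isChain_cons] at this ⊢
        exact this
      · rw [val_cons, val_cons, he', ← mul_assoc, ← M.tau_add, ← mul_add]
  · refine ⟨(p, q, e) :: x :: l, ⟨?_, ?_⟩, ?_⟩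
    · intro y hy
      rcases List.mem_cons.1 hy with rfl | hy
      · exact ⟨A, he⟩
      · exact h.arm y hy
    · rw [List.isChain_cons_cons]
      exact ⟨hs, h.sim⟩
    · rw [val_cons]

lemma nextH_nf (hn : M.n0 ∣ n) {w : Γ} (hw : w ∈ M.nextH n r' H) :
    ∃ l v, M.NF n r' H l ∧ v ∈ H ∧ w = M.val n l * v := by
  unfold nextH at hw
  induction hw using Subgroup.closure_induction_left with
  | one => exact ⟨[], 1, ⟨by simp, by simp⟩, H.one_mem, by simp [val]⟩
  | mul_left x hx y hy ih =>
    obtain ⟨l, v, hl, hv, rfl⟩ := ih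
    rcases hx with hx | ⟨p, q, A, rfl⟩
    · exact ⟨lconj x l, x * v, hl.conj hx, H.mul_mem hx hv, by rw [val_lconj]; group⟩
    · obtain ⟨l', h1, h2⟩ := hl.left_mul hn A (e := 1) (by simp)
      exact ⟨l', v, h1, hv, by rw [h2, mul_one, mul_assoc]⟩
  | inv_mul_cancel x hx y hy ih =>
    obtain ⟨l, v, hl, hv, rfl⟩ := ih
    rcases hx with hx | ⟨p, q, A, rfl⟩
    · exact ⟨lconj x⁻¹ l, x⁻¹ * v, hl.conj (H.inv_mem hx), H.mul_mem (H.inv_mem hx) hv,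
        by rw [val_lconj]; group⟩
    · obtain ⟨l', h1, h2⟩ := hl.left_mul hn A (e := -1) (by simp)
      exact ⟨l', v, h1, hv, by rw [h2, mul_neg, mul_one, M.tau_neg, mul_assoc]⟩

lemma val_mem {l} (h : M.NF n r' H l) : M.val n l ∈ M.nextH n r' H := by
  induction l with
  | nil => rw [val_nil]; exact one_mem _
  | cons x l ih =>
    rw [val_cons, ← M.tau_zpow]
    exact mul_mem (zpow_mem (h.arm x (by simp)).1.mem _) (ih h.tail)

lemma NF.take {l} (h : M.NF n r' H l) (i : ℕ) : M.NF n r' H (l.take i) :=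
  ⟨fun y hy => h.arm y (List.mem_of_mem_take hy), h.sim.take i⟩

lemma val_take_succ {l : List (Γ × Γ × ℤ)} {i : ℕ} (hi : i < l.length) :
    M.val n (l.take (i + 1)) = M.val n (l.take i) * M.tau l[i].1 (n * l[i].2.2) := by
  unfold val
  rw [List.take_add_one]
  simp [hi]

end Setup2


namespace Setup2
variable {Γ : Type*} [Group Γ] {M : Setup2 Γ}

/-- The path data attached to an element of the next windmill. -/
structure WPath (M : Setup2 Γ) (n r' κ : ℤ) (H : Subgroup Γ) (w : Γ) where
  m : ℕ
  P : ℕ → Γ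
  W : ℕ → Γ
  pl : ℕ → Γ
  hl : ℕ → Γ
  pr : ℕ → Γ
  hr : ℕ → Γ
  ε : ℕ → ℤ
  P0 : P 0 = 1
  Pend : P (m + 1) = w
  cp : M.ChordPath P ε m κ
  Wmem : ∀ i, i ≤ m → W i ∈ M.nextH n r' H
  armL : ∀ i, i ≤ m → M.Arm n r' H ((W i)⁻¹ * P i) ((W i)⁻¹ * pl i) ((W i)⁻¹ * hl i)
  armR : ∀ i, i ≤ m → M.Arm n r' H ((W i)⁻¹ * P (i + 1)) ((W i)⁻¹ * pr i) ((W i)⁻¹ * hr i)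
  axL : ∀ i, i < m → ∃ k, pl (i + 1) = M.pt (P (i + 1)) k
  axR : ∀ i, i < m → ∃ k, pr i = M.pt (P (i + 1)) k
  L0 : P 0 = pl 0 ∧ pl 0 = hl 0
  Rm : P (m + 1) = pr m ∧ pr m = hr m
  sim : ∀ i, i ≤ m → P i = pl i ∨ P (i + 1) = pr i ∨ ¬ M.Sim M.n0 (pl i) (pr i)
  mem : ∀ i, i < m → M.tau (P (i + 1)) n ∈ M.nextH n r' H
  zero : m = 0 → w ∈ H

lemma PArm.arm {n r' : ℤ} {H : Subgroup Γ} {p h : Γ} (A : M.PArm n r' H p h) (l : ℤ) :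
    M.Arm n r' H (M.pt p l) p h := ⟨A.1, A.2.1, Or.inr ⟨A.2.2.1, A.2.2.2, l, rfl⟩⟩

lemma arm_triv {n r' : ℤ} {H : Subgroup Γ} (hr : 0 < r') {h : Γ} (hh : h ∈ H) :
    M.Arm n r' H h h h := ⟨hh, by rw [M.self]; exact hr, Or.inl ⟨rfl, rfl⟩⟩

lemma wpath {n n' K cT K3 r s κ : ℤ} {H : Subgroup Γ} (I : M.Inv n K cT K3 r H) (hK : 0 ≤ K)
    (hs : 0 ≤ s) (hrs : 0 < r + s) (hn : M.n0 ∣ n) (hn' : n = 2 * n') (hn0 : 0 < n')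
    (hκ : 5 * M.D < κ) (hκ' : κ + M.cK2 K s + M.D < n') {w : Γ} (hw : w ∈ M.nextH n (r + s) H) :
    Nonempty (M.WPath n (r + s) κ H w) := by
  obtain ⟨l, v, hl, hv, rfl⟩ := nextH_nf hn hw
  have hD := M.one_le_D
  have hK2 : 0 ≤ M.cK2 K s := by
    unfold cK2 cB
    have := M.th_nonneg (6 * M.D)
    have := M.one_le_T
    positivity
  set m := l.length with hm
  set e : ℕ → Γ × Γ × ℤ := fun i => l.getD i (1, 1, 0) with he
  have hea : ∀ i, i < m → M.PArm n (r + s) H (e i).1 (e i).2.1 := by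
    intro i hi
    have : e i = l[i] := by simp [he, hm ▸ hi]
    rw [this]; exact (hl.arm _ (List.getElem_mem _)).1
  have hek : ∀ i, i < m → (e i).2.2 ≠ 0 := by
    intro i hi
    have : e i = l[i] := by simp [he, hm ▸ hi]
    rw [this]; exact (hl.arm _ (List.getElem_mem _)).2
  have hes : ∀ i, i + 1 < m → ¬ M.Sim M.n0 (e i).1 (e (i + 1)).1 := by
    intro i hi
    have h1 : e i = l[i]'(by omega) := by simp [he, (by omega : i < l.length)]
    have h2 : e (i + 1) = l[i + 1] := by simp [he, hm ▸ hi]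
    rw [h1, h2]; exact List.isChain_iff_getElem.1 hl.sim i hi
  set W : ℕ → Γ := fun i => M.val n (l.take i) with hW
  have hWs : ∀ i, i < m → W (i + 1) = W i * M.tau (e i).1 (n * (e i).2.2) := by
    intro i hi
    have h1 : e i = l[i] := by simp [he, hm ▸ hi]
    rw [h1]; exact val_take_succ hi
  have hWm : ∀ i, W i ∈ M.nextH n (r + s) H := fun i => val_mem (hl.take i)
  have hW0 : W 0 = 1 := by simp [hW, val]
  have hWl : W m = M.val n l := by simp [hW, hm]
  have hvv : W m * v = M.val n l * v := by rw [hWl]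
  clear_value e W m
  rw [← hvv]
  clear hvv hWl hw hl he hm hW l
  set k : ℕ → ℤ := fun i => n' * (e i).2.2 with hk
  set P : ℕ → Γ := fun i => match i with
    | 0 => 1
    | i + 1 => if i < m then W i * M.pt (e i).1 (k i) else W m * v with hP
  set pr : ℕ → Γ := fun i => if i < m then W i * (e i).1 else W m * v with hpr
  set hr : ℕ → Γ := fun i => if i < m then W i * (e i).2.1 else W m * v with hhr
  set pl : ℕ → Γ := fun i => match i with
    | 0 => 1
    | i + 1 => W (i + 1) * (e i).1 with hpl
  set hl : ℕ → Γ := fun i => match i with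
    | 0 => 1
    | i + 1 => W (i + 1) * (e i).2.1 with hhl
  have hPs : ∀ i, i < m → P (i + 1) = W i * M.pt (e i).1 (k i) := fun i hi => by simp [hP, hi]
  have hPs' : ∀ i, i < m → P (i + 1) = W (i + 1) * M.pt (e i).1 (- k i) := fun i hi => by
    rw [hPs i hi, hWs i hi, mul_assoc, M.tau_mul_pt]
    congr 2
    simp only [hk, hn']; ring
  have hPe : P (m + 1) = W m * v := by simp [hP]
  have hprs : ∀ i, i < m → pr i = W i * (e i).1 := fun i hi => by simp [hpr, hi]
  have hpre : pr m = W m * v := by simp [hpr]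
  have hhrs : ∀ i, i < m → hr i = W i * (e i).2.1 := fun i hi => by simp [hhr, hi]
  have hhre : hr m = W m * v := by simp [hhr]
  have armL : ∀ i, i ≤ m → M.Arm n (r + s) H ((W i)⁻¹ * P i) ((W i)⁻¹ * pl i) ((W i)⁻¹ * hl i) := by
    intro i hi
    rcases i with _ | i
    · simp only [hP, hpl, hhl, hW0]
      simpa using arm_triv hrs H.one_mem
    · rw [hPs' i (by omega)]
      simp only [hpl, hhl, inv_mul_cancel_left]
      exact (hea i (by omega)).arm _
  have armR : ∀ i, i ≤ m → M.Arm n (r + s) H ((W i)⁻¹ * P (i + 1)) ((W i)⁻¹ * pr i) ((W i)⁻¹ * hr i) := by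
    intro i hi
    rcases Nat.lt_or_ge i m with hi' | hi'
    · rw [hPs i hi', hprs i hi', hhrs i hi']
      simp only [inv_mul_cancel_left]
      exact (hea i (by omega)).arm _
    · obtain rfl : i = m := by omega
      rw [hPe, hpre, hhre]
      simp only [inv_mul_cancel_left]
      exact arm_triv hrs hv
  have hprP : ∀ i, i < m → pr i = M.pt (P (i + 1)) (- k i) := by
    intro i hi
    rw [hprs i hi, hPs i hi, ← M.mul_pt, M.pt_pt, add_neg_cancel, M.pt_zero]
  have hplP : ∀ i, i < m → pl (i + 1) = M.pt (P (i + 1)) (k i) := by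
    intro i hi
    rw [hPs' i hi, ← M.mul_pt, M.pt_pt, neg_add_cancel, M.pt_zero]
  have hε : ∀ i, i < m → ∃ ε : ℤ, (ε = 1 ∨ ε = -1) ∧ k i = ε * |k i| ∧ κ + M.cK2 K s + M.D < |k i| := by
    intro i hi
    have h1 := hek i hi
    have h2 : n' ≤ |k i| := by
      simp only [hk]; rw [abs_mul, abs_of_pos hn0]
      have := Int.one_le_abs h1
      nlinarith
    rcases abs_choice (k i) with h | h
    · exact ⟨1, Or.inl rfl, by omega, by omega⟩
    · exact ⟨-1, Or.inr rfl, by omega, by omega⟩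
  have hε' : ∀ i, ∃ ε : ℤ, i < m → (ε = 1 ∨ ε = -1) ∧ k i = ε * |k i| ∧
      κ + M.cK2 K s + M.D < |k i| := by
    intro i
    by_cases hi : i < m
    · obtain ⟨ε, h⟩ := hε i hi
      exact ⟨ε, fun _ => h⟩
    · exact ⟨0, fun h => absurd h hi⟩
  choose ε hε using hε'
  have sim : ∀ i, i ≤ m → P i = pl i ∨ P (i + 1) = pr i ∨ ¬ M.Sim M.n0 (pl i) (pr i) := by
    intro i hi
    rcases Nat.lt_or_ge i m with hi' | hi'
    · rcases i with _ | i
      · left; rfl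
      · right; right
        rw [hprs _ hi']
        simp only [hpl]
        rw [sim_mul_iff]
        exact hes i hi'
    · obtain rfl : i = m := by omega
      right; left; rw [hPe, hpre]
  refine ⟨⟨m, P, W, pl, hl, pr, hr, ε, rfl, hPe, ⟨fun i hi => (hε i hi).1, ?_, ?_, hκ⟩, fun i _ => hWm i,
    armL, armR, fun i hi => ⟨_, hplP i hi⟩, fun i hi => ⟨_, hprP i hi⟩, ⟨rfl, rfl⟩,
    ⟨by rw [hPe, hpre], by rw [hpre, hhre]⟩, sim, ?_, ?_⟩⟩
  · intro i hi t ht0 ht1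
    obtain ⟨h1, h2, h3⟩ := hε i hi
    have := M.half_chord (u := P i) (b := P (i + 1)) (ε := - ε i) (k := |k i|) (κ := κ)
      (K2 := M.cK2 K s) (by omega) (by
        intro t
        have hc := corner I hK hs (armL i hi.le) (hea i hi).1 (hea i hi).2.2.1 (hea i hi).2.2.2
          (by
            rcases i with _ | i
            · left; rfl
            · right
              simp only [hpl, inv_mul_cancel_left]
              exact hes i hi) (k i + t)
        rw [← M.ex_smul (W i), mul_inv_cancel_left, M.mul_pt, ← M.pt_pt, ← M.mul_pt, ← hPs i hi,
          ← hprs i hi, hprP i hi] at hc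
        rwa [neg_mul, ← h2]) h3 ht0 ht1 hK2
    rwa [neg_mul] at this
  · intro i hi t ht0 ht1
    obtain ⟨h1, h2, h3⟩ := hε i hi
    have := M.half_chord (u := P (i + 2)) (b := P (i + 1)) (ε := ε i) (k := |k i|) (κ := κ)
      (K2 := M.cK2 K s) h1 (by
        intro t
        have hc := corner I hK hs (armR (i + 1) (by omega)) (hea i hi).1 (hea i hi).2.2.1 (hea i hi).2.2.2
          (by
            rcases Nat.lt_or_ge (i + 1) m with hi' | hi'
            · right
              rw [hprs _ hi']
              simp only [inv_mul_cancel_left]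
              exact fun h => hes i hi' h.symm
            · left
              obtain rfl : m = i + 1 := by omega
              rw [hPe, hpre]) (- k i + t)
        rw [← M.ex_smul (W (i + 1)), mul_inv_cancel_left, M.mul_pt, ← M.pt_pt, ← M.mul_pt, ← hPs' i hi] at hc
        have h4 : W (i + 1) * (e i).1 = pl (i + 1) := rfl
        rw [h4, hplP i hi] at hc
        rwa [← h2]) h3 ht0 ht1 hK2
    rwa [M.ex_comm]
  · intro i hi
    rw [hPs i hi, M.mul_pt, M.tau_pt, M.tau_conj]
    exact mul_mem (mul_mem (hWm i) (hea i hi).mem) (inv_mem (hWm i))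
  · rintro h0
    rw [h0, hW0, one_mul]; exact hv

end Setup2


namespace Setup2
variable {Γ : Type*} [Group Γ] {M : Setup2 Γ}

lemma order_geo1 {u v q1 q2 : Γ} (h1 : M.ex u v q1 = 0) (h2 : M.ex u v q2 = 0)
    (h : M.d u q1 ≤ M.d u q2) : ∃ z, M.ex q1 v z = 0 ∧ M.d q2 z ≤ M.D := by
  obtain ⟨z, hz, hz'⟩ := M.geo q1 v (M.d u q2 - M.d u q1) (by omega) (by
    have := M.nonneg q2 v
    simp only [Hyp.ex] at *; omega)
  have h3 : M.ex q1 v z = 0 := by simp only [Hyp.ex] at *; omega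
  have h4 : M.ex u v z ≤ 0 := by
    have := M.ex_right u q1 v z; omega
  have h5 : M.d u z = M.d u q2 := by
    have h6 := M.tri u q1 z
    have := M.tri u z v
    simp only [Hyp.ex] at *; omega
  refine ⟨z, h3, ?_⟩
  have := M.close h4 h2.le (by omega)
  omega

lemma order_geo {u v f1 f2 : Γ} {E : ℤ} (h1 : M.ex u v f1 ≤ E) (h2 : M.ex u v f2 ≤ E) :
    (∃ q1 q2, M.ex u v q1 = 0 ∧ M.ex q1 v q2 = 0 ∧ M.d f1 q1 ≤ E + 2 * M.D ∧ M.d f2 q2 ≤ E + 2 * M.D) ∨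
    (∃ q1 q2, M.ex v u q1 = 0 ∧ M.ex q1 u q2 = 0 ∧ M.d f1 q1 ≤ E + 2 * M.D ∧ M.d f2 q2 ≤ E + 2 * M.D) := by
  have hD := M.one_le_D
  obtain ⟨q1, a1, b1⟩ := M.geo_point h1
  obtain ⟨q2, a2, b2⟩ := M.geo_point h2
  rcases le_total (M.d u q1) (M.d u q2) with h | h
  · left
    obtain ⟨z, hz, hz'⟩ := order_geo1 a1 a2 h
    refine ⟨q1, z, a1, hz, by omega, ?_⟩
    have := M.tri f2 q2 z
    omega
  · right
    rw [M.ex_comm] at a1 a2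
    obtain ⟨z, hz, hz'⟩ := order_geo1 a1 a2 (by
      have := M.symm q1 u; have := M.symm v q1
      have := M.symm q2 u; have := M.symm v q2
      simp only [Hyp.ex] at *; omega)
    refine ⟨q1, z, a1, hz, by omega, ?_⟩
    have := M.tri f2 q2 z
    omega

lemma Inv.j2E {n K cT K3 r : ℤ} {H : Subgroup Γ} (I : M.Inv n K cT K3 r H) {u v : Γ} (hu : u ∈ H)
    (hv : v ∈ H) {f1 f2 : Γ} {E : ℤ} (h1 : M.ex u v f1 ≤ E) (h2 : M.ex u v f2 ≤ E)
    (hf : ∀ y, M.ex f1 f2 y ≤ 4 * E + 8 * M.D → ∀ h ∈ H, r + cT ≤ M.d h y) :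
    ∃ a i j, M.tau a n ∈ H ∧ M.d f1 (M.pt a i) ≤ E + 6 * M.D ∧ M.d f2 (M.pt a j) ≤ E + 6 * M.D := by
  have main : ∀ u v, u ∈ H → v ∈ H → (∃ q1 q2, M.ex u v q1 = 0 ∧ M.ex q1 v q2 = 0 ∧
      M.d f1 q1 ≤ E + 2 * M.D ∧ M.d f2 q2 ≤ E + 2 * M.D) →
      ∃ a i j, M.tau a n ∈ H ∧ M.d f1 (M.pt a i) ≤ E + 6 * M.D ∧ M.d f2 (M.pt a j) ≤ E + 6 * M.D := by
    rintro u v hu hv ⟨q1, q2, a1, a2, b1, b2⟩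
    obtain ⟨a, i, j, ha, hi, hj⟩ := I.j2 u hu v hv q1 q2 a1 a2 (by
      intro y hy h hh
      refine hf y ?_ h hh
      have c1 := M.ex_start q1 f1 q2 y
      have c2 := M.ex_end f1 q2 f2 y
      rw [M.symm q1 f1] at c1
      rw [M.symm q2 f2] at c2
      omega)
    refine ⟨a, i, j, ha, ?_, ?_⟩
    · have := M.tri f1 q1 (M.pt a i); omega
    · have := M.tri f2 q2 (M.pt a j); omega
  rcases order_geo h1 h2 with h | h
  · exact main u v hu hv h
  · exact main v u hv hu h

lemma nextH_j0 {n K cT K3 r s : ℤ} {H : Subgroup Γ} (I : M.Inv n K cT K3 r H) (a : Γ)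
    (ha : M.d 1 a < r + s) : M.tau a n ∈ M.nextH n (r + s) H := by
  by_cases h : M.tau a n ∈ H
  · exact le_nextH h
  classical
  have hex : ∃ k : ℕ, ∃ t, M.d 1 (M.pt a t) = k :=
    ⟨(M.d 1 (M.pt a 0)).toNat, 0, by rw [Int.toNat_of_nonneg (M.nonneg _ _)]⟩
  obtain ⟨t, ht⟩ := Nat.find_spec hex
  have hmin : ∀ t', M.d 1 (M.pt a t) ≤ M.d 1 (M.pt a t') := by
    intro t'
    rw [ht]
    have := Nat.find_min' hex (m := (M.d 1 (M.pt a t')).toNat)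
      ⟨t', by rw [Int.toNat_of_nonneg (M.nonneg _ _)]⟩
    have := M.nonneg 1 (M.pt a t')
    omega
  have A : M.PArm n (r + s) H (M.pt a t) 1 := by
    refine ⟨H.one_mem, ?_, by rwa [M.tau_pt], ?_⟩
    · have := hmin 0
      rw [M.pt_zero] at this
      omega
    · intro t'; rw [M.pt_pt]; exact hmin _
  have := A.mem
  rwa [M.tau_pt] at this

lemma nextH_far {n K cT K3 r s : ℤ} {H : Subgroup Γ} (I : M.Inv n K cT K3 r H) {a : Γ}
    (ha : M.tau a n ∉ M.nextH n (r + s) H) {h : Γ} (hh : h ∈ M.nextH n (r + s) H) (k : ℤ) :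
    r + s ≤ M.d h (M.pt a k) := by
  by_contra hlt
  push Not at hlt
  have := nextH_j0 I (s := s) (h⁻¹ * M.pt a k) (by rw [M.d_inv_left]; exact hlt)
  rw [M.mul_pt, M.tau_pt, tau_mem_mul (inv_mem hh)] at this
  exact ha this

/-- The overlap constant. -/
noncomputable def cK (M : Setup2 Γ) : ℤ :=
  2 * (M.th (22 * M.D) + 20 * M.D) + 2 * (61 * M.D) + M.th (26 * M.D) + 4 + M.th (9 * M.D)

lemma cK_nonneg : 0 ≤ M.cK := by
  have := M.one_le_D
  have := M.th_nonneg (22 * M.D)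
  have := M.th_nonneg (26 * M.D)
  have := M.th_nonneg (9 * M.D)
  unfold cK; omega

lemma nextH_j1 {n cT K3 r s κ : ℤ} {H : Subgroup Γ} (I : M.Inv n M.cK cT K3 r H)
    (hs : cT + 90 * M.D ≤ s) (hn : M.n0 ∣ n)
    (hκ : 59 * M.D + 2 * (M.T * (M.cK + 1)) < 2 * κ) {w : Γ} (Q : M.WPath n (r + s) κ H w)
    {a : Γ} (ha : M.tau a n ∉ M.nextH n (r + s) H) {i j : ℤ} (hij : i ≤ j)
    (hi : M.ex 1 w (M.pt a i) ≤ 2 * M.D) (hj : M.ex 1 w (M.pt a j) ≤ 2 * M.D) : j - i ≤ M.cK := by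
  have hD := M.one_le_D
  have hK := cK_nonneg (M := M)
  have t1 := M.th_nonneg (22 * M.D)
  have t2 := M.th_nonneg (26 * M.D)
  have t3 := M.th_nonneg (9 * M.D)
  have hT := M.one_le_T
  have hTD := M.T_le_D
  have hP0 := Q.P0
  have hPe := Q.Pend
  by_contra hlt
  push Not at hlt
  have all : ∀ t, i ≤ t → t ≤ j → M.ex (Q.P 0) (Q.P (Q.m + 1)) (M.pt a t) ≤ 5 * M.D := by
    intro t h1 h2
    rw [hP0, hPe]
    have := M.convex hi hj (by omega) (by omega) (M.ex_pt (a := a) h1 h2).le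
    omega
  -- no point is near a corner
  have nocorner : ∀ t, i ≤ t → t ≤ i + M.cK + 1 → ∀ l, l < Q.m → 22 * M.D < M.d (Q.P (l + 1)) (M.pt a t) := by
    intro t h1 h2 l hl
    by_contra hc
    push Not at hc
    have key : ∀ t', i ≤ t' → t' ≤ i + M.cK + 1 →
        M.ex (M.pt (Q.P (l + 1)) (-κ)) (M.pt (Q.P (l + 1)) κ) (M.pt a t') ≤ 7 * M.D := by
      intro t' h3 h4
      have e1 := M.tri (Q.P (l + 1)) (M.pt a t) (M.pt a t')
      have e2 := M.d_pt a t t'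
      have e3 : |t - t'| ≤ M.cK + 1 := abs_le.2 ⟨by omega, by omega⟩
      have e4 := mul_le_mul_of_nonneg_left e3 (by omega : 0 ≤ M.T)
      have := Q.cp.near hl (all t' h3 (by omega)) (by omega)
      omega
    have hns : ¬ M.Sim M.n0 a (Q.P (l + 1)) := fun h => ha (mem_of_sim hn h.symm (Q.mem l hl))
    have := M.overlap hns (key i le_rfl (by omega)) (key (i + M.cK + 1) (by omega) le_rfl)
    have e : |i + M.cK + 1 - i| = M.cK + 1 := by rw [abs_of_nonneg (by omega)]; ring
    have e5 : 7 * M.D + 2 * M.D = 9 * M.D := by ring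
    rw [e, e5] at this
    unfold cK at this
    omega
  have loc : ∀ t, i ≤ t → t ≤ i + M.cK + 1 → ∃ l, l ≤ Q.m ∧
      M.ex (Q.P l) (Q.P (l + 1)) (M.pt a t) ≤ 17 * M.D := by
    intro t h1 h2
    obtain ⟨l, h3, h4⟩ := Q.cp.chain.locate (by omega) (all t h1 (by omega))
    exact ⟨l, h3, by omega⟩
  obtain ⟨l, hl, hl0⟩ := loc i le_rfl (by omega)
  have same : ∀ k : ℕ, (k : ℤ) ≤ M.cK + 1 → M.ex (Q.P l) (Q.P (l + 1)) (M.pt a (i + k)) ≤ 17 * M.D := by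
    intro k
    induction k with
    | zero => intro _; simpa using hl0
    | succ k ih =>
      intro hk
      push_cast at hk ⊢
      have ih' := ih (by omega)
      obtain ⟨l', hl', h1⟩ := loc (i + (k + 1)) (by omega) (by omega)
      have mv := M.ex_move (Q.P l') (Q.P (l' + 1)) (M.pt a (i + (k + 1))) (M.pt a (i + k))
      have ds := M.d_pt_succ a (i + k)
      rw [M.symm, add_assoc] at ds
      have nc := nocorner (i + k) (by omega) (by omega)
      have sy := fun x => M.symm x (M.pt a (i + k))
      rcases lt_trichotomy l l' with h | h | h
      · have := Q.cp.two_sides h hl' ih' (e' := 19 * M.D) (by omega)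
        have := nc l (by omega)
        have := sy (Q.P (l + 1))
        omega
      · rw [h]; exact h1
      · have := Q.cp.two_sides h hl (e := 19 * M.D) (by omega) ih'
        have := nc l' (by omega)
        have := sy (Q.P (l' + 1))
        omega
  have same' : ∀ t, i ≤ t → t ≤ i + M.cK + 1 → M.ex (Q.P l) (Q.P (l + 1)) (M.pt a t) ≤ 17 * M.D := by
    intro t h1 h2
    have := same (t - i).toNat (by omega)
    have e : i + ((t - i).toNat : ℤ) = t := by omega
    rwa [e] at this
  have hW := Q.Wmem l hl
  have ha' : M.tau ((Q.W l)⁻¹ * a) n ∉ M.nextH n (r + s) H := by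
    rwa [tau_mem_mul (inv_mem hW)]
  have armOv : ∀ z p h, M.Arm n (r + s) H ((Q.W l)⁻¹ * z) ((Q.W l)⁻¹ * p) ((Q.W l)⁻¹ * h) →
      ∀ x y, M.ex p z (M.pt a x) ≤ 20 * M.D → M.ex p z (M.pt a y) ≤ 20 * M.D →
      |x - y| ≤ M.th (22 * M.D) + 20 * M.D := by
    intro z p h A x y hx hy
    rw [← M.ex_smul (Q.W l)⁻¹, M.mul_pt] at hx hy
    have e : 20 * M.D + 2 * M.D = 22 * M.D := by ring
    rw [← e]
    refine A.overlap ?_ hx hy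
    rcases A.2.2 with h1 | h1
    · exact Or.inl h1.1
    · right
      intro hsim
      have : M.PArm n (r + s) H ((Q.W l)⁻¹ * p) ((Q.W l)⁻¹ * h) := ⟨A.1, A.2.1, h1.1, h1.2.1⟩
      exact ha' (mem_of_sim hn hsim this.mem)
  have armSh : ∀ z p h, M.Arm n (r + s) H ((Q.W l)⁻¹ * z) ((Q.W l)⁻¹ * p) ((Q.W l)⁻¹ * h) →
      ∀ x y, M.ex h p (M.pt a x) ≤ 20 * M.D → M.ex h p (M.pt a y) ≤ 20 * M.D →
      |x - y| ≤ 61 * M.D := by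
    intro z p h A x y hx hy
    rw [← M.ex_smul (Q.W l)⁻¹, M.mul_pt] at hx hy
    have h1 := nextH_far I ha' (le_nextH A.1) x
    have h2 := nextH_far I ha' (le_nextH A.1) y
    have h3 := shortseg hx hy h1 h2 A.2.1.le
    have h4 := M.abs_le_d_pt ((Q.W l)⁻¹ * a) x y
    omega
  have AL := Q.armL l hl
  have AR := Q.armR l hl
  have hcov := cover5 (i := i) (j := i + M.cK + 1) (B1 := M.th (22 * M.D) + 20 * M.D) (B2 := 61 * M.D)
    (B3 := M.th (26 * M.D)) (B4 := 61 * M.D) (B5 := M.th (22 * M.D) + 20 * M.D)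
    (fun t => M.ex (Q.pl l) (Q.P l) (M.pt a t) ≤ 20 * M.D)
    (fun t => M.ex (Q.hl l) (Q.pl l) (M.pt a t) ≤ 20 * M.D)
    (fun t => M.ex (Q.hl l) (Q.hr l) (M.pt a t) ≤ 20 * M.D)
    (fun t => M.ex (Q.hr l) (Q.pr l) (M.pt a t) ≤ 20 * M.D)
    (fun t => M.ex (Q.pr l) (Q.P (l + 1)) (M.pt a t) ≤ 20 * M.D)
    (by
      intro t h1 h2
      have := five (z := Q.P l) (p := Q.pl l) (h := Q.hl l) (z' := Q.P (l + 1)) (p' := Q.pr l)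
        (h' := Q.hr l) (same' t h1 h2)
      have e : 17 * M.D + 3 * M.D = 20 * M.D := by ring
      rwa [e] at this)
    (by omega) (by omega) (by omega) (by omega) (by omega)
    (by intro x y _ _ _ _ hx hy; exact armOv _ _ _ AL x y hx hy)
    (by intro x y _ _ _ _ hx hy; exact armSh _ _ _ AL x y hx hy)
    (by
      intro x y _ _ _ _ hx hy
      by_contra hlt
      push Not at hlt
      rw [← M.ex_smul (Q.W l)⁻¹, M.mul_pt] at hx hy
      obtain ⟨b, i', j', hb, h1, h2⟩ := I.j2E AL.1 AR.1 hx hy (by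
        intro z hz h hh
        obtain ⟨t, -, -, ht⟩ := M.ax_point hz
        have h3 := nextH_far I ha' (le_nextH hh) t
        have h4 := M.tri h z (M.pt ((Q.W l)⁻¹ * a) t)
        omega)
      have e : 20 * M.D + 6 * M.D = 26 * M.D := by ring
      rw [e] at h1 h2
      have hs := M.bp h2 h1 hlt.le
      exact ha' (mem_of_sim hn hs.symm (le_nextH hb)))
    (by intro x y _ _ _ _ hx hy; exact armSh _ _ _ AR x y hx hy)
    (by intro x y _ _ _ _ hx hy; exact armOv _ _ _ AR x y hx hy)
  unfold cK at hcov
  omega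

end Setup2


namespace Setup2
variable {Γ : Type*} [Group Γ] {M : Setup2 Γ}

lemma geo_path (N : ℕ) : ∀ u v : Γ, M.d u v = N → ∃ x : ℕ → Γ, x 0 = u ∧ x N = v ∧
    (∀ k, k < N → M.d (x k) (x (k + 1)) ≤ 1) ∧ ∀ k, k ≤ N → M.ex u v (x k) = 0 := by
  induction N with
  | zero =>
    intro u v h
    have := M.eq_of u v (by omega)
    refine ⟨fun _ => u, rfl, this, by simp, ?_⟩
    intro k _
    simp [Hyp.ex, M.self]
  | succ N ih =>
    intro u v h
    obtain ⟨z, hz, hz'⟩ := M.geo u v 1 (by omega) (by omega)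
    obtain ⟨x, x0, xN, xs, xe⟩ := ih z v (by omega)
    refine ⟨fun k => match k with | 0 => u | k + 1 => x k, rfl, xN, ?_, ?_⟩
    · intro k hk
      rcases k with _ | k
      · simp only [x0]; omega
      · exact xs k (by omega)
    · intro k hk
      rcases k with _ | k
      · simp [Hyp.ex, M.self]
      · have h1 := xe k (by omega)
        have h2 := M.ex_right u z v (x k)
        have h3 := M.ex_nonneg u v (x k)
        simp only
        have h4 : M.ex u v z = 0 := by simp only [Hyp.ex]; omega
        omega

namespace WPath
variable {n cT K K3 r s κ : ℤ} {H : Subgroup Γ} {w : Γ}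

/-- Label of a point near the path. -/
def Lab (Q : M.WPath n (r + s) κ H w) (E : ℤ) (x : Γ) (c : ℕ) : Prop :=
  ∃ l, l ≤ Q.m ∧ M.ex (Q.P l) (Q.P (l + 1)) x ≤ E ∧
    ((c = 2 * l ∧ M.ex (Q.pl l) (Q.P l) x ≤ E) ∨ (c = 2 * l + 1 ∧ M.ex (Q.hl l) (Q.hr l) x ≤ E) ∨
     (c = 2 * l + 2 ∧ M.ex (Q.pr l) (Q.P (l + 1)) x ≤ E))

lemma hl_mem (Q : M.WPath n (r + s) κ H w) {l : ℕ} (hl : l ≤ Q.m) : Q.hl l ∈ M.nextH n (r + s) H := by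
  have := mul_mem (Q.Wmem l hl) (le_nextH (M := M) (n := n) (r' := r + s) (Q.armL l hl).1)
  simpa using this

lemma hr_mem (Q : M.WPath n (r + s) κ H w) {l : ℕ} (hl : l ≤ Q.m) : Q.hr l ∈ M.nextH n (r + s) H := by
  have := mul_mem (Q.Wmem l hl) (le_nextH (M := M) (n := n) (r' := r + s) (Q.armR l hl).1)
  simpa using this

/-- The far constant. -/
noncomputable def cF (M : Setup2 Γ) (K : ℤ) : ℤ := 10 * M.D + M.cR1 K (32 * M.D) + M.cR2 K (32 * M.D)

lemma cR_nonneg (hK : 0 ≤ K) : 0 ≤ M.cR1 K (32 * M.D) ∧ 0 ≤ M.cR2 K (32 * M.D) := by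
  have := M.one_le_D
  have := M.one_le_T
  have := M.th_nonneg (9 * (32 * M.D) + 50 * M.D)
  have := M.th_nonneg (6 * (32 * M.D) + 30 * M.D)
  unfold cR1 cR2
  constructor <;> positivity

lemma excl (Q : M.WPath n (r + s) κ H w) (I : M.Inv n K cT K3 r H) (hK : 0 ≤ K) {x : Γ}
    (hx : ∀ h ∈ M.nextH n (r + s) H, r + s + cF M K ≤ M.d h x) {l : ℕ} (hl : l ≤ Q.m) :
    ¬ (M.ex (Q.pl l) (Q.P l) x ≤ 32 * M.D ∧ M.ex (Q.hl l) (Q.hr l) x ≤ 32 * M.D) ∧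
    ¬ (M.ex (Q.pr l) (Q.P (l + 1)) x ≤ 32 * M.D ∧ M.ex (Q.hl l) (Q.hr l) x ≤ 32 * M.D) ∧
    ¬ (M.ex (Q.pl l) (Q.P l) x ≤ 32 * M.D ∧ M.ex (Q.pr l) (Q.P (l + 1)) x ≤ 32 * M.D) := by
  have hD := M.one_le_D
  obtain ⟨c1, c2⟩ := cR_nonneg (M := M) hK
  have f1 := hx _ (Q.hl_mem hl)
  have f2 := hx _ (Q.hr_mem hl)
  rw [← M.inv (Q.W l)⁻¹] at f1 f2
  have AL := Q.armL l hl
  have AR := Q.armR l hl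
  unfold cF at f1 f2
  refine ⟨?_, ?_, ?_⟩
  · rintro ⟨h1, h2⟩
    rw [M.ex_comm (Q.hl l)] at h2
    rw [← M.ex_smul (Q.W l)⁻¹] at h1 h2
    have := double1 I hK AL AR.1 h1 h2
    omega
  · rintro ⟨h1, h2⟩
    rw [← M.ex_smul (Q.W l)⁻¹] at h1 h2
    have := double1 I hK AR AL.1 h1 h2
    omega
  · rintro ⟨h1, h2⟩
    rw [← M.ex_smul (Q.W l)⁻¹] at h1 h2
    have := double2 I hK AL AR (by
      rcases Q.sim l hl with h | h | h
      · left; rw [h]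
      · right; left; rw [h]
      · right; right; rwa [sim_mul_iff]) h1 h2
    omega

lemma exists_lab (Q : M.WPath n (r + s) κ H w) (hK : 0 ≤ K) {x : Γ}
    (hx : ∀ h ∈ M.nextH n (r + s) H, r + s + cF M K ≤ M.d h x) (h0 : M.ex 1 w x = 0) :
    ∃ c, Q.Lab (10 * M.D) x c := by
  have hD := M.one_le_D
  obtain ⟨c1, c2⟩ := cR_nonneg (M := M) hK
  have h0' : M.ex (Q.P 0) (Q.P (Q.m + 1)) x = 0 := by
    rw [Q.P0, Q.Pend]; exact h0
  obtain ⟨l, hl, h1⟩ := Q.cp.chain.locate le_rfl h0'.le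
  have e : 2 * 0 + 7 * M.D + 3 * M.D = 10 * M.D := by ring
  have AL := (Q.armL l hl).2.1
  have AR := (Q.armR l hl).2.1
  have f1 := hx _ (Q.hl_mem hl)
  have f2 := hx _ (Q.hr_mem hl)
  rw [M.inv] at AL AR
  unfold cF at f1 f2
  have h5 := five (p := Q.pl l) (h := Q.hl l) (p' := Q.pr l) (h' := Q.hr l) h1
  rw [e] at h5
  have h1' : M.ex (Q.P l) (Q.P (l + 1)) x ≤ 10 * M.D := by omega
  rcases h5 with h5 | h5 | h5 | h5 | h5
  · exact ⟨2 * l, l, hl, h1', Or.inl ⟨rfl, h5⟩⟩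
  · have := M.nonneg x (Q.pl l)
    simp only [Hyp.ex] at h5
    omega
  · exact ⟨2 * l + 1, l, hl, h1', Or.inr (Or.inl ⟨rfl, h5⟩)⟩
  · have := M.nonneg x (Q.pr l)
    simp only [Hyp.ex] at h5
    omega
  · exact ⟨2 * l + 2, l, hl, h1', Or.inr (Or.inr ⟨rfl, h5⟩)⟩

lemma lab_unique (Q : M.WPath n (r + s) κ H w) (I : M.Inv n K cT K3 r H) (hK : 0 ≤ K)
    (hκ : 43 * M.D < κ) {x : Γ}
    (hx : ∀ h ∈ M.nextH n (r + s) H, r + s + cF M K ≤ M.d h x) {c c' : ℕ}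
    (h : Q.Lab (12 * M.D) x c) (h' : Q.Lab (12 * M.D) x c') : c = c' := by
  have hD := M.one_le_D
  obtain ⟨l, hl, hs, ht⟩ := h
  obtain ⟨l', hl', hs', ht'⟩ := h'
  wlog hle : l ≤ l' generalizing l l' c c'
  · exact (this l' hl' hs' ht' l hl hs ht (by omega)).symm
  have X := Q.excl I hK hx hl
  have X' := Q.excl I hK hx hl'
  rcases Nat.eq_or_lt_of_le hle with rfl | hlt
  · obtain ⟨X1, X2, X3⟩ := X
    rcases ht with ⟨rfl, ht⟩ | ⟨rfl, ht⟩ | ⟨rfl, ht⟩ <;> rcases ht' with ⟨rfl, ht'⟩ | ⟨rfl, ht'⟩ | ⟨rfl, ht'⟩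
    all_goals first
      | rfl
      | exact absurd ⟨by omega, by omega⟩ X1
      | exact absurd ⟨by omega, by omega⟩ X2
      | exact absurd ⟨by omega, by omega⟩ X3
  · have t1 := Q.cp.two_sides hlt hl' hs hs'
    have t2 := Q.cp.two_sides' hlt hl' hs hs'
    have s1 := M.symm x (Q.P (l + 1))
    have s2 := M.symm x (Q.P l')
    have u1 := M.ex_le_right (Q.pr l) (Q.P (l + 1)) x
    have u2 := M.ex_le_right (Q.pl l') (Q.P l') x
    have hll : l' = l + 1 := by
      by_contra hne
      have v1 := M.ex_le_left (Q.P (l + 1)) (Q.P (l + 1 + 1)) x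
      have v2 := Q.cp.two_sides (l := l + 1) (l' := l') (by omega) hl' (e := 32 * M.D) (by omega) hs'
      have v3 := (Q.cp.long (i := l) (by omega)).2
      have v4 := M.tri (Q.P (l + 1)) x (Q.P (l + 2))
      have : l + 1 + 1 = l + 2 := rfl
      rw [this] at v2
      omega
    obtain ⟨-, X2, X3⟩ := X
    obtain ⟨X1', -, X3'⟩ := X'
    rcases ht with ⟨rfl, ht⟩ | ⟨rfl, ht⟩ | ⟨rfl, ht⟩
    · exact absurd ⟨by omega, by omega⟩ X3
    · exact absurd ⟨by omega, by omega⟩ X2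
    · rcases ht' with ⟨rfl, ht'⟩ | ⟨rfl, ht'⟩ | ⟨rfl, ht'⟩
      · omega
      · exact absurd ⟨by omega, by omega⟩ X1'
      · exact absurd ⟨by omega, by omega⟩ X3'

lemma lab_even (Q : M.WPath n (r + s) κ H w) (hK : 0 ≤ K) (hr : 0 ≤ r + s) {x : Γ}
    (hx : ∀ h ∈ M.nextH n (r + s) H, r + s + cF M K ≤ M.d h x) {j : ℕ}
    (h : Q.Lab (10 * M.D) x (2 * j)) : ∃ i, i < Q.m ∧ j = i + 1 ∧ ∃ t, M.d x (M.pt (Q.P (i + 1)) t) ≤ 12 * M.D := by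
  have hD := M.one_le_D
  obtain ⟨c1, c2⟩ := cR_nonneg (M := M) hK
  obtain ⟨l, hl, hs, ht⟩ := h
  have f1 := hx _ (Q.hl_mem hl)
  have f2 := hx _ (Q.hr_mem hl)
  unfold cF at f1 f2
  have key : ∀ p k, M.ex (M.pt p k) p x ≤ 10 * M.D → ∃ t, M.d x (M.pt p t) ≤ 12 * M.D := by
    intro p k h
    have h' : M.ex (M.pt p k) (M.pt p 0) x ≤ 10 * M.D := by rwa [M.pt_zero]
    obtain ⟨t, -, -, h3⟩ := M.ax_point h'
    exact ⟨t, by omega⟩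
  rcases ht with ⟨hc, ht⟩ | ⟨hc, ht⟩ | ⟨hc, ht⟩
  · obtain rfl : l = j := by omega
    rcases l with _ | i
    · rw [Q.L0.1, Q.L0.2, M.ex_same] at ht
      omega
    · obtain ⟨k, hk⟩ := Q.axL i (by omega)
      rw [hk] at ht
      exact ⟨i, by omega, rfl, key _ _ ht⟩
  · omega
  · obtain rfl : j = l + 1 := by omega
    rcases Nat.lt_or_ge l Q.m with hlt | hge
    · obtain ⟨k, hk⟩ := Q.axR l hlt
      rw [hk] at ht
      exact ⟨l, hlt, rfl, key _ _ ht⟩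
    · obtain rfl : l = Q.m := by omega
      rw [Q.Rm.1, Q.Rm.2, M.ex_same] at ht
      omega

/-- The path between two far points stays near one axis. -/
lemma one_axis (Q : M.WPath n (r + s) κ H w) (I : M.Inv n K cT K3 r H) (hK : 0 ≤ K)
    (hκ : 43 * M.D < κ) (hr : 0 ≤ r + s) {R : ℤ} (hR : r + s + cF M K ≤ R)
    (hRT : r + cT + 49 * M.D ≤ R) {y1 y2 : Γ}
    (hx : ∀ y, M.ex y1 y2 y = 0 → (∀ h ∈ M.nextH n (r + s) H, R ≤ M.d h y) ∧ M.ex 1 w y = 0) :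
    ∃ a i j, M.tau a n ∈ M.nextH n (r + s) H ∧ M.d y1 (M.pt a i) ≤ 16 * M.D ∧
      M.d y2 (M.pt a j) ≤ 16 * M.D := by
  have hD := M.one_le_D
  obtain ⟨x, x0, xN, xs, xe⟩ := geo_path (M := M) (M.d y1 y2).toNat y1 y2 (by
    rw [Int.toNat_of_nonneg (M.nonneg _ _)])
  set N := (M.d y1 y2).toNat with hN
  have hf : ∀ k, k ≤ N → ∀ h ∈ M.nextH n (r + s) H, r + s + cF M K ≤ M.d h (x k) := by
    intro k hk h hh
    have := (hx _ (xe k hk)).1 h hh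
    omega
  have hlab : ∀ k, k ≤ N → ∃ c, Q.Lab (10 * M.D) (x k) c := fun k hk =>
    Q.exists_lab hK (hf k hk) (hx _ (xe k hk)).2
  obtain ⟨c, hc⟩ := hlab 0 (by omega)
  have all : ∀ k, k ≤ N → Q.Lab (10 * M.D) (x k) c := by
    intro k
    induction k with
    | zero => intro _; exact hc
    | succ k ih =>
      intro hk
      obtain ⟨c', hc'⟩ := hlab (k + 1) hk
      have h1 := xs k (by omega)
      have e1 : Q.Lab (12 * M.D) (x k) c' := by
        have mv : ∀ u v, M.ex u v (x (k + 1)) ≤ 10 * M.D → M.ex u v (x k) ≤ 12 * M.D := by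
          intro u v h
          have := M.ex_move u v (x (k + 1)) (x k)
          rw [M.symm] at h1
          omega
        obtain ⟨l, hl, hs, ht⟩ := hc'
        refine ⟨l, hl, mv _ _ hs, ?_⟩
        rcases ht with ht | ht | ht
        · exact Or.inl ⟨ht.1, mv _ _ ht.2⟩
        · exact Or.inr (Or.inl ⟨ht.1, mv _ _ ht.2⟩)
        · exact Or.inr (Or.inr ⟨ht.1, mv _ _ ht.2⟩)
      have e2 : Q.Lab (12 * M.D) (x k) c := by
        obtain ⟨l, hl, hs, ht⟩ := ih (by omega)
        refine ⟨l, hl, by omega, ?_⟩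
        rcases ht with ht | ht | ht
        · exact Or.inl ⟨ht.1, by omega⟩
        · exact Or.inr (Or.inl ⟨ht.1, by omega⟩)
        · exact Or.inr (Or.inr ⟨ht.1, by omega⟩)
      have := Q.lab_unique I hK hκ (hf k (by omega)) e2 e1
      rw [this]; exact hc'
  have hL1 := all 0 (by omega)
  have hL2 := all N le_rfl
  have g1 := hf 0 (by omega)
  have g2 := hf N le_rfl
  rw [x0] at hL1 g1
  rw [xN] at hL2 g2
  rcases Nat.even_or_odd' c with ⟨j, rfl | rfl⟩
  · obtain ⟨i, hi, hj, t, ht⟩ := Q.lab_even hK hr g1 hL1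
    obtain ⟨i', hi', hj', t', ht'⟩ := Q.lab_even hK hr g2 hL2
    obtain rfl : i = i' := by omega
    exact ⟨Q.P (i + 1), t, t', Q.mem i hi, by omega, by omega⟩
  · obtain ⟨l, hl, -, ht⟩ := hL1
    obtain ⟨l', hl', -, ht'⟩ := hL2
    have k1 : l = j ∧ M.ex (Q.hl l) (Q.hr l) y1 ≤ 10 * M.D := by
      rcases ht with ht | ht | ht
      · omega
      · exact ⟨by omega, ht.2⟩
      · omega
    have k2 : l' = j ∧ M.ex (Q.hl l') (Q.hr l') y2 ≤ 10 * M.D := by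
      rcases ht' with ht | ht | ht
      · omega
      · exact ⟨by omega, ht.2⟩
      · omega
    obtain ⟨rfl, k1⟩ := k1
    obtain ⟨rfl, k2⟩ := k2
    rw [← M.ex_smul (Q.W l')⁻¹] at k1 k2
    obtain ⟨a, i, j, ha, hi, hj⟩ := I.j2E (Q.armL l' hl).1 (Q.armR l' hl).1 k1 k2 (by
      intro y hy h hh
      rw [← M.ex_smul (Q.W l'), mul_inv_cancel_left, mul_inv_cancel_left] at hy
      obtain ⟨y', hy', hd⟩ := M.geo_point hy
      have := (hx _ hy').1 (Q.W l' * h) (mul_mem (Q.Wmem l' hl) (le_nextH hh))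
      have h3 := M.tri (Q.W l' * h) (Q.W l' * y) y'
      rw [M.inv] at h3
      omega)
    refine ⟨Q.W l' * a, i, j, ?_, ?_, ?_⟩
    · rw [tau_mem_mul (Q.Wmem l' hl)]; exact le_nextH ha
    · rw [← M.mul_pt, ← M.inv (Q.W l')⁻¹, inv_mul_cancel_left]; omega
    · rw [← M.mul_pt, ← M.inv (Q.W l')⁻¹, inv_mul_cancel_left]; omega

end WPath

/-- interior points of a path near an axis are very near. -/
lemma near_axis {a y1 y2 q : Γ} {i j : ℤ} (h1 : M.d y1 (M.pt a i) ≤ 16 * M.D)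
    (h2 : M.d y2 (M.pt a j) ≤ 16 * M.D) (hq : M.ex y1 y2 q = 0) (d1 : 20 * M.D ≤ M.d q y1)
    (d2 : 20 * M.D ≤ M.d q y2) : ∃ t, M.d q (M.pt a t) ≤ 4 * M.D := by
  have hD := M.one_le_D
  have e1 := M.ex_le_left (M.pt a i) (M.pt a j) y1
  have e2 := M.ex_le_right (M.pt a i) (M.pt a j) y2
  rw [M.symm] at h1 h2
  have := M.interior (u := M.pt a i) (v := M.pt a j) (ε := 32 * M.D) (by omega) (by omega) hq.le (by omega) (by omega)
  obtain ⟨t, -, -, ht⟩ := M.ax_point this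
  exact ⟨t, by omega⟩

lemma nextH_j2 {n K cT K3 r s κ : ℤ} {H : Subgroup Γ} {w : Γ} (Q : M.WPath n (r + s) κ H w)
    (I : M.Inv n K cT K3 r H) (hw : w ∈ M.nextH n (r + s) H) (hK : 0 ≤ K)
    (hκ : 43 * M.D < κ) (hr : 0 ≤ r + s) (hcT : WPath.cF M K + 23 * M.D ≤ cT)
    (hs : 72 * M.D ≤ s) {q1 q2 : Γ} (h1 : M.ex 1 w q1 = 0) (h2 : M.ex q1 w q2 = 0)
    (hy : ∀ y, M.ex q1 q2 y = 0 → ∀ h ∈ M.nextH n (r + s) H, r + s + cT ≤ M.d h y) :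
    ∃ a i j, M.tau a n ∈ M.nextH n (r + s) H ∧ M.d q1 (M.pt a i) ≤ 4 * M.D ∧
      M.d q2 (M.pt a j) ≤ 4 * M.D := by
  have hD := M.one_le_D
  obtain ⟨c1, c2⟩ := WPath.cR_nonneg (M := M) hK
  have hcT' : 33 * M.D ≤ cT := by unfold WPath.cF at hcT; omega
  have f1 := hy q1 (by simp [Hyp.ex, M.self]) 1 (one_mem _)
  have f2 := hy q2 (by simp [Hyp.ex, M.self]) w hw
  obtain ⟨y1, a1, a2⟩ := M.geo q1 1 (20 * M.D) (by omega) (by rw [M.symm]; omega)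
  obtain ⟨y2, b1, b2⟩ := M.geo q2 w (20 * M.D) (by omega) (by rw [M.symm]; omega)
  have s1 := M.symm q1 1
  have s2 := M.symm y1 1
  have s3 := M.symm y1 q1
  have s4 := M.symm y2 q2
  have dd : M.d 1 w = M.d 1 y1 + 20 * M.D + M.d q1 q2 + 20 * M.D + M.d y2 w := by
    simp only [Hyp.ex] at h1 h2; omega
  have t1 := M.tri 1 y1 w
  have t2 := M.tri y1 y2 w
  have t3 := M.tri y1 q1 y2
  have t4 := M.tri q1 q2 y2
  have t5 := M.tri y1 q2 y2
  have t6 := M.tri y1 q1 q2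
  have dy : M.d y1 y2 = 20 * M.D + M.d q1 q2 + 20 * M.D := by omega
  have dy1 : M.d y1 q2 = 20 * M.D + M.d q1 q2 := by omega
  have dy2 : M.d q1 y2 = 20 * M.D + M.d q1 q2 := by omega
  have e1 : M.ex y1 y2 q1 = 0 := by simp only [Hyp.ex]; omega
  have e2 : M.ex y1 y2 q2 = 0 := by simp only [Hyp.ex]; omega
  have nn := M.nonneg q1 q2
  have s5 := M.symm q2 y1
  obtain ⟨a, i, j, ha, hi, hj⟩ := Q.one_axis I hK hκ hr (R := r + s + cT - 23 * M.D) (by omega) (by omega)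
    (y1 := y1) (y2 := y2) (by
      intro y hy0
      constructor
      · intro h hh
        have g1 := hy q1 (by simp [Hyp.ex, M.self]) h hh
        have g2 := hy q2 (by simp [Hyp.ex, M.self]) h hh
        have t7 := M.tri h y q1
        have t8 := M.tri h y q2
        have n1 := M.nonneg y1 y
        have n2 := M.nonneg y y2
        have k1 := M.symm y q2
        rcases M.ex_thin' hy0.le q1 with h3 | h3
        · simp only [Hyp.ex] at h3; omega
        · rcases M.ex_thin' h3 q2 with h4 | h4
          · obtain ⟨y', hy', hd⟩ := M.geo_point h4
            have := hy y' hy' h hh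
            have := M.tri h y y'
            omega
          · simp only [Hyp.ex] at h4; omega
      · have t9 := M.tri 1 y1 y
        have t10 := M.tri y y2 w
        have := M.ex_nonneg 1 w y
        simp only [Hyp.ex] at *; omega)
  obtain ⟨t, ht⟩ := near_axis hi hj e1 (by omega) (by omega)
  obtain ⟨t', ht'⟩ := near_axis hi hj e2 (by omega) (by omega)
  exact ⟨a, t, t', ha, ht, ht'⟩

end Setup2


namespace Setup2
variable {Γ : Type*} [Group Γ] {M : Setup2 Γ}

/-- thickness constant. -/
noncomputable def wT (M : Setup2 Γ) : ℤ := WPath.cF M M.cK + 23 * M.D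
/-- step constant. -/
noncomputable def wS (M : Setup2 Γ) : ℤ := M.wT + 90 * M.D
/-- length defect constant. -/
noncomputable def wK (M : Setup2 Γ) : ℤ := M.cK2 M.cK M.wS + M.D + 1

lemma wT_pos : 23 * M.D ≤ M.wT := by
  have hD := M.one_le_D
  obtain ⟨c1, c2⟩ := WPath.cR_nonneg (M := M) (cK_nonneg (M := M))
  unfold wT WPath.cF; omega

lemma inv_step {n n' r : ℤ} {H : Subgroup Γ} (I : M.Inv n M.cK M.wT (2 * M.wK) r H)
    (hr : 0 ≤ r) (hn : M.n0 ∣ n) (hn' : n = 2 * n')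
    (hκ : 43 * M.D + 59 * M.D + 2 * (M.T * (M.cK + 1)) + M.wK < n') :
    M.Inv n M.cK M.wT (2 * M.wK) (r + M.wS) (M.nextH n (r + M.wS) H) := by
  have hD := M.one_le_D
  have hT := M.one_le_T
  have hK := cK_nonneg (M := M)
  have hwT := wT_pos (M := M)
  have hTK : 0 ≤ M.T * (M.cK + 1) := by positivity
  have hS : M.wS = M.wT + 90 * M.D := rfl
  have hW : M.wK = M.cK2 M.cK M.wS + M.D + 1 := rfl
  have hK2 : 0 ≤ M.cK2 M.cK M.wS := by
    unfold cK2 cB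
    have := M.th_nonneg (6 * M.D)
    have : 0 ≤ M.T * (M.th (6 * M.D) + 4 * M.D + (13 * M.D + M.wS) + (M.cK + 2 * (7 * M.D + 1)) + 7 * M.D + 4 * M.D + 5) :=
      mul_nonneg (by omega) (by omega)
    omega
  have wp : ∀ w ∈ M.nextH n (r + M.wS) H, Nonempty (M.WPath n (r + M.wS) (n' - M.wK) H w) :=
    fun w hw => wpath I hK (by omega) (by omega) hn hn' (by omega) (by omega) (by omega) hw
  refine ⟨fun a ha => nextH_j0 I a ha, ?_, ?_, ?_⟩
  · intro a ha v hv i j hi hj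
    obtain ⟨Q⟩ := wp v hv
    rw [abs_le]
    rcases le_total i j with hij | hij
    · have := nextH_j1 I (by omega) hn (by omega) Q ha hij hi hj
      omega
    · have := nextH_j1 I (by omega) hn (by omega) Q ha hij hj hi
      omega
  · intro u hu v hv q1 q2 h1 h2 hy
    have hm : u⁻¹ * v ∈ M.nextH n (r + M.wS) H := mul_mem (inv_mem hu) hv
    obtain ⟨Q⟩ := wp _ hm
    rw [← ex_inv_left] at h1
    rw [← M.ex_smul u⁻¹] at h2
    obtain ⟨a, i, j, ha, hi, hj⟩ := nextH_j2 Q I hm hK (by omega) (by omega) le_rfl (by omega) h1 h2 (by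
      intro y hy' h hh
      rw [← M.ex_smul u, mul_inv_cancel_left, mul_inv_cancel_left] at hy'
      have := hy _ hy' (u * h) (mul_mem hu hh)
      rwa [M.inv] at this)
    refine ⟨u * a, i, j, (tau_mem_mul hu).2 ha, ?_, ?_⟩
    · rw [← M.mul_pt, ← M.inv u⁻¹, inv_mul_cancel_left]; exact hi
    · rw [← M.mul_pt, ← M.inv u⁻¹, inv_mul_cancel_left]; exact hj
  · intro v hv hv1
    obtain ⟨Q⟩ := wp v hv
    rcases Nat.eq_zero_or_pos Q.m with h0 | h0
    · exact I.j3 v (Q.zero h0) hv1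
    · refine ⟨M.pt (Q.P 1) (-(n' - M.wK)), fun t h1 h2 => ?_⟩
      have := Q.cp.chord' h0 (s := -(n' - M.wK) + t) (by omega) (by omega)
      rw [Q.P0, Q.Pend] at this
      rw [M.pt_pt]
      simp only [zero_add] at this
      omega

lemma inv_base (n : ℤ) : M.Inv n M.cK M.wT (2 * M.wK) 0 ⊥ := by
  have hD := M.one_le_D
  have hwT := wT_pos (M := M)
  refine ⟨?_, ?_, ?_, ?_⟩
  · intro a ha
    have := M.nonneg 1 a
    omega
  · intro a _ v hv i j hi hj
    rw [Subgroup.mem_bot.1 hv, M.ex_same] at hi hj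
    have h1 := M.tri (M.pt a i) 1 (M.pt a j)
    have h2 := M.abs_le_d_pt a i j
    have h3 := M.symm 1 (M.pt a i)
    have t1 := M.th_nonneg (22 * M.D)
    have t2 := M.th_nonneg (26 * M.D)
    have t3 := M.th_nonneg (9 * M.D)
    unfold cK
    omega
  · intro u hu v hv q1 q2 h1 h2 hy
    rw [Subgroup.mem_bot.1 hu, Subgroup.mem_bot.1 hv, M.ex_same] at h1
    have := hy q1 (by simp [Hyp.ex, M.self]) 1 (one_mem _)
    omega
  · intro v hv hv1
    exact absurd (Subgroup.mem_bot.1 hv) hv1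

/-- The sequence of windmills. -/
noncomputable def wind (M : Setup2 Γ) (n : ℤ) : ℕ → Subgroup Γ
  | 0 => ⊥
  | k + 1 => M.nextH n (M.wS * k + M.wS) (wind M n k)

lemma wind_inv {n n' : ℤ} (hn : M.n0 ∣ n) (hn' : n = 2 * n')
    (hκ : 43 * M.D + 59 * M.D + 2 * (M.T * (M.cK + 1)) + M.wK < n') (k : ℕ) :
    M.Inv n M.cK M.wT (2 * M.wK) (M.wS * k) (M.wind n k) := by
  have hD := M.one_le_D
  have hwT := wT_pos (M := M)
  have hS : 0 ≤ M.wS := by unfold wS; omega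
  induction k with
  | zero => simpa [wind] using inv_base n
  | succ k ih =>
    have := inv_step ih (by positivity) hn hn' hκ
    rw [wind]
    convert this using 1
    push_cast; ring

lemma wind_mono (n : ℤ) : Monotone (M.wind n) :=
  monotone_nat_of_le_succ fun k => by rw [wind]; exact le_nextH

/-- Long axis pieces in elements of the normal closure. -/
lemma greendlinger {n n' : ℤ} (hn : M.n0 ∣ n) (hn' : n = 2 * n')
    (hκ : 43 * M.D + 59 * M.D + 2 * (M.T * (M.cK + 1)) + M.wK < n') {w : Γ}
    (hw : w ∈ Subgroup.normalClosure {M.g ^ n}) (hw1 : w ≠ 1) :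
    ∃ a, ∀ t, 0 ≤ t → t ≤ n - 2 * M.wK → M.ex 1 w (M.pt a t) ≤ 10 * M.D := by
  have hD := M.one_le_D
  have hwT := wT_pos (M := M)
  have hS : 1 ≤ M.wS := by unfold wS; omega
  have : ∃ k, w ∈ M.wind n k := by
    unfold Subgroup.normalClosure at hw
    induction hw using Subgroup.closure_induction with
    | mem x hx =>
      rw [Group.mem_conjugatesOfSet_iff] at hx
      obtain ⟨y, hy, hc⟩ := hx
      rw [Set.mem_singleton_iff] at hy
      subst hy
      obtain ⟨c, rfl⟩ := isConj_iff.1 hc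
      refine ⟨(M.d 1 c).toNat + 1, (wind_inv hn hn' hκ _).j0 c ?_⟩
      have h0 := M.nonneg 1 c
      push_cast
      rw [Int.toNat_of_nonneg h0]
      nlinarith
    | one => exact ⟨0, one_mem _⟩
    | mul x y _ _ hx hy =>
      have hx' : ∃ k, x ∈ M.wind n k := by
        by_cases h : x = 1
        · exact ⟨0, h ▸ one_mem _⟩
        · exact hx h
      have hy' : ∃ k, y ∈ M.wind n k := by
        by_cases h : y = 1
        · exact ⟨0, h ▸ one_mem _⟩
        · exact hy h
      obtain ⟨k, hk⟩ := hx'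
      obtain ⟨l, hl⟩ := hy'
      exact ⟨max k l, mul_mem (wind_mono n (le_max_left _ _) hk) (wind_mono n (le_max_right _ _) hl)⟩
    | inv x _ hx =>
      obtain ⟨k, hk⟩ := hx (by rintro rfl; simp at hw1)
      exact ⟨k, inv_mem hk⟩
  obtain ⟨k, hk⟩ := this
  exact (wind_inv hn hn' hκ k).j3 w hk hw1

end Setup2


/-- A finite symmetric generating set. -/
structure Gen {G : Type*} [Group G] (S : Set G) : Prop where
  fin : S.Finite
  symm : ∀ s ∈ S, s⁻¹ ∈ S
  gen : Subgroup.closure S = ⊤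

namespace Gen
variable {G : Type*} [Group G] {S : Set G}

lemma len_le (l : List G) (hl : ∀ x ∈ l, x ∈ S) : wordLength S l.prod ≤ l.length :=
  Nat.sInf_le ⟨l, hl, rfl, rfl⟩

lemma exists_list (hS : Gen S) (g : G) :
    ∃ l : List G, (∀ x ∈ l, x ∈ S) ∧ l.length = wordLength S g ∧ l.prod = g := by
  have hne : {k | ∃ l : List G, (∀ x ∈ l, x ∈ S) ∧ l.length = k ∧ l.prod = g}.Nonempty := by
    have hg : g ∈ Subgroup.closure S := by rw [hS.gen]; trivial
    induction hg using Subgroup.closure_induction with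
    | mem x hx => exact ⟨1, [x], by simpa using hx, rfl, by simp⟩
    | one => exact ⟨0, [], by simp, rfl, rfl⟩
    | mul x y _ _ hx hy =>
      obtain ⟨_, l, h1, -, rfl⟩ := hx
      obtain ⟨_, l', h1', -, rfl⟩ := hy
      refine ⟨_, l ++ l', ?_, rfl, by simp⟩
      intro x hx
      rcases List.mem_append.1 hx with h | h
      · exact h1 _ h
      · exact h1' _ h
    | inv x _ hx =>
      obtain ⟨_, l, h1, -, rfl⟩ := hx
      refine ⟨_, (l.map (·⁻¹)).reverse, ?_, rfl, by rw [List.prod_inv_reverse]⟩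
      intro x hx
      rw [List.mem_reverse, List.mem_map] at hx
      obtain ⟨y, hy, rfl⟩ := hx
      exact hS.symm _ (h1 _ hy)
  exact Nat.sInf_mem hne

lemma len_one : wordLength S (1 : G) = 0 := by
  have := len_le (S := S) [] (by simp)
  simpa using this

lemma len_mem {s : G} (h : s ∈ S) : wordLength S s ≤ 1 := by
  have := len_le (S := S) [s] (by simpa using h)
  simpa using this

lemma eq_one (hS : Gen S) {g : G} (h : wordLength S g = 0) : g = 1 := by
  obtain ⟨l, -, h2, rfl⟩ := hS.exists_list g
  rw [h, List.length_eq_zero_iff] at h2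
  simp [h2]

lemma len_mul (hS : Gen S) (g h : G) : wordLength S (g * h) ≤ wordLength S g + wordLength S h := by
  obtain ⟨l, h1, h2, h3⟩ := hS.exists_list g
  obtain ⟨l', h1', h2', h3'⟩ := hS.exists_list h
  have := len_le (S := S) (l ++ l') (by
    intro x hx
    rcases List.mem_append.1 hx with h | h
    · exact h1 _ h
    · exact h1' _ h)
  rw [List.prod_append, h3, h3', List.length_append, h2, h2'] at this
  exact this

lemma len_inv_le (hS : Gen S) (g : G) : wordLength S g⁻¹ ≤ wordLength S g := by
  obtain ⟨l, h1, h2, h3⟩ := hS.exists_list g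
  have := len_le (S := S) (l.map (·⁻¹)).reverse (by
    intro x hx
    rw [List.mem_reverse, List.mem_map] at hx
    obtain ⟨y, hy, rfl⟩ := hx
    exact hS.symm _ (h1 _ hy))
  rw [← List.prod_inv_reverse, h3] at this
  simpa [h2] using this

lemma len_inv (hS : Gen S) (g : G) : wordLength S g⁻¹ = wordLength S g := by
  refine le_antisymm (hS.len_inv_le g) ?_
  have := hS.len_inv_le g⁻¹
  rwa [inv_inv] at this

lemma split (hS : Gen S) {g : G} {k : ℕ} (hk : k ≤ wordLength S g) :
    ∃ u v, g = u * v ∧ wordLength S u = k ∧ wordLength S v = wordLength S g - k := by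
  obtain ⟨l, h1, h2, h3⟩ := hS.exists_list g
  have e1 := len_le (S := S) (l.take k) (fun x hx => h1 x (List.mem_of_mem_take hx))
  have e2 := len_le (S := S) (l.drop k) (fun x hx => h1 x (List.mem_of_mem_drop hx))
  have e3 : (l.take k).prod * (l.drop k).prod = g := by rw [List.prod_take_mul_prod_drop, h3]
  have e4 := hS.len_mul (l.take k).prod (l.drop k).prod
  rw [e3] at e4
  rw [List.length_take] at e1
  rw [List.length_drop] at e2
  exact ⟨_, _, e3.symm, by omega, by omega⟩

lemma ball_finite (hS : Gen S) (k : ℕ) : {g | wordLength S g ≤ k}.Finite := by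
  induction k with
  | zero =>
    refine (Set.finite_singleton (1 : G)).subset ?_
    intro g hg
    exact hS.eq_one (Nat.le_zero.1 hg)
  | succ k ih =>
    refine (ih.union (ih.mul hS.fin)).subset ?_
    intro g hg
    rcases Nat.lt_or_ge k (wordLength S g) with h | h
    · right
      obtain ⟨u, v, e, h1, h2⟩ := hS.split (k := k) h.le
      have hg' : wordLength S g ≤ k + 1 := hg
      obtain ⟨l, l1, l2, l3⟩ := hS.exists_list v
      have : l.length = 1 := by omega
      obtain ⟨a, rfl⟩ := List.length_eq_one_iff.1 this
      refine Set.mem_mul.2 ⟨u, h1.le, v, ?_, e.symm⟩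
      rw [← l3]
      simpa using l1
    · left; exact h

/-- The word metric. -/
noncomputable def wd (S : Set G) (x y : G) : ℤ := wordLength S (x⁻¹ * y)

/-- A path along the word metric. -/
lemma path (hS : Gen S) (x y : G) : ∃ p : ℕ → G, p 0 = x ∧ p (wordLength S (x⁻¹ * y)) = y ∧
    ∀ i j, i ≤ j → j ≤ wordLength S (x⁻¹ * y) → wd S (p i) (p j) = j - i := by
  obtain ⟨l, h1, h2, h3⟩ := hS.exists_list (x⁻¹ * y)
  have key : ∀ i j, i ≤ j → j ≤ wordLength S (x⁻¹ * y) →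
      wordLength S ((x * (l.take i).prod)⁻¹ * (x * (l.take j).prod)) ≤ j - i := by
    intro i j hij hj
    have e : l.take j = l.take i ++ (l.drop i).take (j - i) := by
      rw [← List.take_add]; congr 1; omega
    have e2 : (x * (l.take i).prod)⁻¹ * (x * (l.take j).prod) = ((l.drop i).take (j - i)).prod := by
      rw [e, List.prod_append]; group
    rw [e2]
    refine (len_le _ (fun x hx => h1 x (List.mem_of_mem_drop (List.mem_of_mem_take hx)))).trans ?_
    rw [List.length_take]
    omega
  refine ⟨fun i => x * (l.take i).prod, by simp, by simp [← h2, h3], ?_⟩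
  intro i j hij hj
  have k1 := key 0 i (by omega) (by omega)
  have k2 := key i j hij hj
  have k3 := key j _ hj le_rfl
  have e : l.take (wordLength S (x⁻¹ * y)) = l := by rw [← h2]; simp
  rw [e, h3] at k3
  simp only [List.take_zero, List.prod_nil, mul_one] at k1
  have m1 := hS.len_mul (x⁻¹ * (x * (l.take i).prod)) ((x * (l.take i).prod)⁻¹ * (x * (l.take j).prod))
  have m2 := hS.len_mul (x⁻¹ * (x * (l.take j).prod)) ((x * (l.take j).prod)⁻¹ * (x * (x⁻¹ * y)))
  have e1 : (x⁻¹ * (x * (l.take i).prod)) * ((x * (l.take i).prod)⁻¹ * (x * (l.take j).prod)) = x⁻¹ * (x * (l.take j).prod) := by group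
  have e2 : (x⁻¹ * (x * (l.take j).prod)) * ((x * (l.take j).prod)⁻¹ * (x * (x⁻¹ * y))) = x⁻¹ * y := by group
  rw [e1] at m1
  rw [e2] at m2
  simp only [wd]
  omega

lemma wd_self (x : G) : wd S x x = 0 := by simp [wd, len_one]
lemma wd_symm (hS : Gen S) (x y : G) : wd S x y = wd S y x := by
  unfold wd; rw [← hS.len_inv]; congr 2; group
lemma wd_tri (hS : Gen S) (x y z : G) : wd S x z ≤ wd S x y + wd S y z := by
  have := hS.len_mul (x⁻¹ * y) (y⁻¹ * z)
  have e : (x⁻¹ * y) * (y⁻¹ * z) = x⁻¹ * z := by group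
  rw [e] at this
  unfold wd
  exact_mod_cast this
lemma wd_inv (a x y : G) : wd S (a * x) (a * y) = wd S x y := by
  unfold wd; congr 2; group
lemma wd_geo (hS : Gen S) (x y : G) (k : ℤ) (h0 : 0 ≤ k) (h1 : k ≤ wd S x y) :
    ∃ z, wd S x z = k ∧ wd S z y = wd S x y - k := by
  obtain ⟨p, p0, p1, hp⟩ := hS.path x y
  have h1' : k.toNat ≤ wordLength S (x⁻¹ * y) := by unfold wd at h1; omega
  have a := hp 0 k.toNat (by omega) h1'
  have b := hp k.toNat _ h1' le_rfl
  rw [p0] at a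
  rw [p1] at b
  refine ⟨p k.toNat, by omega, ?_⟩
  rw [b]
  unfold wd
  omega

/-- The thinness predicate. -/
def Thin (S : Set G) (D : ℤ) : Prop := ∀ u v w q : G,
  wd S u q + wd S q w - wd S u w ≤ wd S u q + wd S q v - wd S u v + D ∨
    wd S w q + wd S q v - wd S w v ≤ wd S u q + wd S q v - wd S u v + D

lemma Thin.mono {D D' : ℤ} (h : Thin S D) (hD : D ≤ D') : Thin S D' := by
  intro u v w q
  rcases h u v w q with h | h
  · left; omega
  · right; omega

/-- Word metric as a `Hyp`. -/
noncomputable def toHyp (hS : Gen S) (D : ℤ) (h1 : 1 ≤ D) (hD : Thin S D) : Hyp G where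
  d := wd S
  D := D
  self := wd_self
  symm := hS.wd_symm
  tri := hS.wd_tri
  eq_of := by
    intro x y h
    have : x⁻¹ * y = 1 := hS.eq_one (by unfold wd at h; omega)
    rw [inv_mul_eq_one] at this
    exact this
  inv := wd_inv
  geo := hS.wd_geo
  fin := by
    intro c
    refine (hS.ball_finite c.toNat).subset ?_
    intro x hx
    have hx' : wd S 1 x ≤ c := hx
    unfold wd at hx'
    rw [inv_one, one_mul] at hx'
    show wordLength S x ≤ c.toNat
    omega
  thin := hD
  one_le_D := h1

lemma gp_eq (hS : Gen S) (w x y : G) :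
    2 * wordGromovProduct S w x y = ((wd S x w + wd S w y - wd S x y : ℤ) : ℝ) := by
  rw [hS.wd_symm w y]
  unfold wordGromovProduct wd
  push_cast
  ring

lemma thin_of (hS : Gen S) {δ : ℝ} (h : ∀ x y z w : G,
      wordGromovProduct S w x z ≥
        min (wordGromovProduct S w x y) (wordGromovProduct S w y z) - δ) :
    Thin S ⌈2 * δ⌉ := by
  intro u v w q
  have := h u w v q
  have e1 := hS.gp_eq q u v
  have e2 := hS.gp_eq q u w
  have e3 := hS.gp_eq q w v
  have e4 := Int.le_ceil (2 * δ)
  rcases min_choice (wordGromovProduct S q u w) (wordGromovProduct S q w v) with hm | hm <;> rw [hm] at this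
  · left
    have : ((wd S u q + wd S q w - wd S u w : ℤ) : ℝ) ≤ ((wd S u q + wd S q v - wd S u v + ⌈2 * δ⌉ : ℤ) : ℝ) := by
      rw [← e2, Int.cast_add, ← e1]; linarith
    exact_mod_cast this
  · right
    have : ((wd S w q + wd S q v - wd S w v : ℤ) : ℝ) ≤ ((wd S u q + wd S q v - wd S u v + ⌈2 * δ⌉ : ℤ) : ℝ) := by
      rw [← e3, Int.cast_add, ← e1]; linarith
    exact_mod_cast this

lemma hyp_of_thin (hS : Gen S) {D : ℤ} (h0 : 0 ≤ D) (h : Thin S D) : IsHyperbolicGroup G := by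
  refine ⟨S, hS.fin, hS.symm, hS.gen, D, by exact_mod_cast h0, ?_⟩
  intro x y z w
  have e1 := hS.gp_eq w x z
  have e2 := hS.gp_eq w x y
  have e3 := hS.gp_eq w y z
  have hD : (0 : ℝ) ≤ D := by exact_mod_cast h0
  rcases h x z y w with h | h
  · have h' : ((wd S x w + wd S w y - wd S x y : ℤ) : ℝ) ≤ ((wd S x w + wd S w z - wd S x z + D : ℤ) : ℝ) := by
      exact_mod_cast h
    rw [← e2, Int.cast_add, ← e1] at h'
    have := min_le_left (wordGromovProduct S w x y) (wordGromovProduct S w y z)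
    linarith
  · have h' : ((wd S y w + wd S w z - wd S y z : ℤ) : ℝ) ≤ ((wd S x w + wd S w z - wd S x z + D : ℤ) : ℝ) := by
      exact_mod_cast h
    rw [← e3, Int.cast_add, ← e1] at h'
    have := min_le_right (wordGromovProduct S w x y) (wordGromovProduct S w y z)
    linarith

end Gen


namespace Gen
variable {G : Type*} [Group G] {S : Set G}

/-- Tail type. -/
def tail (S : Set G) (k : ℕ) (x : G) : Set G := {h | wordLength S h ≤ k ∧ wordLength S (x * h) < wordLength S x}

lemma cone_eq (hS : Gen S) {D : ℤ} (h1 : 1 ≤ D) (hD : Thin S D) {x x' : G}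
    (ht : tail S (2 * D + 4).toNat x = tail S (2 * D + 4).toNat x') :
    ∀ k : ℕ, ∀ y : G, wordLength S y = k → wordLength S (x * y) = wordLength S x + wordLength S y →
      wordLength S (x' * y) = wordLength S x' + wordLength S y := by
  intro k
  induction k with
  | zero =>
    intro y hy _
    rw [hS.eq_one hy, mul_one, len_one, add_zero]
  | succ k ih =>
    intro y hy hx
    obtain ⟨y', s, rfl, hy', hs⟩ := hS.split (g := y) (k := k) (by omega)
    have a1 := hS.len_mul (x * y') s
    have a2 := hS.len_mul x y'
    rw [mul_assoc] at a1
    have a3 := ih y' hy' (by omega)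
    have a4 := hS.len_mul x' (y' * s)
    by_contra hne
    rcases Nat.eq_zero_or_pos (wordLength S x') with h0 | h0
    · rw [hS.eq_one h0, one_mul, len_one] at hne
      omega
    have a5 := hS.len_mul (x' * (y' * s)) s⁻¹
    have e : x' * (y' * s) * s⁻¹ = x' * y' := by group
    rw [e, hS.len_inv] at a5
    obtain ⟨u, v, huv, hu, hv⟩ := hS.split (g := x' * (y' * s)) (k := wordLength S x' - 1) (by omega)
    let M := hS.toHyp D h1 hD
    have b1 : M.ex 1 (x' * (y' * s)) u ≤ 0 := by
      show wd S 1 u + wd S u (x' * (y' * s)) - wd S 1 (x' * (y' * s)) ≤ 0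
      simp only [wd, inv_one, one_mul]
      rw [huv, inv_mul_cancel_left, ← huv]
      omega
    have b2 : M.ex 1 (x' * (y' * s)) x' ≤ 2 := by
      show wd S 1 x' + wd S x' (x' * (y' * s)) - wd S 1 (x' * (y' * s)) ≤ 2
      simp only [wd, inv_one, one_mul]
      rw [inv_mul_cancel_left]
      omega
    have b3 : wd S x' u ≤ 2 * D + 4 := by
      have c1 : M.d 1 u = wordLength S u := by show wd S 1 u = _; simp [wd]
      have c2 : M.d 1 x' = wordLength S x' := by show wd S 1 x' = _; simp [wd]
      have hDD : M.D = D := rfl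
      have : M.d x' u = wd S x' u := rfl
      rw [← this]
      have f := M.ex_add 1 x' u
      have := M.symm x' u
      have f2 := M.ex_sum 1 x' (x' * (y' * s)) u
      rcases M.ex_thin' b1 x' with h | h
      · simp only [Hyp.ex] at h f f2
        omega
      · simp only [Hyp.ex] at h f f2 b1 b2
        have := M.symm u x'
        omega
    have c : x'⁻¹ * u ∈ tail S (2 * D + 4).toNat x' := by
      refine ⟨?_, ?_⟩
      · unfold wd at b3; omega
      · rw [mul_inv_cancel_left]; omega
    rw [← ht] at c
    have c2 := c.2
    have e2 : x * (y' * s) = (x * (x'⁻¹ * u)) * v := by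
      have : v = u⁻¹ * (x' * (y' * s)) := by rw [huv]; group
      rw [this]; group
    have c3 := hS.len_mul (x * (x'⁻¹ * u)) v
    rw [← e2] at c3
    omega

lemma exists_long (hS : Gen S) [Infinite G] (k : ℕ) : ∃ g : G, k ≤ wordLength S g := by
  by_contra h
  push Not at h
  exact Set.infinite_univ ((hS.ball_finite k).subset (fun x _ => (h x).le))

lemma exists_axis (hS : Gen S) [Infinite G] {D : ℤ} (h1 : 1 ≤ D) (hD : Thin S D) :
    ∃ g : G, 1 ≤ wordLength S g ∧ ∀ m : ℕ, wordLength S (g ^ m) = m * wordLength S g := by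
  set k := (2 * D + 4).toNat with hk
  have hfin : (Set.powerset {g : G | wordLength S g ≤ k}).Finite := (hS.ball_finite k).powerset
  obtain ⟨w, hw⟩ := hS.exists_long (hfin.toFinset.card)
  obtain ⟨p, p0, p1, hp⟩ := hS.path 1 w
  rw [inv_one, one_mul] at p1 hp
  obtain ⟨i, hi, j, hj, hij, he⟩ := Finset.exists_ne_map_eq_of_card_lt_of_maps_to
    (s := Finset.range (hfin.toFinset.card + 1)) (t := hfin.toFinset) (by simp)
    (f := fun i => tail S k (p i)) (by
      intro i _
      simp only [Set.Finite.coe_toFinset, Set.mem_powerset_iff]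
      intro h hh
      exact hh.1)
  rw [Finset.mem_range] at hi hj
  wlog hlt : i < j generalizing i j
  · exact this j hj i hi hij.symm he.symm (by omega)
  have q1 := hp 0 i (by omega) (by omega)
  have q2 := hp 0 j (by omega) (by omega)
  have q3 := hp i j hlt.le (by omega)
  rw [p0] at q1 q2
  simp only [wd, inv_one, one_mul] at q1 q2 q3
  refine ⟨(p i)⁻¹ * p j, by omega, ?_⟩
  have main : ∀ m : ℕ, wordLength S (((p i)⁻¹ * p j) ^ m) = m * wordLength S ((p i)⁻¹ * p j) ∧
      wordLength S (p i * ((p i)⁻¹ * p j) ^ m) = wordLength S (p i) + m * wordLength S ((p i)⁻¹ * p j) := by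
    intro m
    induction m with
    | zero => simp [len_one]
    | succ m ih =>
      have c := hS.cone_eq h1 hD (x := p i) (x' := p j) he _ (((p i)⁻¹ * p j) ^ m) rfl (by omega)
      have e : p i * ((p i)⁻¹ * p j) ^ (m + 1) = p j * ((p i)⁻¹ * p j) ^ m := by
        rw [pow_succ', ← mul_assoc, mul_inv_cancel_left]
      have a1 := hS.len_mul (p i) (((p i)⁻¹ * p j) ^ (m + 1))
      have a2 := hS.len_mul ((p i)⁻¹ * p j) (((p i)⁻¹ * p j) ^ m)
      rw [← pow_succ'] at a2
      rw [e] at a1 ⊢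
      rw [add_mul, one_mul]
      omega
  exact fun m => (main m).1

lemma exists_setup (hS : Gen S) [Infinite G] {D : ℤ} (hD : Thin S D) :
    ∃ M : Setup G, M.d = wd S := by
  obtain ⟨g, hg, hm⟩ := hS.exists_axis (D := max D 1) (le_max_right _ _) (hD.mono (le_max_left _ _))
  have hz : ∀ i : ℤ, (wordLength S (g ^ i) : ℤ) = wordLength S g * |i| := by
    intro i
    rcases Int.natAbs_eq i with h | h
    · rw [h, zpow_natCast, hm]
      push_cast
      rw [abs_abs, mul_comm]
    · rw [h, zpow_neg, zpow_natCast, hS.len_inv, hm]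
      push_cast
      rw [abs_neg, abs_abs, mul_comm]
  refine ⟨{ hS.toHyp (max (max D 1) (wordLength S g)) (le_max_of_le_left (le_max_right _ _))
      (hD.mono (le_max_of_le_left (le_max_left _ _))) with
      g := g, T := wordLength S g, one_le_T := by exact_mod_cast hg, T_le_D := le_max_right _ _, axis := ?_ }, rfl⟩
  intro i j
  show wd S (g ^ i) (g ^ j) = _
  unfold wd
  rw [← zpow_neg, ← zpow_add, hz]
  congr 1
  rw [← abs_neg]
  congr 1
  ring

end Gen


lemma Setup.exists_setup2' {Γ : Type*} [Group Γ] (M : Setup Γ) (hne : IsNonElementaryGroup Γ) :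
    ∃ M' : Setup2 Γ, M'.toSetup = M := by
  obtain ⟨n0, h1, h2⟩ := M.bp_exists
  obtain ⟨h, hh⟩ := M.exists_not_sim hne h1
  exact ⟨{ M with n0 := n0, one_le_n0 := h1, bp' := h2, h0 := h, h0_not_sim := hh }, rfl⟩

lemma subdivide {l ℓ : ℕ} (hl : 0 < l) (h : l ≤ ℓ) : ∃ k : ℕ, ∃ c : ℕ → ℕ, c 0 = 0 ∧ c (k + 1) = ℓ ∧
    ∀ i, i ≤ k → c i + l ≤ c (i + 1) ∧ c (i + 1) < c i + 2 * l := by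
  have h1 : 1 ≤ ℓ / l := (Nat.one_le_div_iff hl).2 h
  have h2 := Nat.div_add_mod ℓ l
  have h3 := Nat.mod_lt ℓ hl
  refine ⟨ℓ / l - 1, fun i => if i ≤ ℓ / l - 1 then i * l else ℓ, by simp, by simp, ?_⟩
  intro i hi
  simp only [hi, if_true]
  rcases Nat.eq_or_lt_of_le hi with he | hlt
  · rw [if_neg (by omega)]
    have : ℓ / l = i + 1 := by omega
    rw [this] at h2
    have e : l * (i + 1) = i * l + l := by ring
    omega
  · rw [if_pos (by omega)]
    have e : (i + 1) * l = i * l + l := by ring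
    omega

namespace Hyp
variable {Γ : Type*} [Group Γ] {M : Hyp Γ}

lemma local_geo {x : ℕ → Γ} {l ℓ : ℕ} (hl : 5 * M.D < l) (hℓ : l ≤ ℓ)
    (hx : ∀ t t', t ≤ t' → t' ≤ ℓ → t' ≤ t + 4 * l → M.d (x t) (x t') = t' - t) :
    l - 4 * M.D ≤ M.d (x 0) (x ℓ) ∧
    ∀ f, M.ex (x 0) (x ℓ) f ≤ 10 * M.D → ∃ t, t ≤ ℓ ∧ M.d f (x t) ≤ 60 * M.D := by
  have hD := M.one_le_D
  obtain ⟨k, c, c0, ck, hc⟩ := subdivide (by omega) hℓ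
  have hle : ∀ i, i ≤ k + 1 → c i ≤ ℓ := by
    intro i hi
    induction hj : k + 1 - i generalizing i with
    | zero =>
      have : i = k + 1 := by omega
      rw [this, ck]
    | succ j ih =>
      have := ih (i + 1) (by omega) (by omega)
      have := (hc i (by omega)).1
      omega
  have C : M.IsChain (fun i => x (c i)) k := by
    constructor
    · intro i hi
      have a1 := hc i (by omega)
      have a2 := hc (i + 1) (by omega)
      have a3 := hle (i + 2) (by omega)
      have e : i + 1 + 1 = i + 2 := rfl
      rw [e] at a2
      simp only [ex]
      rw [hx _ _ (by omega) (by omega) (by omega), hx _ _ (by omega) (by omega) (by omega),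
        hx _ _ (by omega) (by omega) (by omega)]
      omega
    · intro i hi
      have a2 := hc (i + 1) (by omega)
      have a3 := hle (i + 2) (by omega)
      have e : i + 1 + 1 = i + 2 := rfl
      rw [e] at a2
      rw [hx _ _ (by omega) (by omega) (by omega)]
      omega
  constructor
  · have := C.mid (a := 0) (b := 1) (c := k + 1) (by omega) (by omega) le_rfl
    simp only [ck, c0, ex] at this
    have h0 := hc 0 (by omega)
    have h1 := hle 1 (by omega)
    rw [zero_add, c0] at h0
    rw [hx 0 (c 1) (by omega) (by omega) (by omega)] at this
    have := M.nonneg (x (c 1)) (x ℓ)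
    push_cast at *
    omega
  · intro f hf
    obtain ⟨i, hi, h⟩ := C.locate (q := f) (ε := 10 * M.D) (by omega) (by simp only [ck, c0]; exact hf)
    have a1 := hc i hi
    have a2 := hle (i + 1) (by omega)
    have h1 := hx (c i) (c (i + 1)) (by omega) (by omega) (by omega)
    have h0 := M.nonneg (x (c i)) f
    have h0' := M.nonneg f (x (c (i + 1)))
    by_cases hcase : M.d (x (c i)) f ≤ c (i + 1) - c i
    · set t := c i + (M.d (x (c i)) f).toNat with ht
      have ht1 : (t : ℤ) = c i + M.d (x (c i)) f := by omega
      have b1 := hx (c i) t (by omega) (by omega) (by omega)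
      have b2 := hx t (c (i + 1)) (by omega) (by omega) (by omega)
      refine ⟨t, by omega, ?_⟩
      have := M.close (u := x (c i)) (v := x (c (i + 1))) (p := f) (q := x t) (e := 0) (e' := 27 * M.D)
        (by simp only [ex]; omega) (by omega) (by omega)
      omega
    · refine ⟨c (i + 1), a2, ?_⟩
      simp only [ex] at h
      omega

end Hyp

namespace Gen

lemma image {G Q : Type*} [Group G] [Group Q] {S : Set G} (hS : Gen S) (f : G →* Q)
    (hf : Function.Surjective f) : Gen (f '' S) := by
  refine ⟨hS.fin.image f, ?_, ?_⟩
  · rintro _ ⟨s, hs, rfl⟩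
    exact ⟨s⁻¹, hS.symm s hs, by simp⟩
  · rw [← MonoidHom.map_closure, hS.gen, Subgroup.map_top_of_surjective f hf]

lemma len_image {G Q : Type*} [Group G] [Group Q] {S : Set G} (hS : Gen S) (f : G →* Q) (g : G) :
    wordLength (f '' S) (f g) ≤ wordLength S g := by
  obtain ⟨l, h1, h2, rfl⟩ := hS.exists_list g
  have := len_le (S := f '' S) (l.map f) (by
    intro x hx
    obtain ⟨y, hy, rfl⟩ := List.mem_map.1 hx
    exact ⟨y, h1 y hy, rfl⟩)
  rw [← map_list_prod, List.length_map, h2] at this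
  exact this

lemma wd_image {G Q : Type*} [Group G] [Group Q] {S : Set G} (hS : Gen S) (f : G →* Q) (x y : G) :
    wd (f '' S) (f x) (f y) ≤ wd S x y := by
  unfold wd
  rw [← map_inv, ← map_mul]
  exact_mod_cast hS.len_image f _

/-- Dehn property of a generating set. -/
def Dehn {Q : Type*} [Group Q] (S : Set Q) (L : ℕ) : Prop :=
  ∀ l : List Q, (∀ x ∈ l, x ∈ S) → l ≠ [] → l.prod = 1 →
    ∃ l1 v l2, l = l1 ++ v ++ l2 ∧ v.length ≤ L ∧ wordLength S v.prod < v.length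

lemma lift_list {G Q : Type*} [Group G] [Group Q] {S : Set G} (f : G →* Q) (l : List Q)
    (hl : ∀ x ∈ l, x ∈ f '' S) : ∃ l' : List G, (∀ x ∈ l', x ∈ S) ∧ l'.map f = l := by
  induction l with
  | nil => exact ⟨[], by simp, rfl⟩
  | cons a l ih =>
    obtain ⟨l', h1, h2⟩ := ih (fun x hx => hl x (List.mem_cons_of_mem _ hx))
    obtain ⟨s, hs, rfl⟩ := hl a List.mem_cons_self
    refine ⟨s :: l', ?_, by simp [h2]⟩
    intro x hx
    rcases List.mem_cons.1 hx with rfl | h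
    · exact hs
    · exact h1 x h

end Gen

namespace Setup2
variable {Γ : Type*} [Group Γ] {M : Setup2 Γ}
open Gen

/-- Lower bound for `n / 2`. -/
noncomputable def nmin (M : Setup2 Γ) : ℤ :=
  43 * M.D + 59 * M.D + 2 * (M.T * (M.cK + 1)) + M.wK + M.T * (2 * M.wK) + 240 * M.D + 1 + 2 * M.wK

lemma wK_nonneg : 0 ≤ M.wK := by
  have hD := M.one_le_D
  have hT := M.one_le_T
  have hK := cK_nonneg (M := M)
  have hwT := wT_pos (M := M)
  have hS : M.wS = M.wT + 90 * M.D := rfl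
  unfold wK cK2 cB
  have := M.th_nonneg (6 * M.D)
  have : 0 ≤ M.T * (M.th (6 * M.D) + 4 * M.D + (13 * M.D + M.wS) + (M.cK + 2 * (7 * M.D + 1)) + 7 * M.D + 4 * M.D + 5) :=
    mul_nonneg (by omega) (by omega)
  omega

lemma greendlinger' {n n' : ℤ} (hn : M.n0 ∣ n) (hn' : n = 2 * n') (hm : M.nmin < n') {w : Γ}
    (hw : w ∈ Subgroup.normalClosure {M.g ^ n}) (hw1 : w ≠ 1) :
    ∃ a, ∀ t, 0 ≤ t → t ≤ n - 2 * M.wK → M.ex 1 w (M.pt a t) ≤ 10 * M.D := by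
  have hD := M.one_le_D
  have hT := M.one_le_T
  have hK := wK_nonneg (M := M)
  have : 0 ≤ M.T * (2 * M.wK) := by positivity
  exact greendlinger hn hn' (by unfold nmin at hm; omega) hw hw1

lemma dehn {S : Set Γ} (hS : Gen S) (hd : M.d = wd S) {n n' : ℤ} (hn : M.n0 ∣ n) (hn' : n = 2 * n')
    (hm : M.nmin < n') {Q : Type*} [Group Q] (f : Γ →* Q) (hf : Function.Surjective f)
    (hker : f.ker = Subgroup.normalClosure {M.g ^ n}) :
    ∃ L, Dehn (f '' S) L := by
  have hD := M.one_le_D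
  have hT := M.one_le_T
  have hK := wK_nonneg (M := M)
  have hK0 := cK_nonneg (M := M)
  have hTK : 0 ≤ M.T * (2 * M.wK) := by positivity
  have hTc : 0 ≤ M.T * (M.cK + 1) := by positivity
  have hS' := hS.image f hf
  have hn0 : 0 ≤ n - 2 * M.wK := by unfold nmin at hm; omega
  have hTn : n - 2 * M.wK ≤ M.T * (n - 2 * M.wK) := by nlinarith
  set l : ℕ := (M.T * (n - 2 * M.wK) + 130 * M.D).toNat with hl
  have hl' : (l : ℤ) = M.T * (n - 2 * M.wK) + 130 * M.D := by omega
  refine ⟨4 * l, ?_⟩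
  intro L hL hne hprod
  by_contra hcon
  push Not at hcon
  obtain ⟨L', hL', rfl⟩ := lift_list f L hL
  set x : ℕ → Γ := fun t => (L'.take t).prod with hx
  have step : ∀ t t', t ≤ t' → t' ≤ L'.length → ∃ v : List Γ, v.length = t' - t ∧ (∀ s ∈ v, s ∈ S) ∧
      x t' = x t * v.prod ∧ ∃ l1 l2, L' = l1 ++ v ++ l2 := by
    intro t t' h h'
    have e : L'.take t' = L'.take t ++ (L'.drop t).take (t' - t) := by
      rw [← List.take_add]; congr 1; omega
    refine ⟨(L'.drop t).take (t' - t), ?_, ?_, ?_, L'.take t, L'.drop t', ?_⟩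
    · rw [List.length_take, List.length_drop]; omega
    · intro s hs
      exact hL' s (List.mem_of_mem_drop (List.mem_of_mem_take hs))
    · simp only [hx]; rw [e, List.prod_append]
    · rw [← e, List.take_append_drop]
  have hxle : ∀ t t', t ≤ t' → t' ≤ L'.length → M.d (x t) (x t') ≤ t' - t := by
    intro t t' h h'
    obtain ⟨v, h1, h2, h3, -⟩ := step t t' h h'
    rw [hd, h3, wd, inv_mul_cancel_left]
    have := len_le v h2
    omega
  have hxq : ∀ t t', t ≤ t' → t' ≤ L'.length → t' ≤ t + 4 * l →
      (t' : ℤ) - t ≤ wd (f '' S) (f (x t)) (f (x t')) := by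
    intro t t' h h' h''
    obtain ⟨v, h1, h2, h3, l1, l2, h4⟩ := step t t' h h'
    have := hcon (l1.map f) (v.map f) (l2.map f) (by rw [h4]; simp) (by rw [List.length_map]; omega)
    rw [List.length_map, ← map_list_prod] at this
    rw [h3, map_mul, wd, inv_mul_cancel_left]
    omega
  have hxg : ∀ t t', t ≤ t' → t' ≤ L'.length → t' ≤ t + 4 * l → M.d (x t) (x t') = t' - t := by
    intro t t' h h' h''
    have a := hxq t t' h h' h''
    have b := hxle t t' h h'
    have c := hS.wd_image f (x t) (x t')
    rw [← hd] at c
    omega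
  have hx0 : x 0 = 1 := by simp [hx]
  have hxe : f (x L'.length) = 1 := by
    simp only [hx, List.take_length]
    rw [map_list_prod, hprod]
  have hpos : 0 < L'.length := by
    rw [List.length_pos_iff]; rintro rfl; simp at hne
  have hlong : 4 * l < L'.length := by
    by_contra hlt
    have a := hxq 0 L'.length (by omega) le_rfl (by omega)
    rw [hxe, hx0, map_one, wd_self] at a
    omega
  have LG := Hyp.local_geo (M := M.toHyp) (x := x) (l := l) (ℓ := L'.length) (by omega) (by omega) hxg
  have hw1 : x L'.length ≠ 1 := by
    intro h
    have := LG.1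
    rw [hx0, h, M.self] at this
    omega
  obtain ⟨a, ha⟩ := greendlinger' hn hn' hm (w := x L'.length) (by
    rw [← hker]; exact hxe) hw1
  obtain ⟨t, ht, ht'⟩ := LG.2 (M.pt a 0) (by rw [hx0]; exact ha 0 le_rfl hn0)
  obtain ⟨t2, ht2, ht2'⟩ := LG.2 (M.pt a (n - 2 * M.wK)) (by rw [hx0]; exact ha _ hn0 le_rfl)
  have d1 := M.d_pt_le (a := a) hn0
  rw [sub_zero] at d1
  have d2 : wd (f '' S) (f (M.pt a 0)) (f (M.pt a (n - 2 * M.wK))) ≤ M.T * (2 * M.wK) := by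
    have hk : f (M.g ^ n) = 1 := by
      have : M.g ^ n ∈ f.ker := by rw [hker]; exact Subgroup.subset_normalClosure rfl
      exact this
    have e : f (M.pt a 0) = f (M.pt a n) := by
      simp [Setup.pt, map_mul, hk]
    rw [e]
    have := hS.wd_image f (M.pt a n) (M.pt a (n - 2 * M.wK))
    rw [← hd] at this
    have d3 := M.d_pt_le (a := a) (i := n - 2 * M.wK) (j := n) (by omega)
    have e3 : n - (n - 2 * M.wK) = 2 * M.wK := by ring
    rw [e3] at d3
    have := M.symm (M.pt a n) (M.pt a (n - 2 * M.wK))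
    omega
  -- the main estimate, for either order
  have key : ∀ t t2 : ℕ, t ≤ t2 → t2 ≤ L'.length → ∀ p q : Γ, M.d p (x t) ≤ 60 * M.D → M.d q (x t2) ≤ 60 * M.D →
      M.d p q = M.T * (n - 2 * M.wK) → wd (f '' S) (f p) (f q) ≤ M.T * (2 * M.wK) → False := by
    intro t t2 h h' p q hp hq hpq hpq'
    have t1 := M.tri p (x t) q
    have t2' := M.tri (x t) (x t2) q
    have t3 := M.tri (x t) p (x t2)
    have t4 := M.tri p q (x t2)
    have s1 := M.symm p (x t)
    have s2 := M.symm q (x t2)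
    by_cases hc : t2 ≤ t + 4 * l
    · have a := hxq t t2 h h' hc
      have b := hxg t t2 h h' hc
      have c1 := hS.wd_image f (x t) p
      have c2 := hS.wd_image f q (x t2)
      rw [← hd] at c1 c2
      have q1 := hS'.wd_tri (f (x t)) (f p) (f (x t2))
      have q2 := hS'.wd_tri (f p) (f q) (f (x t2))
      unfold nmin at hm
      omega
    · have := (Hyp.local_geo (M := M.toHyp) (x := fun i => x (t + i)) (l := l) (ℓ := t2 - t) (by omega) (by omega)
        (by
          intro i j h1 h2 h3
          have := hxg (t + i) (t + j) (by omega) (by omega) (by omega)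
          rw [this]; push_cast; ring)).1
      simp only [add_zero] at this
      rw [Nat.add_sub_cancel' h] at this
      omega
  rcases le_total t t2 with h | h
  · exact key t t2 h ht2 _ _ ht' ht2' d1 d2
  · exact key t2 t h ht _ _ ht2' ht' (by rw [M.symm]; exact d1) (by rw [hS'.wd_symm]; exact d2)

end Setup2


namespace Gen
variable {G : Type*} [Group G] {S : Set G}

/-- Integral of a one form along a word. -/
def Om (φ h : G → ℤ) : G → List G → ℤ
  | _, [] => 0
  | x, s :: w => (φ x + φ (x * s)) * (h (x * s) - h x) + Om φ h (x * s) w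

lemma Om_append (φ h : G → ℤ) (x : G) (u v : List G) :
    Om φ h x (u ++ v) = Om φ h x u + Om φ h (x * u.prod) v := by
  induction u generalizing x with
  | nil => simp [Om]
  | cons s u ih => simp [Om, ih, mul_assoc, add_assoc]

lemma Om_shift (φ h : G → ℤ) (c : ℤ) (x : G) (w : List G) :
    Om (fun y => φ y - c) h x w = Om φ h x w - 2 * c * (h (x * w.prod) - h x) := by
  induction w generalizing x with
  | nil => simp [Om]
  | cons s w ih =>
    simp only [Om, ih, List.prod_cons, mul_assoc]
    ring

/-- Lipschitz along generators. -/
def Lip (S : Set G) (φ : G → ℤ) : Prop := ∀ x, ∀ s ∈ S, |φ (x * s) - φ x| ≤ 1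

lemma Om_bound {φ h : G → ℤ} (hφ : Lip S φ) (hh : Lip S h) (w : List G) (hw : ∀ s ∈ w, s ∈ S) :
    ∀ (x : G) (k : ℤ), |φ x| ≤ k → |Om φ h x w| ≤ w.length * (2 * (k + w.length)) := by
  induction w with
  | nil => intro x k hk; simp [Om]
  | cons s w ih =>
    intro x k hk
    have hs := hw s List.mem_cons_self
    have h1 := hφ x s hs
    have h2 := hh x s hs
    have hk' : |φ (x * s)| ≤ k + 1 := by rw [abs_le] at *; omega
    have h3 := ih (fun y hy => hw y (List.mem_cons_of_mem _ hy)) (x * s) (k + 1) hk'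
    have h4 : |φ x + φ (x * s)| ≤ 2 * k + 1 := by rw [abs_le] at *; omega
    have h5 : |(φ x + φ (x * s)) * (h (x * s) - h x)| ≤ 2 * k + 1 := by
      rw [abs_mul]
      have := abs_nonneg (φ x + φ (x * s))
      nlinarith
    have h6 := abs_add_le ((φ x + φ (x * s)) * (h (x * s) - h x)) (Om φ h (x * s) w)
    simp only [Om, List.length_cons]
    push_cast
    have := abs_nonneg (φ x)
    nlinarith

lemma Om_closed (hS : Gen S) {L : ℕ} (hL : Dehn S L) {φ h : G → ℤ} (hφ : Lip S φ) (hh : Lip S h) :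
    ∀ (k : ℕ) (w : List G), w.length ≤ k → (∀ s ∈ w, s ∈ S) → w.prod = 1 → ∀ x, |Om φ h x w| ≤ 4 * L ^ 2 * k := by
  intro k
  induction k with
  | zero =>
    intro w hk _ _ x
    have : w = [] := List.length_eq_zero_iff.1 (by omega)
    simp [this, Om]
  | succ k ih =>
    intro w hk hw hp x
    by_cases hne : w = []
    · rw [hne]; simp only [Om, abs_zero]; positivity
    obtain ⟨l1, v, l2, rfl, hv, hv'⟩ := hL w hw hne hp
    obtain ⟨v', h1, h2, h3⟩ := hS.exists_list v.prod
    have i1 := ih (l1 ++ v' ++ l2) (by simp only [List.length_append] at *; omega) (by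
      intro s hs
      simp only [List.mem_append] at hs hw
      rcases hs with (hs | hs) | hs
      · exact hw s (by tauto)
      · exact h1 s hs
      · exact hw s (by tauto)) (by simpa [h3] using hp) x
    set y := x * l1.prod with hy
    have e1 := Om_shift φ h (φ y) y v
    have e2 := Om_shift φ h (φ y) y v'
    rw [h3] at e2
    have hlip : Lip S (fun z => φ z - φ y) := by
      intro z s hs
      have := hφ z s hs
      simpa using this
    have b1 := Om_bound hlip hh v (fun s hs => hw s (by simp [hs])) y 0 (by simp)
    have b2 := Om_bound hlip hh v' h1 y 0 (by simp)
    rw [Om_append, Om_append, List.prod_append, h3] at i1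
    rw [Om_append, Om_append, List.prod_append]
    have c1 : (v.length : ℤ) * (2 * (0 + v.length)) ≤ 2 * L ^ 2 := by
      have : (v.length : ℤ) ≤ L := by exact_mod_cast hv
      nlinarith
    have c2 : (v'.length : ℤ) * (2 * (0 + v'.length)) ≤ 2 * L ^ 2 := by
      have : (v'.length : ℤ) ≤ L := by exact_mod_cast (by omega : v'.length ≤ L)
      nlinarith
    rw [abs_le] at *
    push_cast
    constructor <;> nlinarith

lemma Om_incr {φ h : G → ℤ} (hφ : Lip S φ) (hh : Lip S h) (h0 : ∀ x, 0 ≤ φ x) (w : List G)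
    (hw : ∀ s ∈ w, s ∈ S) : ∀ x : G, h (x * w.prod) = h x + w.length →
    0 ≤ Om φ h x w ∧ φ (x * w.prod) ^ 2 - φ x ^ 2 ≤ Om φ h x w := by
  have lip : ∀ (w : List G), (∀ s ∈ w, s ∈ S) → ∀ x : G, h (x * w.prod) ≤ h x + w.length := by
    intro w
    induction w with
    | nil => intro _ x; simp
    | cons s w ih =>
      intro hw x
      have := ih (fun y hy => hw y (List.mem_cons_of_mem _ hy)) (x * s)
      have h2 := hh x s (hw s List.mem_cons_self)
      rw [abs_le] at h2
      rw [List.prod_cons, ← mul_assoc, List.length_cons]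
      push_cast
      omega
  induction w with
  | nil => intro x _; simp [Om]
  | cons s w ih =>
    intro x hx
    have hw' : ∀ y ∈ w, y ∈ S := fun y hy => hw y (List.mem_cons_of_mem _ hy)
    have l1 := lip w hw' (x * s)
    have h2 := hh x s (hw s List.mem_cons_self)
    have h3 := hφ x s (hw s List.mem_cons_self)
    rw [abs_le] at h2 h3
    rw [List.prod_cons, ← mul_assoc, List.length_cons] at hx
    push_cast at hx
    have i := ih hw' (x * s) (by omega)
    have e : h (x * s) - h x = 1 := by omega
    rw [List.prod_cons, ← mul_assoc]
    simp only [Om, e, mul_one]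
    have a := h0 x
    have b := h0 (x * s)
    constructor
    · omega
    · nlinarith [i.2]

lemma Om_zero {φ h : G → ℤ} (w : List G) : ∀ x : G,
    (∀ l1 l2, w = l1 ++ l2 → φ (x * l1.prod) = 0) → Om φ h x w = 0 := by
  induction w with
  | nil => intro x _; rfl
  | cons s w ih =>
    intro x hx
    have a := hx [] (s :: w) rfl
    have b := hx [s] w rfl
    simp only [List.prod_nil, mul_one, List.prod_cons] at a b
    have := ih (x * s) (by
      intro l1 l2 e
      have := hx (s :: l1) l2 (by rw [e]; rfl)
      rwa [List.prod_cons, ← mul_assoc] at this)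
    simp [Om, a, b, this]

/-- A path from `x` to `y` of length at most `k` outside of the ball of radius `ρ`. -/
def Conn (S : Set G) (ρ : ℤ) (p x y : G) (k : ℤ) : Prop :=
  ∃ w : List G, (∀ s ∈ w, s ∈ S) ∧ x * w.prod = y ∧ w.length ≤ k ∧
    ∀ l1 l2, w = l1 ++ l2 → ρ ≤ wd S p (x * l1.prod)

lemma Conn.trans {ρ : ℤ} {p x y z : G} {k k' : ℤ} (h : Conn S ρ p x y k) (h' : Conn S ρ p y z k') :
    Conn S ρ p x z (k + k') := by
  obtain ⟨w, w1, w2, w3, w4⟩ := h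
  obtain ⟨v, v1, v2, v3, v4⟩ := h'
  refine ⟨w ++ v, ?_, ?_, ?_, ?_⟩
  · intro s hs
    rcases List.mem_append.1 hs with h | h
    · exact w1 s h
    · exact v1 s h
  · rw [List.prod_append, ← mul_assoc, w2, v2]
  · rw [List.length_append]; push_cast; omega
  · intro l1 l2 e
    rcases List.append_eq_append_iff.1 e with ⟨a, h1, h2⟩ | ⟨a, h1, h2⟩
    · rw [h1, List.prod_append, ← mul_assoc, w2]
      exact v4 a l2 h2
    · exact w4 l1 a h1

lemma wd_nonneg (x y : G) : 0 ≤ wd S x y := by unfold wd; omega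

lemma conn_seg (hS : Gen S) {ρ : ℤ} {p x y : G} {k : ℤ} (hk : wd S x y ≤ k)
    (h : ∀ q, wd S x q + wd S q y = wd S x y → ρ ≤ wd S p q) : Conn S ρ p x y k := by
  obtain ⟨l, h1, h2, h3⟩ := hS.exists_list (x⁻¹ * y)
  refine ⟨l, h1, by rw [h3, mul_inv_cancel_left], by rw [h2]; exact hk, ?_⟩
  rintro l1 l2 rfl
  apply h
  have a1 := len_le (S := S) l1 (fun s hs => h1 s (List.mem_append_left _ hs))
  have a2 := len_le (S := S) l2 (fun s hs => h1 s (List.mem_append_right _ hs))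
  have t := hS.wd_tri x (x * l1.prod) y
  have e1 : wd S x (x * l1.prod) ≤ l1.length := by
    rw [wd, inv_mul_cancel_left]; exact_mod_cast a1
  have e2 : wd S (x * l1.prod) y ≤ l2.length := by
    have : (x * l1.prod)⁻¹ * y = l2.prod := by
      rw [mul_inv_rev, mul_assoc, ← h3, List.prod_append, inv_mul_cancel_left]
    rw [wd, this]; exact_mod_cast a2
  have e3 : wd S x y = l1.length + l2.length := by
    rw [wd, ← h2, List.length_append]; push_cast; ring
  omega

lemma conn_short (hS : Gen S) {ρ : ℤ} {p x y : G} {k : ℤ} (hk : wd S x y ≤ k)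
    (h : ρ + k ≤ wd S p x) : Conn S ρ p x y k := by
  refine hS.conn_seg hk ?_
  intro q hq
  have := hS.wd_tri p q x
  have := hS.wd_symm x q
  have := wd_nonneg (S := S) q y
  omega

lemma conn_short' (hS : Gen S) {ρ : ℤ} {p x y : G} {k : ℤ} (hk : wd S x y ≤ k)
    (h : ρ + k ≤ wd S p y) : Conn S ρ p x y k := by
  refine hS.conn_seg hk ?_
  intro q hq
  have := hS.wd_tri p q y
  have := wd_nonneg (S := S) x q
  omega

lemma lip_wd (hS : Gen S) (a : G) : Lip S (fun x => wd S a x) := by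
  intro x s hs
  have h1 := hS.wd_tri a x (x * s)
  have h2 := hS.wd_tri a (x * s) x
  have h3 : wd S x (x * s) ≤ 1 := by
    rw [wd, inv_mul_cancel_left]; exact_mod_cast len_mem hs
  have h4 := hS.wd_symm x (x * s)
  rw [abs_le]
  beta_reduce
  constructor <;> omega

lemma sqrt_bound (hS : Gen S) {L : ℕ} (hL : Dehn S L) {ρ : ℤ} (hρ : 0 ≤ ρ) {a b p : G} {k : ℤ}
    (hp : wd S a p + wd S p b = wd S a b) (hc : Conn S ρ p b a k) : ρ ^ 2 ≤ 8 * L ^ 2 * k := by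
  obtain ⟨w, w1, w2, w3, w4⟩ := hc
  obtain ⟨u, u1, u2, u3⟩ := hS.exists_list (a⁻¹ * p)
  obtain ⟨v, v1, v2, v3⟩ := hS.exists_list (p⁻¹ * b)
  set φ : G → ℤ := fun x => max 0 (ρ - wd S p x) with hφ
  set h : G → ℤ := fun x => wd S a x with hh
  have lh : Lip S h := hS.lip_wd a
  have lφ : Lip S φ := by
    intro x s hs
    have := hS.lip_wd p x s hs
    simp only [hφ]
    rw [abs_le] at *
    beta_reduce at this
    constructor <;> omega
  have φ0 : ∀ x, 0 ≤ φ x := fun x => le_max_left _ _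
  have eu : a * u.prod = p := by rw [u3, mul_inv_cancel_left]
  have ev : p * v.prod = b := by rw [v3, mul_inv_cancel_left]
  have au : (u.length : ℤ) = wd S a p := by rw [u2]; rfl
  have av : (v.length : ℤ) = wd S p b := by rw [v2]; rfl
  have i1 := Om_incr lφ lh φ0 u u1 a (by rw [eu, au]; simp [hh, wd_self])
  have i2 := Om_incr lφ lh φ0 v v1 p (by rw [ev, av]; simp only [hh]; omega)
  have i3 := Om_zero (φ := φ) (h := h) w b (by
    intro l1 l2 e
    have := w4 l1 l2 e
    simp only [hφ]; omega)
  have wl : wd S a b ≤ w.length := by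
    rw [hS.wd_symm, wd, ← w2, inv_mul_cancel_left]
    exact_mod_cast len_le w w1
  have cl := hS.Om_closed hL lφ lh _ (u ++ v ++ w) le_rfl (by
      intro s hs
      simp only [List.mem_append] at hs
      rcases hs with (hs | hs) | hs
      · exact u1 s hs
      · exact v1 s hs
      · exact w1 s hs) (by
      have : a * (u ++ v ++ w).prod = a := by
        rw [List.prod_append, List.prod_append, ← mul_assoc, ← mul_assoc, eu, ev, w2]
      simpa using this) a
  rw [Om_append, Om_append, List.prod_append, ← mul_assoc, eu, ev, i3] at cl
  have pp : φ p = ρ := by simp only [hφ, wd_self]; omega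
  have pa : φ a = 0 := by
    have := w4 w [] (by simp)
    rw [w2] at this
    simp only [hφ]; omega
  rw [eu, pp, pa] at i1
  have hlen : ((u ++ v ++ w).length : ℤ) ≤ 2 * k := by
    simp only [List.length_append]; push_cast; omega
  have hLL : (0 : ℤ) ≤ 4 * L ^ 2 := by positivity
  have := mul_le_mul_of_nonneg_left hlen hLL
  have := (le_abs_self _).trans cl
  nlinarith [i1.2, i2.1]

end Gen


namespace Gen
variable {G : Type*} [Group G] {S : Set G}

/-- Interval thinness for triangles of bounded perimeter. -/
def ThinTri (S : Set G) (ℓ T : ℤ) : Prop := ∀ a b c p : G, wd S a b + wd S b c + wd S c a ≤ ℓ →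
  wd S a p + wd S p b = wd S a b →
  ∃ q, (wd S a q + wd S q c = wd S a c ∨ wd S c q + wd S q b = wd S c b) ∧ wd S p q ≤ T

lemma side_point (hS : Gen S) {ℓ T : ℤ} (h : ThinTri S ℓ T) (hT : 0 ≤ T) {a b c p : G}
    (hℓ : wd S a b + wd S b c + wd S c a ≤ ℓ) (hp : wd S a p + wd S p b = wd S a b)
    (hZ : ∀ q, (wd S a q + wd S q c = wd S a c ∨ wd S c q + wd S q b = wd S c b) → T ≤ wd S p q) :
    ∃ a' a'', wd S a a' + wd S a' p = wd S a p ∧ wd S a' p ≤ 10 * T ∧ wd S a' a'' ≤ T ∧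
      (wd S a a'' + wd S a'' c = wd S a c ∨ wd S c a'' + wd S a'' b = wd S c b) ∧
      Conn S T p a'' a' T ∧ Conn S T p a' a'' T := by
  by_cases hc : wd S a p ≤ 10 * T
  · refine ⟨a, a, by rw [wd_self]; omega, hc, by rw [wd_self]; omega, Or.inl (by rw [wd_self]; omega), ?_⟩
    rw [and_self]
    refine hS.conn_seg (by rw [wd_self]; omega) ?_
    intro q hq
    have h0 := hZ a (Or.inl (by rw [wd_self]; omega))
    rw [wd_self] at hq
    have h1 := wd_nonneg (S := S) a q
    have h2 := wd_nonneg (S := S) q a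
    have := hS.wd_tri p q a
    omega
  · have s1 := hS.wd_symm a p
    obtain ⟨a', h1, h2⟩ := hS.wd_geo p a (10 * T) (by omega) (by omega)
    have s2 := hS.wd_symm p a'
    have s3 := hS.wd_symm a a'
    have t1 := hS.wd_tri a a' b
    have t2 := hS.wd_tri a' p b
    obtain ⟨a'', h3, h4⟩ := h a b c a' hℓ (by omega)
    exact ⟨a', a'', by omega, by omega, h4, h3,
      hS.conn_short' (by rw [hS.wd_symm]; exact h4) (by omega), hS.conn_short h4 (by omega)⟩

lemma thin_step (hS : Gen S) {L : ℕ} (hL : Dehn S L) {ℓ T : ℤ} (h : ThinTri S ℓ T)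
    (hT : 1808 * L ^ 2 < T) : ThinTri S ℓ (T - 1) := by
  have hT0 : 0 < T := lt_of_le_of_lt (by positivity) hT
  intro a b c p hℓ hp
  by_contra hcon
  push Not at hcon
  have hZ : ∀ q, (wd S a q + wd S q c = wd S a c ∨ wd S c q + wd S q b = wd S c b) → T ≤ wd S p q := by
    intro q hq
    have := hcon q hq
    omega
  have sab := hS.wd_symm a b
  have sbc := hS.wd_symm b c
  have sca := hS.wd_symm c a
  have sap := hS.wd_symm a p
  have spb := hS.wd_symm p b
  obtain ⟨a', a'', a1, a2, a3, a4, a5, -⟩ := hS.side_point h hT0.le hℓ hp hZ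
  obtain ⟨b', b'', b1, b2, b3, b4, -, b5⟩ := hS.side_point h hT0.le (a := b) (b := a) (c := c) (p := p)
    (by omega) (by omega) (by
      intro q hq
      have := hS.wd_symm b q
      have := hS.wd_symm c q
      have := hS.wd_symm a q
      exact hZ q (by omega))
  have sb'p := hS.wd_symm b' p
  have sbb' := hS.wd_symm b b'
  have sbb'' := hS.wd_symm b b''
  have sb''c := hS.wd_symm b'' c
  have sb''a := hS.wd_symm b'' a
  have sab'' := hS.wd_symm a'' b''
  have sa''c := hS.wd_symm a'' c
  have sa''b := hS.wd_symm a'' b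
  have saa'' := hS.wd_symm a a''
  have sa'' := hS.wd_symm a' a''
  have hp' : wd S a' p + wd S p b' = wd S a' b' := by
    have t1 := hS.wd_tri a a' b
    have t2 := hS.wd_tri a' b' b
    have t3 := hS.wd_tri a' p b'
    omega
  have hdist : wd S a'' b'' ≤ 22 * T := by
    have t1 := hS.wd_tri a'' a' b''
    have t2 := hS.wd_tri a' b' b''
    omega
  -- nested intervals
  have nest : ∀ z, (wd S a z + wd S z c = wd S a c ∨ wd S c z + wd S z b = wd S c b) →
      ∀ q, wd S z q + wd S q c = wd S z c →
        (wd S a q + wd S q c = wd S a c ∨ wd S c q + wd S q b = wd S c b) := by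
    intro z hz q hq
    have t1 := hS.wd_tri a z q
    have t2 := hS.wd_tri a q c
    have t3 := hS.wd_tri q z b
    have t4 := hS.wd_tri c q b
    have s1 := hS.wd_symm z q
    have s2 := hS.wd_symm c q
    have s3 := hS.wd_symm c z
    omega
  have b4' : wd S a b'' + wd S b'' c = wd S a c ∨ wd S c b'' + wd S b'' b = wd S c b := by
    have := hS.wd_symm a b''
    omega
  have fin : ∀ k, k ≤ 226 * T → Conn S T p b' a' k → False := by
    intro k hk hc
    have := hS.sqrt_bound hL hT0.le hp' hc
    have hLL : (0 : ℤ) ≤ 8 * L ^ 2 := by positivity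
    have := mul_le_mul_of_nonneg_left hk hLL
    nlinarith
  by_cases hc : wd S a'' c ≤ 100 * T
  · have c1 : Conn S T p b'' c (122 * T) := by
      refine hS.conn_seg ?_ ?_
      · have := hS.wd_tri b'' a'' c
        omega
      · intro q hq
        exact hZ q (nest b'' b4' q hq)
    have c2 : Conn S T p c a'' (100 * T) := by
      refine hS.conn_seg (by omega) ?_
      intro q hq
      have := hS.wd_symm c q
      have := hS.wd_symm q a''
      exact hZ q (nest a'' a4 q (by omega))
    exact fin _ (by omega) ((b5.trans c1).trans (c2.trans a5))
  · obtain ⟨u, u1, u2⟩ := hS.wd_geo a'' c (100 * T) (by omega) (by omega)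
    have su := hS.wd_symm a'' u
    have hper : wd S a'' c + wd S c b'' + wd S b'' a'' ≤ ℓ := by
      have t1 := hS.wd_tri a'' a b''
      have t2 := hS.wd_tri a'' b b''
      have t3 := hS.wd_tri a b b''
      have t4 := hS.wd_tri a c b
      have t5 := hS.wd_tri b a b''
      have t6 := hS.wd_tri a b c
      have t7 := hS.wd_tri b a c
      omega
    obtain ⟨v, v1, v2⟩ := h a'' c b'' u hper (by omega)
    have sv := hS.wd_symm v b''
    have sv' := hS.wd_symm u v
    have v1' : wd S b'' v + wd S v c = wd S b'' c := by
      rcases v1 with v1 | v1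
      · exfalso
        have t1 := hS.wd_tri a'' v u
        have := wd_nonneg (S := S) v b''
        omega
      · exact v1
    have dv : wd S b'' v ≤ 123 * T := by
      have t1 := hS.wd_tri b'' a'' v
      have t2 := hS.wd_tri a'' u v
      omega
    have c1 : Conn S T p b'' v (123 * T) := by
      refine hS.conn_seg dv ?_
      intro q hq
      refine hZ q (nest b'' b4' q ?_)
      have t1 := hS.wd_tri q v c
      have t2 := hS.wd_tri b'' q c
      omega
    have c2 : Conn S T p v u T := by
      refine hS.conn_short' (by omega) ?_
      have t1 := hS.wd_tri a'' p u
      have t2 := hS.wd_tri a'' a' p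
      omega
    have c3 : Conn S T p u a'' (100 * T) := by
      refine hS.conn_seg (by omega) ?_
      intro q hq
      have s1 := hS.wd_symm u q
      have s2 := hS.wd_symm q a''
      refine hZ q (nest a'' a4 q ?_)
      have t1 := hS.wd_tri q u c
      have t2 := hS.wd_tri a'' q c
      omega
    exact fin _ (by omega) (((b5.trans c1).trans c2).trans (c3.trans a5))

lemma thin_tri (hS : Gen S) {L : ℕ} (hL : Dehn S L) (ℓ : ℤ) : ThinTri S ℓ (1808 * L ^ 2) := by
  have main : ∀ k : ℕ, ThinTri S ℓ (1808 * L ^ 2 + k) → ThinTri S ℓ (1808 * L ^ 2) := by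
    intro k
    induction k with
    | zero => intro h; simpa using h
    | succ k ih =>
      intro h
      have := hS.thin_step hL h (by push_cast; omega)
      apply ih
      convert this using 1
      push_cast; ring
  apply main ℓ.toNat
  intro a b c p h1 h2
  refine ⟨a, Or.inl (by rw [wd_self]; omega), ?_⟩
  have := hS.wd_symm a p
  have := wd_nonneg (S := S) p b
  have := wd_nonneg (S := S) b c
  have := wd_nonneg (S := S) c a
  have : (0 : ℤ) ≤ 1808 * L ^ 2 := by positivity
  omega

lemma thin_of_dehn (hS : Gen S) {L : ℕ} (hL : Dehn S L) : ∃ D : ℤ, 0 ≤ D ∧ Thin S D := by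
  set t : ℤ := 1808 * L ^ 2 with ht
  have ht0 : 0 ≤ t := by positivity
  have TT : ∀ a b c p : G, wd S a p + wd S p b = wd S a b →
      ∃ q, (wd S a q + wd S q c = wd S a c ∨ wd S c q + wd S q b = wd S c b) ∧ wd S p q ≤ t :=
    fun a b c p hp => hS.thin_tri hL _ a b c p le_rfl hp
  refine ⟨6 * t + 2, by omega, ?_⟩
  intro u v w q
  -- the transition point
  obtain ⟨p, hp, hpd⟩ : ∃ p, wd S u p + wd S p v = wd S u v ∧
      2 * wd S p q ≤ wd S u q + wd S q v - wd S u v + 4 * t + 2 := by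
    obtain ⟨γ, γ0, γ1, hγ⟩ := hS.path u v
    classical
    set N := wordLength S (u⁻¹ * v) with hN
    have hNw : wd S u v = N := rfl
    have hmem : ∀ i, i ≤ N → wd S u (γ i) + wd S (γ i) v = wd S u v := by
      intro i hi
      have h1 := hγ 0 i (by omega) hi
      have h2 := hγ i N hi le_rfl
      rw [γ0] at h1
      rw [γ1] at h2
      rw [h1, h2, hNw]; push_cast; ring
    have hex : ∃ i, i ≤ N ∧ ∃ z, (wd S q z + wd S z v = wd S q v) ∧ wd S (γ i) z ≤ t :=
      ⟨N, le_rfl, v, by rw [wd_self]; omega, by rw [γ1, wd_self]; omega⟩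
    obtain ⟨i1, z, z1, z2⟩ := Nat.find_spec hex
    generalize hi : Nat.find hex = i at *
    rcases Nat.eq_zero_or_pos i with h0 | h0
    · refine ⟨u, by rw [wd_self]; omega, ?_⟩
      rw [h0, γ0] at z2
      have s1 := hS.wd_symm u z
      have s2 := hS.wd_symm z q
      have t1 := hS.wd_tri q z u
      have t2 := hS.wd_tri u z v
      have s3 := hS.wd_symm u q
      have t3 := hS.wd_tri z u v
      have t4 := hS.wd_tri u z q
      omega
    · have hmin := Nat.find_min hex (m := i - 1) (by omega)
      obtain ⟨y, y1, y2⟩ := TT u v q (γ (i - 1)) (hmem _ (by omega))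
      have y1' : wd S u y + wd S y q = wd S u q := by
        rcases y1 with y1 | y1
        · exact y1
        · exact absurd ⟨by omega, y, y1, y2⟩ hmin
      have hst := hγ (i - 1) i (by omega) i1
      rw [Nat.cast_sub h0] at hst
      push_cast at hst
      refine ⟨γ (i - 1), hmem _ (by omega), ?_⟩
      have hm := hmem (i - 1) (by omega)
      generalize γ (i - 1) = p at *
      generalize γ i = p' at *
      have t1 := hS.wd_tri u y p
      have t2 := hS.wd_tri p y q
      have s1 := hS.wd_symm p y
      have t3 := hS.wd_tri p p' z
      have t4 := hS.wd_tri p z v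
      have t5 := hS.wd_tri q z p
      have s2 := hS.wd_symm p z
      have s3 := hS.wd_symm p q
      omega
  have sqp := hS.wd_symm p q
  obtain ⟨y, y1, y2⟩ := TT u v w p hp
  have t0 := hS.wd_tri q p y
  have sy := hS.wd_symm q y
  rcases y1 with y1 | y1
  · left
    have t1 := hS.wd_tri u y q
    have t2 := hS.wd_tri q y w
    omega
  · right
    have t1 := hS.wd_tri w y q
    have t2 := hS.wd_tri q y v
    omega

end Gen


namespace Setup2
variable {Γ : Type*} [Group Γ] {M : Setup2 Γ}

lemma turn {y y' : Γ} {j0 c t k l : ℤ} (hs : ¬ M.Sim M.n0 y y') (hc : 0 ≤ c)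
    (hd : M.d y (M.pt y' j0) ≤ c) (ht : (0 ≤ t ∧ t ≤ k) ∨ (k ≤ t ∧ t ≤ 0))
    (hθ : M.th (3 * M.D + 2 * c) ≤ |t|) : M.ex (M.pt y k) (M.pt y' l) (M.pt y t) ≤ M.D := by
  have hD := M.one_le_D
  have h0 : M.ex y (M.pt y k) (M.pt y t) ≤ 0 := by
    rcases ht with ⟨h1, h2⟩ | ⟨h1, h2⟩
    · have := M.ex_pt (a := y) h1 h2
      rw [M.pt_zero] at this
      exact this.le
    · have := M.ex_pt (a := y) h1 h2
      rw [M.pt_zero, M.ex_comm] at this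
      exact this.le
  rcases M.ex_thin' h0 (M.pt y' l) with h | h
  · exfalso
    have h1 := M.ex_start y (M.pt y' j0) (M.pt y' l) (M.pt y t)
    have h2 : M.ex (M.pt y' j0) (M.pt y' l) (M.pt y t) ≤ M.D + 2 * c := by omega
    obtain ⟨t', -, -, ht'⟩ := M.ax_point h2
    refine hs (M.bp (c := 3 * M.D + 2 * c) (i0 := 0) (j0 := j0) (i1 := t) (j1 := t') ?_ ?_ ?_)
    · rw [M.pt_zero]; omega
    · omega
    · rwa [sub_zero]
  · rw [M.ex_comm]; omega

/-- no long overlap between a chord path and an axis. -/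
lemma no_overlap {P : ℕ → Γ} {ε : ℕ → ℤ} {m : ℕ} {κ B Λ : ℤ} (C : M.ChordPath P ε m κ) (hP : P 0 = 1)
    (hκ : M.th (44 * M.D) ≤ κ) (hB : ∀ i, i ≤ m → M.d (P i) (P (i + 1)) ≤ B)
    (hsim : ∀ i, i + 1 < m → ¬ M.Sim M.n0 (P (i + 1)) (P (i + 2)))
    (hΛ : 31 * M.D + 2 * (M.T * κ) + 2 * B < Λ) {a : Γ}
    (h1 : M.ex 1 (P (m + 1)) (M.pt a 0) ≤ 10 * M.D)
    (h2 : M.ex 1 (P (m + 1)) (M.pt a Λ) ≤ 10 * M.D) : False := by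
  have hD := M.one_le_D
  have hT := M.one_le_T
  have hb := C.big
  have hTk : κ ≤ M.T * κ := by nlinarith
  have hB0 : 0 ≤ B := (M.nonneg _ _).trans (hB 0 (by omega))
  set W := P (m + 1) with hW
  have hdist : Λ ≤ M.d (M.pt a 0) (M.pt a Λ) := by
    have := M.abs_le_d_pt a 0 Λ
    have := neg_le_abs (0 - Λ)
    omega
  -- order the two points
  obtain ⟨e1, e2, he1, he2, hle, hd12, hax⟩ : ∃ e1 e2, M.ex 1 W e1 ≤ 10 * M.D ∧ M.ex 1 W e2 ≤ 10 * M.D ∧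
      M.d 1 e1 ≤ M.d 1 e2 ∧ Λ ≤ M.d e1 e2 ∧ (∀ f e, M.ex e1 e2 f ≤ e → ∃ t, M.d f (M.pt a t) ≤ e + 2 * M.D) := by
    rcases le_total (M.d 1 (M.pt a 0)) (M.d 1 (M.pt a Λ)) with h | h
    · refine ⟨_, _, h1, h2, h, hdist, ?_⟩
      intro f e hf
      obtain ⟨t, -, -, ht⟩ := M.ax_point hf
      exact ⟨t, ht⟩
    · refine ⟨_, _, h2, h1, h, by rw [M.symm]; exact hdist, ?_⟩
      intro f e hf
      obtain ⟨t, -, -, ht⟩ := M.ax_point hf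
      exact ⟨t, ht⟩
  have c12 := M.close he2 he1 hle
  have near : ∀ f, M.ex 1 W f ≤ 8 * M.D → M.d 1 e1 ≤ M.d 1 f → M.d 1 f ≤ M.d 1 e2 →
      ∃ t, M.d f (M.pt a t) ≤ 44 * M.D := by
    intro f hf hf1 hf2
    have c1 := M.close hf he1 hf1
    have c2 := M.close he2 hf hf2
    obtain ⟨t, ht⟩ := hax f (40 * M.D) (by
      have := M.tri 1 e1 e2
      simp only [Hyp.ex] at *
      omega)
    exact ⟨t, by omega⟩
  have hWd : M.d 1 e2 - 10 * M.D ≤ M.d 1 W := by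
    have := M.nonneg e2 W
    simp only [Hyp.ex] at he2
    omega
  classical
  have hex : ∃ j, M.d 1 e1 + M.T * κ < M.d 1 (P j) := ⟨m + 1, by rw [← hW]; omega⟩
  have hs := Nat.find_spec hex
  have hjm : Nat.find hex ≤ m + 1 := Nat.find_le (by rw [← hW]; omega)
  have hj0 : Nat.find hex ≠ 0 := by
    intro h
    rw [h, hP, M.self] at hs
    have := M.nonneg 1 e1
    omega
  have hmin := Nat.find_min hex (m := Nat.find hex - 1) (by omega)
  generalize Nat.find hex = j' at *
  obtain ⟨j, rfl⟩ : ∃ j, j' = j + 1 := ⟨j' - 1, by omega⟩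
  rw [Nat.add_sub_cancel] at hmin
  have b1 := hB j (by omega)
  have t1 := M.tri 1 (P j) (P (j + 1))
  have hj1 : j < m := by
    by_contra hlt
    have : j = m := by omega
    rw [this, ← hW] at t1 b1
    rw [this] at hmin
    omega
  have b2 := hB (j + 1) (by omega)
  have e : j + 1 + 1 = j + 2 := rfl
  rw [e] at b2
  have t2 := M.tri 1 (P (j + 1)) (P (j + 2))
  have hj2 : j + 1 < m := by
    by_contra hlt
    have : j + 2 = m + 1 := by omega
    rw [this, ← hW] at t2 b2
    omega
  have hmid := C.chain.mid (a := 0) (b := j + 1) (c := j + 2) (by omega) (by omega) (by omega)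
  rw [hP] at hmid
  have hlong := (C.long hj1).2
  simp only [Hyp.ex] at hmid
  have key : ∀ i, i < m → M.d 1 e1 + M.T * κ < M.d 1 (P (i + 1)) →
      M.d 1 (P (i + 1)) + M.T * κ ≤ M.d 1 e2 → M.Sim M.n0 (P (i + 1)) a := by
    intro i hi hl hu
    have x1 := C.chord' hi (s := 0) (by omega) (by omega)
    have x2 := C.chord' hi (s := κ) (by omega) le_rfl
    rw [hP] at x1 x2
    have d0 := M.d_pt_le (a := P (i + 1)) (i := 0) (j := κ) (by omega)
    rw [sub_zero] at d0
    have y1 := M.tri 1 (P (i + 1)) (M.pt (P (i + 1)) κ)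
    have y2 := M.tri 1 (M.pt (P (i + 1)) κ) (P (i + 1))
    have y3 := M.symm (P (i + 1)) (M.pt (P (i + 1)) κ)
    rw [M.pt_zero] at d0
    obtain ⟨s1, hs1⟩ := near (M.pt (P (i + 1)) 0) x1 (by rw [M.pt_zero]; omega) (by rw [M.pt_zero]; omega)
    obtain ⟨s2, hs2⟩ := near (M.pt (P (i + 1)) κ) x2 (by omega) (by omega)
    exact M.bp hs1 hs2 (by rw [sub_zero]; exact hκ.trans (le_abs_self _))
  have S1 := key j hj1 (by omega) (by omega)
  have S2 := key (j + 1) hj2 (by rw [e]; omega) (by rw [e]; omega)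
  exact hsim j hj2 (S1.trans S2.symm)

end Setup2


namespace Setup2
variable {Γ : Type*} [Group Γ] {M : Setup2 Γ}

lemma zigzag_path {k s E : ℕ → ℤ} {x Y : ℕ → Γ} {m : ℕ} {c κ κ' K : ℤ}
    (hx : ∀ i, ¬ M.Sim M.n0 (x i) 1) (hc : ∀ i, M.d 1 (x i) ≤ c)
    (hY : ∀ i, Y (i + 1) = M.pt (M.pt (Y i) (k i) * x i) (k i))
    (hκ : κ' = κ + M.th (3 * M.D + 2 * c)) (hbig : 5 * M.D < κ)
    (hE : ∀ i, E i = 1 ∨ E i = -1)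
    (hs0 : s 0 = 0) (hsm : s (m + 1) = 0) (hs : ∀ i, i < m → s (i + 1) = - k i + E i * κ')
    (hk : ∀ i, i < m → 2 * κ' ≤ E i * (k i + k (i + 1))) (hK : ∀ i, |k i| ≤ K) :
    M.ChordPath (fun j => M.pt (Y j) (s j)) E m κ ∧
    (∀ i, i ≤ m → M.d (M.pt (Y i) (s i)) (M.pt (Y (i + 1)) (s (i + 1))) ≤ 2 * (M.T * (2 * K + κ')) + c) ∧
    ∀ i, ¬ M.Sim M.n0 (M.pt (Y i) (s i)) (M.pt (Y (i + 1)) (s (i + 1))) := by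
  have hD := M.one_le_D
  have hT := M.one_le_T
  have hc0 : 0 ≤ c := (M.nonneg _ _).trans (hc 0)
  have hth := M.th_nonneg (3 * M.D + 2 * c)
  have hsimY : ∀ i, ¬ M.Sim M.n0 (Y i) (Y (i + 1)) := by
    intro i h
    apply hx i
    have h1 : M.Sim M.n0 (M.pt (Y i) (k i) * x i) (M.pt (Y i) (k i)) := by
      have a1 := Setup.Sim.pt (M := M.toSetup) M.n0 (M.pt (Y i) (k i) * x i) (k i)
      rw [← hY] at a1
      have a2 := Setup.Sim.pt (M := M.toSetup) M.n0 (Y i) (k i)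
      exact a1.symm.trans (h.symm.trans a2.symm)
    have := h1.mul (M.pt (Y i) (k i))⁻¹
    simpa using this
  have hmid : ∀ i, M.pt (Y (i + 1)) (- k i) = M.pt (Y i) (k i) * x i := by
    intro i; rw [hY, M.pt_pt, add_neg_cancel, M.pt_zero]
  have hdm : ∀ i, M.d (M.pt (Y i) (k i)) (M.pt (Y (i + 1)) (- k i)) ≤ c := by
    intro i
    rw [hmid]
    have := M.inv (M.pt (Y i) (k i)) 1 (x i)
    rw [mul_one] at this
    have := hc i
    omega
  have simL : ∀ i a b, ¬ M.Sim M.n0 (M.pt (Y i) a) (M.pt (Y (i + 1)) b) := by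
    intro i a b h
    exact hsimY i ((Setup.Sim.pt (M := M.toSetup) M.n0 (Y i) a).symm.trans
      (h.trans (Setup.Sim.pt (M := M.toSetup) M.n0 (Y (i + 1)) b)))
  refine ⟨⟨fun i _ => hE i, ?_, ?_, hbig⟩, ?_, fun i => simL i _ _⟩
  · intro i hi t h0 h1
    beta_reduce
    rw [M.ex_comm]
    have e1 : M.pt (Y (i + 1)) (s (i + 1)) = M.pt (M.pt (Y (i + 1)) (- k i)) (E i * κ') := by
      rw [M.pt_pt, hs i hi]
    have e2 : M.pt (M.pt (Y (i + 1)) (s (i + 1))) (-(E i * t)) =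
        M.pt (M.pt (Y (i + 1)) (- k i)) (E i * (κ' - t)) := by
      rw [M.pt_pt, M.pt_pt, hs i hi]; congr 1; ring
    rw [e2, e1]
    refine turn (j0 := k i) (c := c) ?_ hc0 ?_ ?_ ?_
    · intro h
      have := simL i 0 (- k i)
      rw [M.pt_zero] at this
      exact this h.symm
    · rw [M.symm]; exact hdm i
    · rcases hE i with h | h <;> rw [h]
      · left; omega
      · right; omega
    · have : |E i * (κ' - t)| = κ' - t := by
        rcases hE i with h | h <;> rw [h]
        · rw [one_mul, abs_of_nonneg (by omega)]
        · rw [neg_one_mul, abs_neg, abs_of_nonneg (by omega)]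
      omega
  · intro i hi t h0 h1
    beta_reduce
    have hki := hk i hi
    have e1 : M.pt (Y (i + 1)) (s (i + 1)) =
        M.pt (M.pt (Y (i + 1)) (k (i + 1))) (-(k i + k (i + 1)) + E i * κ') := by
      rw [M.pt_pt, hs i hi]; congr 1; ring
    have e2 : M.pt (M.pt (Y (i + 1)) (s (i + 1))) (E i * t) =
        M.pt (M.pt (Y (i + 1)) (k (i + 1))) (-(k i + k (i + 1)) + E i * κ' + E i * t) := by
      rw [M.pt_pt, M.pt_pt, hs i hi]; congr 1; ring
    rw [e2, e1]
    refine turn (j0 := - k (i + 1)) (c := c) ?_ hc0 (hdm (i + 1)) ?_ ?_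
    · intro h
      have := simL (i + 1) (k (i + 1)) 0
      rw [M.pt_zero] at this
      exact this h
    · rcases hE i with h | h <;> rw [h] at hki ⊢
      · right; omega
      · left; omega
    · rcases hE i with h | h <;> rw [h] at hki ⊢
      · rw [abs_of_nonpos (by omega)]; omega
      · rw [abs_of_nonneg (by omega)]; omega
  · have hsb : ∀ i, i ≤ m + 1 → |s i| ≤ K + κ' := by
      intro i hi
      have hK0 := hK 0
      have := abs_nonneg (k 0)
      rcases i with _ | i
      · rw [hs0, abs_zero]; omega
      · by_cases him : i < m
        · rw [hs i him]
          have := abs_le.1 (hK i)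
          rw [abs_le]
          rcases hE i with h | h <;> rw [h] <;> constructor <;> omega
        · have : i = m := by omega
          rw [this, hsm, abs_zero]; omega
    intro i hi
    have t1 := M.tri (M.pt (Y i) (s i)) (M.pt (Y i) (k i)) (M.pt (Y (i + 1)) (s (i + 1)))
    have t2 := M.tri (M.pt (Y i) (k i)) (M.pt (Y (i + 1)) (- k i)) (M.pt (Y (i + 1)) (s (i + 1)))
    have t3 := hdm i
    have d1 := M.d_pt (Y i) (s i) (k i)
    have d2 := M.d_pt (Y (i + 1)) (- k i) (s (i + 1))
    have hk1 := abs_le.1 (hK i)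
    have s1 := abs_le.1 (hsb i (by omega))
    have s2 := abs_le.1 (hsb (i + 1) (by omega))
    have b1 : |s i - k i| ≤ 2 * K + κ' := by rw [abs_le]; constructor <;> omega
    have b2 : |- k i - s (i + 1)| ≤ 2 * K + κ' := by rw [abs_le]; constructor <;> omega
    have m1 := mul_le_mul_of_nonneg_left b1 (by omega : 0 ≤ M.T)
    have m2 := mul_le_mul_of_nonneg_left b2 (by omega : 0 ≤ M.T)
    omega

lemma pow_path {Y z : ℕ → Γ} (hY : ∀ i, Y (i + 1) = Y i * z i) {X : Γ} (a : ℕ) :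
    ∀ j, (∀ i, a ≤ i → i < a + j → z i = X) → Y (a + j) = Y a * X ^ j := by
  intro j
  induction j with
  | zero => intro _; simp
  | succ j ih =>
    intro h
    rw [← add_assoc, hY, ih (fun i h1 h2 => h i h1 (by omega)), h (a + j) (by omega) (by omega),
      pow_succ, mul_assoc]

/-- recursive product -/
def prodPath (z : ℕ → Γ) : ℕ → Γ
  | 0 => 1
  | i + 1 => prodPath z i * z i

noncomputable def neKap (M : Setup2 Γ) : ℤ := M.th (44 * M.D) + 5 * M.D + 1
noncomputable def neKap' (M : Setup2 Γ) : ℤ := M.neKap + M.th (3 * M.D + 2 * M.d 1 M.h0)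
noncomputable def neA (M : Setup2 Γ) : Γ := M.g ^ (2 * M.neKap') * M.h0 * M.g ^ (2 * M.neKap')
noncomputable def neB (M : Setup2 Γ) : Γ := M.g ^ (4 * M.neKap') * M.h0 * M.g ^ (4 * M.neKap')
noncomputable def neMin (M : Setup2 Γ) : ℤ :=
  31 * M.D + 2 * (M.T * M.neKap) + 2 * (2 * (M.T * (2 * (4 * M.neKap') + M.neKap')) + M.d 1 M.h0)

lemma ne_word {p : ℕ} (hp : 0 < p) {Λ : ℤ} (hΛ : M.neMin < Λ) :
    M.neA ^ p * M.neB ^ p * M.neA⁻¹ ^ p * M.neB⁻¹ ^ p ≠ 1 ∧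
    ∀ a, M.ex 1 (M.neA ^ p * M.neB ^ p * M.neA⁻¹ ^ p * M.neB⁻¹ ^ p) (M.pt a 0) ≤ 10 * M.D →
      M.ex 1 (M.neA ^ p * M.neB ^ p * M.neA⁻¹ ^ p * M.neB⁻¹ ^ p) (M.pt a Λ) ≤ 10 * M.D → False := by
  have hD := M.one_le_D
  have hT := M.one_le_T
  have ht1 := M.th_nonneg (44 * M.D)
  have ht2 := M.th_nonneg (3 * M.D + 2 * M.d 1 M.h0)
  set q := M.neKap' with hq
  have hq0 : 0 < q := by rw [hq]; unfold neKap' neKap; omega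
  let k : ℕ → ℤ := fun i => if i < p then 2 * q else if i < 2 * p then 4 * q else
    if i < 3 * p then - (2 * q) else - (4 * q)
  let x : ℕ → Γ := fun i => if i < 2 * p then M.h0 else M.h0⁻¹
  let E : ℕ → ℤ := fun i => if i < 2 * p then 1 else -1
  let z : ℕ → Γ := fun i => M.g ^ k i * x i * M.g ^ k i
  let Y := prodPath z
  have hYs : ∀ i, Y (i + 1) = Y i * z i := fun i => rfl
  let s : ℕ → ℤ := fun j => if j = 0 then 0 else if j = 4 * p then 0 else - k (j - 1) + E (j - 1) * q
  obtain ⟨m, hm⟩ : ∃ m, 4 * p = m + 1 := ⟨4 * p - 1, by omega⟩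
  have hW : Y (m + 1) = M.neA ^ p * M.neB ^ p * M.neA⁻¹ ^ p * M.neB⁻¹ ^ p := by
    have h1 := pow_path hYs (X := M.neA) 0 p (by
      intro i _ h
      have e1 : i < p := by omega
      have e2 : i < 2 * p := by omega
      simp only [z, k, x, if_pos e1, if_pos e2]; rfl)
    have h2 := pow_path hYs (X := M.neB) p p (by
      intro i _ h
      have e1 : ¬ i < p := by omega
      have e2 : i < 2 * p := by omega
      simp only [z, k, x, if_neg e1, if_pos e2]; rfl)
    have h3 := pow_path hYs (X := M.neA⁻¹) (p + p) p (by
      intro i _ h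
      have e1 : ¬ i < p := by omega
      have e2 : ¬ i < 2 * p := by omega
      have e3 : i < 3 * p := by omega
      simp only [z, k, x, if_neg e1, if_neg e2, if_pos e3, neA, mul_inv_rev, zpow_neg, mul_assoc]
      rfl)
    have h4 := pow_path hYs (X := M.neB⁻¹) (p + p + p) p (by
      intro i _ h
      have e1 : ¬ i < p := by omega
      have e2 : ¬ i < 2 * p := by omega
      have e3 : ¬ i < 3 * p := by omega
      simp only [z, k, x, if_neg e1, if_neg e2, if_neg e3, neB, mul_inv_rev, zpow_neg, mul_assoc]
      rfl)
    have e : m + 1 = p + p + p + p := by omega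
    rw [e, h4, h3, h2]
    rw [zero_add] at h1
    rw [h1]
    simp [Y, prodPath]
  have hinv : ¬ M.Sim M.n0 M.h0⁻¹ 1 := by
    intro h
    have := h.mul M.h0
    simp only [mul_inv_cancel, mul_one] at this
    exact M.h0_not_sim this.symm
  have hdinv : M.d 1 M.h0⁻¹ = M.d 1 M.h0 := by
    have h1 := M.inv M.h0 1 M.h0⁻¹
    simp only [mul_inv_cancel, mul_one] at h1
    rw [← h1, M.symm]
  have hs0 : s 0 = 0 := by simp [s]
  have hsm : s (m + 1) = 0 := by simp [s, hm]
  obtain ⟨C, hB, hsim⟩ := zigzag_path (M := M) (k := k) (s := s) (E := E) (x := x) (Y := Y) (m := m)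
    (c := M.d 1 M.h0) (κ := M.neKap) (κ' := q) (K := 4 * q)
    (by
      intro i; simp only [x]; split_ifs
      · exact M.h0_not_sim
      · exact hinv)
    (by
      intro i; simp only [x]; split_ifs
      · exact le_rfl
      · exact hdinv.le)
    (by
      intro i; rw [hYs]; simp only [z, Setup.pt, mul_assoc])
    rfl (by unfold neKap; omega)
    (by
      intro i; simp only [E]; split_ifs <;> simp)
    hs0 hsm
    (by
      intro i hi
      have : ¬ (i + 1 = 4 * p) := by omega
      simp only [s, if_neg this, Nat.add_sub_cancel, if_neg (Nat.succ_ne_zero i)])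
    (by
      intro i hi
      simp only [E, k]
      split_ifs <;> omega)
    (by
      intro i
      simp only [k]
      rw [abs_le]
      split_ifs <;> constructor <;> omega)
  have hP0 : M.pt (Y 0) (s 0) = 1 := by rw [hs0, M.pt_zero]; rfl
  have hPm : M.pt (Y (m + 1)) (s (m + 1)) = M.neA ^ p * M.neB ^ p * M.neA⁻¹ ^ p * M.neB⁻¹ ^ p := by
    rw [hsm, M.pt_zero, hW]
  constructor
  · have := C.pos (by omega)
    beta_reduce at this
    rw [hP0, hPm] at this
    exact this.symm
  · intro a h1 h2
    refine no_overlap C hP0 (by unfold neKap; omega) hB (fun i _ => hsim (i + 1)) (Λ := Λ) hΛ (a := a) ?_ ?_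
    · beta_reduce; rw [hPm]; exact h1
    · beta_reduce; rw [hPm]; exact h2

lemma nonelementary {n n' : ℤ} (hn : M.n0 ∣ n) (hn' : n = 2 * n')
    (hm : M.nmin < n') (hm' : M.neMin + 2 * M.wK < n) {Q : Type*} [Group Q] (f : Γ →* Q)
    (hker : f.ker = Subgroup.normalClosure {M.g ^ n}) : IsNonElementaryGroup Q := by
  intro q
  by_contra hq
  obtain ⟨u, hu, -, hu'⟩ := Subgroup.exists_pow_mem_of_index_ne_zero hq (f M.neA)
  obtain ⟨v, hv, -, hv'⟩ := Subgroup.exists_pow_mem_of_index_ne_zero hq (f M.neB)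
  have hA : f M.neA ^ (u * v) ∈ Subgroup.zpowers q := by
    rw [pow_mul]; exact Subgroup.pow_mem _ hu' _
  have hB : f M.neB ^ (u * v) ∈ Subgroup.zpowers q := by
    rw [mul_comm, pow_mul]; exact Subgroup.pow_mem _ hv' _
  have hcomm : f M.neA ^ (u * v) * f M.neB ^ (u * v) = f M.neB ^ (u * v) * f M.neA ^ (u * v) := by
    obtain ⟨i, hi⟩ := Subgroup.mem_zpowers_iff.1 hA
    obtain ⟨j, hj⟩ := Subgroup.mem_zpowers_iff.1 hB
    rw [← hi, ← hj, ← zpow_add, ← zpow_add, add_comm]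
  have hp : 0 < u * v := Nat.mul_pos hu hv
  obtain ⟨h1, h2⟩ := ne_word (M := M) hp (Λ := n - 2 * M.wK) (by omega)
  have hwk : M.neA ^ (u * v) * M.neB ^ (u * v) * M.neA⁻¹ ^ (u * v) * M.neB⁻¹ ^ (u * v) ∈ f.ker := by
    rw [MonoidHom.mem_ker]
    simp only [map_mul, map_pow, map_inv, inv_pow]
    rw [hcomm]; group
  rw [hker] at hwk
  obtain ⟨a, ha⟩ := greendlinger' hn hn' hm hwk h1
  have hne : 0 ≤ n - 2 * M.wK := by
    have hK := wK_nonneg (M := M)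
    have hD := M.one_le_D
    have hT := M.one_le_T
    have hK0 := cK_nonneg (M := M)
    have hTK : 0 ≤ M.T * (2 * M.wK) := by positivity
    have hTc : 0 ≤ M.T * (M.cK + 1) := by positivity
    unfold nmin at hm; omega
  exact h2 a (ha 0 le_rfl hne) (ha _ hne le_rfl)

end Setup2


open Pointwise

lemma infinite_of_nonelementary {G : Type*} [Group G] (h : IsNonElementaryGroup G) : Infinite G := by
  have := h 1
  rw [Subgroup.zpowers_one_eq_bot, Subgroup.index_bot] at this
  by_contra hf
  rw [not_infinite_iff_finite] at hf
  exact Nat.card_pos.ne' this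

lemma exists_quotient {Γ : Type*} [Group Γ] (hΓ : IsHyperbolicGroup Γ) (hne : IsNonElementaryGroup Γ)
    (F : Set Γ) (hF : F.Finite) : ∃ (N : Subgroup Γ) (hN : N.Normal), N ≠ ⊥ ∧
      QuotientIsNonElementaryHyperbolic N hN ∧ (N : Set Γ) ∩ F ⊆ {1} := by
  haveI := infinite_of_nonelementary hne
  obtain ⟨S, hSf, hSs, hSg, δ, -, hδ⟩ := hΓ
  have hS : Gen S := ⟨hSf, hSs, hSg⟩
  obtain ⟨M0, hM0⟩ := hS.exists_setup (hS.thin_of hδ)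
  obtain ⟨M, rfl⟩ := M0.exists_setup2' hne
  obtain ⟨R, hR⟩ : ∃ R : ℤ, ∀ w ∈ F, M.d 1 w ≤ R := by
    obtain ⟨R, hR⟩ := (hF.image (fun w => M.d 1 w)).bddAbove
    exact ⟨R, fun w hw => hR ⟨w, hw, rfl⟩⟩
  have hD := M.one_le_D
  have hT := M.one_le_T
  have hK := Setup2.wK_nonneg (M := M)
  have hn0 := M.one_le_n0
  set b : ℤ := |M.nmin| + |M.neMin| + 2 * M.wK + |R| + 40 * M.D + 1 with hb
  have a1 := le_abs_self M.nmin
  have a2 := le_abs_self M.neMin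
  have a3 := le_abs_self R
  have a1' := abs_nonneg M.nmin
  have a2' := abs_nonneg M.neMin
  have a3' := abs_nonneg R
  have hbn : b ≤ M.n0 * b := by nlinarith
  set n' := M.n0 * b with hn'
  set n := 2 * n' with hn
  have hdvd : M.n0 ∣ n := ⟨2 * b, by rw [hn, hn']; ring⟩
  have hm : M.nmin < n' := by omega
  have hm' : M.neMin + 2 * M.wK < n := by omega
  have hNn : (Subgroup.normalClosure {M.g ^ n}).Normal := Subgroup.normalClosure_normal
  refine ⟨Subgroup.normalClosure {M.g ^ n}, hNn, ?_, ?_, ?_⟩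
  · intro h
    have h1 : M.g ^ n ∈ Subgroup.normalClosure {M.g ^ n} :=
      Subgroup.subset_normalClosure rfl
    rw [h, Subgroup.mem_bot] at h1
    have h2 := M.d_one_pt n
    rw [h1, M.self] at h2
    have : 0 < M.T * |n| := by
      apply mul_pos (by omega)
      rw [abs_pos]; omega
    omega
  · have hsurj := QuotientGroup.mk'_surjective (Subgroup.normalClosure {M.g ^ n})
    have hker := QuotientGroup.ker_mk' (Subgroup.normalClosure {M.g ^ n})
    refine ⟨?_, ?_⟩
    · obtain ⟨L, hL⟩ := Setup2.dehn (M := M) hS hM0 hdvd hn hm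
        (QuotientGroup.mk' (Subgroup.normalClosure {M.g ^ n})) hsurj hker
      have hS' := hS.image (QuotientGroup.mk' (Subgroup.normalClosure {M.g ^ n})) hsurj
      obtain ⟨D, hD0, hD1⟩ := hS'.thin_of_dehn hL
      exact hS'.hyp_of_thin hD0 hD1
    · exact Setup2.nonelementary (M := M) hdvd hn hm hm'
        (QuotientGroup.mk' (Subgroup.normalClosure {M.g ^ n})) hker
  · rintro w ⟨hw, hwF⟩
    by_contra hw1
    obtain ⟨a, ha⟩ := Setup2.greendlinger' (M := M) hdvd hn hm hw hw1
    have e1 := ha 0 le_rfl (by omega)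
    have e2 := ha (n - 2 * M.wK) (by omega) le_rfl
    have h3 := M.abs_le_d_pt a 0 (n - 2 * M.wK)
    have h4 := neg_le_abs (0 - (n - 2 * M.wK))
    have h5 := hR w hwF
    have h6 := M.tri (M.pt a 0) 1 (M.pt a (n - 2 * M.wK))
    have h7 := M.tri (M.pt a 0) w (M.pt a (n - 2 * M.wK))
    have s1 := M.symm (M.pt a 0) 1
    have s2 := M.symm (M.pt a (n - 2 * M.wK)) w
    simp only [Hyp.ex] at e1 e2
    omega

theorem many_quotients_injective_on_finite_set
    {Γ : Type*} [Group Γ] (hΓ : IsHyperbolicGroup Γ) (hne : IsNonElementaryGroup Γ)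
    (hnofin : ∀ H : Subgroup Γ, H.Normal → (H : Set Γ).Finite → H = ⊥)
    (S : Set Γ) (hS : S.Finite) :
    ∃ (N : ℕ → Subgroup Γ) (hN : ∀ i, (N i).Normal),
      Function.Injective N ∧ (∀ i, N i ≠ ⊥) ∧
      (∀ i, QuotientIsNonElementaryHyperbolic (N i) (hN i)) ∧
      ∀ i, ((N i : Set Γ) ∩ (S * S⁻¹)) ⊆ {1} := by
  have key : ∀ F : {F : Set Γ // F.Finite}, ∃ N : Subgroup Γ, ∃ y : Γ, y ∈ N ∧ y ≠ 1 ∧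
      (∃ hN : N.Normal, QuotientIsNonElementaryHyperbolic N hN) ∧ (N : Set Γ) ∩ F.1 ⊆ {1} := by
    intro F
    obtain ⟨N, hN, h1, h2, h3⟩ := exists_quotient hΓ hne F.1 F.2
    obtain ⟨⟨y, hy⟩, hy1⟩ := Subgroup.ne_bot_iff_exists_ne_one.1 h1
    exact ⟨N, y, hy, fun h => hy1 (Subtype.ext h), ⟨hN, h2⟩, h3⟩
  choose N y hy hy1 hN hF using key
  let F : ℕ → {F : Set Γ // F.Finite} := fun i =>
    Nat.rec ⟨S * S⁻¹, hS.mul hS.inv⟩ (fun _ F => ⟨insert (y F) F.1, F.2.insert _⟩) i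
  have hFs : ∀ i, (F (i + 1)).1 = insert (y (F i)) (F i).1 := fun i => rfl
  have hmono : ∀ i j, i ≤ j → (F i).1 ⊆ (F j).1 := by
    intro i j hij
    induction hij with
    | refl => exact subset_rfl
    | step _ ih => rw [Nat.succ_eq_add_one, hFs]; exact ih.trans (Set.subset_insert _ _)
  have hlt : ∀ i j, i < j → N (F i) ≠ N (F j) := by
    intro i j hij h
    apply hy1 (F i)
    have h1 : y (F i) ∈ (F j).1 := hmono (i + 1) j hij (by rw [hFs]; exact Set.mem_insert _ _)
    exact hF (F j) ⟨by rw [← h]; exact hy (F i), h1⟩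
  refine ⟨fun i => N (F i), fun i => (hN (F i)).1, ?_, ?_, fun i => (hN (F i)).2, ?_⟩
  · intro i j h
    rcases lt_trichotomy i j with h1 | h1 | h1
    · exact absurd h (hlt i j h1)
    · exact h1
    · exact absurd h.symm (hlt j i h1)
  · intro i h
    apply hy1 (F i)
    have := hy (F i)
    beta_reduce at h
    rwa [h, Subgroup.mem_bot] at this
  · intro i x hx
    exact hF (F i) ⟨hx.1, hmono 0 i (Nat.zero_le _) hx.2⟩
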